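/- arXiv:2411.18422 — 3 statements merged into one kernel-verified Lean document; each statement's English description precedes it below -/
import Mathlib

section
/- Let q ∈ (0,1) and p ∈ (0,2] with p < q + 1, and let x be a trajectory solution of (MTRIGS) that is bounded on [t₀,∞). Assume (A3); assume S(c) ≠ ∅ for every c ∈ ℝ^m; and assume there is a continuous map z₀ : ℝ^m → H such that for every c ∈ ℝ^m, z₀(c) ∈ S(c) and ‖z₀(c)‖ ≤ ‖y‖ for every y ∈ S(c). Then there exists x* ∈ H such that ‖x(t) − x*‖ → 0 as t → ∞, x* is weakly Pareto optimal, and x* is the element of minimum norm in the set {z ∈ H : f_i(z) ≤ f_i(x*) for all i = 1,…,m}, i.e. ‖x*‖ ≤ ‖z‖ for every z ∈ H with f_i(z) ≤ f_i(x*) for all i. -/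
open Filter Topology MeasureTheory
open scoped NNReal InnerProductSpace

/-!
For a comparison point `z` consider, along the trajectory, the energy
`E_z(t) = min_i (f_i(x) - f_i(z)) + ‖x'‖² / 2 + β / (2 t^p) (‖x‖² - ‖z‖²) + t^(-r) ⟪x - z, x'⟫`,
where `max q (p - q) < r < 1`. The minimum-norm inclusion says that `-(α / t^q) x'` is the
projection of the origin onto a convex set, so it gives both a second-order equation driven by a
convex combination of the gradients and a variational inequality valid for every single gradient
(`ode_of_minNorm`). The inequality controls the derivative of the minimum, which almost everywhere
is the derivative of an active `f_i ∘ x`; the equation and convexity control the cross term. The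
outcome (`energy_step`, `rate_bounds`) is `E_z' + t^(-r) E_z ≤ C t^(-s-r)` almost everywhere, with
some `s > p`. All functions involved are absolutely continuous, so a Grönwall argument
(`ac_gronwall_nonpos`) yields `E_z(t) ≤ B t^(-s) = o(t^(-p))`, with `B` uniform over
`‖z‖ ≤ M` (`energy_decay`).

By uniformity, `z` may be chosen depending on `t`. With `z = x(t)` one gets `x'(t) → 0`; as
`f_i ∘ x` plus the kinetic and Tikhonov energies is nonincreasing (`energy_antitone`), the values
`F(x(t))` converge to some `c`. With `z = z₀(F(x(t)))`, which converges to `z₀(c)` and satisfies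
`F(z) ≤ F(x(t))`, the estimate gives `min_i (f_i(x(t)) - f_i(z)) → 0` and
`limsup ‖x(t)‖ ≤ ‖z₀(c)‖`. The first fact shows that `max_i (f_i - c_i)` has minimal value zero;
hence `S(c)` is the level set `{f_i ≤ c_i}`, whose points are weakly Pareto optimal and whose
minimum-norm point is `z₀(c)`. The trajectory eventually enters each closed convex set
`{f_i ≤ c_i + 1/(k+1)}`, and these decrease to that level set, so the norm bound upgrades to strong
convergence `x(t) → z₀(c)` (`tendsto_of_nested_minNorm`).
-/

/-! ### Absolutely continuous functions -/

section AbsolutelyContinuous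

/-- An absolutely continuous function whose derivative is nonpositive almost everywhere does not
increase. -/
lemma ac_le_of_deriv_nonpos {Y : ℝ → ℝ} {a b : ℝ} (hab : a ≤ b)
    (hY : AbsolutelyContinuousOnInterval Y a b)
    (hd : ∀ᵐ t, t ∈ Set.Icc a b → ∀ d, HasDerivAt Y d t → d ≤ 0) : Y b ≤ Y a := by
  have h1 := hY.integral_deriv_eq_sub
  have h2 : ∫ t in a..b, deriv Y t ≤ ∫ t in a..b, (0 : ℝ) := by
    refine intervalIntegral.integral_mono_ae_restrict hab hY.intervalIntegrable_deriv (by simp) ?_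
    rw [Filter.EventuallyLE, ae_restrict_iff' measurableSet_Icc]
    filter_upwards [hd] with t ht htm
    by_cases hdiff : DifferentiableAt ℝ Y t
    · exact ht htm _ hdiff.hasDerivAt
    · simp [deriv_zero_of_not_differentiableAt hdiff]
  simp at h2
  linarith

/-- A function whose increments are bounded by sums of increments of finitely many absolutely
continuous functions is absolutely continuous. The spaces may differ, so this covers norms and
finite minima at once. -/
lemma ac_of_dist_le_sum {ι X X' : Type*} [Fintype ι] [PseudoMetricSpace X] [PseudoMetricSpace X']
    {V : ℝ → X} {g : ι → ℝ → X'} {a b : ℝ}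
    (hg : ∀ i, AbsolutelyContinuousOnInterval (g i) a b)
    (hV : ∀ s t, dist (V s) (V t) ≤ ∑ i, dist (g i s) (g i t)) :
    AbsolutelyContinuousOnInterval V a b := by
  have h : Tendsto (fun E : ℕ × (ℕ → ℝ × ℝ) =>
      ∑ i, ∑ k ∈ Finset.range E.1, dist (g i (E.2 k).1) (g i (E.2 k).2))
      (AbsolutelyContinuousOnInterval.totalLengthFilter ⊓
        𝓟 (AbsolutelyContinuousOnInterval.disjWithin a b)) (𝓝 0) := by
    have := tendsto_finsetSum Finset.univ (fun i _ => hg i)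
    simpa using this
  refine squeeze_zero (fun E => Finset.sum_nonneg fun _ _ => dist_nonneg) (fun E => ?_) h
  rw [Finset.sum_comm]
  exact Finset.sum_le_sum fun k _ => hV _ _

lemma dist_inf'_le_sum {ι : Type*} [Fintype ι] (hne : (Finset.univ : Finset ι).Nonempty)
    (u v : ι → ℝ) :
    dist (Finset.univ.inf' hne u) (Finset.univ.inf' hne v) ≤ ∑ i, dist (u i) (v i) := by
  have key : ∀ u v : ι → ℝ,
      Finset.univ.inf' hne u - Finset.univ.inf' hne v ≤ ∑ i, dist (u i) (v i) := by
    intro u v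
    obtain ⟨i, hi, h⟩ := Finset.exists_mem_eq_inf' hne v
    have h1 : Finset.univ.inf' hne u ≤ u i := Finset.inf'_le _ hi
    have h2 : dist (u i) (v i) ≤ ∑ i, dist (u i) (v i) :=
      Finset.single_le_sum (f := fun i => dist (u i) (v i)) (fun _ _ => dist_nonneg) hi
    have h3 : u i - v i ≤ dist (u i) (v i) := le_abs_self _
    linarith
  rw [Real.dist_eq, abs_le]
  constructor
  · have := key v u
    simp only [dist_comm (v _) (u _)] at this
    linarith
  · exact key u v

lemma ac_inf' {ι : Type*} [Fintype ι] (hne : (Finset.univ : Finset ι).Nonempty)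
    {g : ι → ℝ → ℝ} {a b : ℝ} (hg : ∀ i, AbsolutelyContinuousOnInterval (g i) a b) :
    AbsolutelyContinuousOnInterval (fun t => Finset.univ.inf' hne fun i => g i t) a b :=
  ac_of_dist_le_sum hg fun _ _ => dist_inf'_le_sum hne _ _

lemma ac_norm_sq {E : Type*} [NormedAddCommGroup E] {u : ℝ → E} {a b : ℝ}
    (hu : AbsolutelyContinuousOnInterval u a b) :
    AbsolutelyContinuousOnInterval (fun t => ‖u t‖ ^ 2) a b := by
  have h : AbsolutelyContinuousOnInterval (fun t => ‖u t‖) a b := by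
    refine ac_of_dist_le_sum (ι := Unit) (g := fun _ => u) (fun _ => hu) fun s t => ?_
    simpa [dist_eq_norm (u s) (u t)] using dist_norm_norm_le (u s) (u t)
  simpa [pow_two] using h.fun_mul h

lemma ac_inner {E : Type*} [NormedAddCommGroup E] [InnerProductSpace ℝ E] {u v : ℝ → E} {a b : ℝ}
    (hu : AbsolutelyContinuousOnInterval u a b) (hv : AbsolutelyContinuousOnInterval v a b) :
    AbsolutelyContinuousOnInterval (fun t => ⟪u t, v t⟫_ℝ) a b := by
  -- polarization: `⟪u, v⟫ = (‖u + v‖² - ‖u‖² - ‖v‖²) / 2`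
  have h := (((ac_norm_sq (hu.fun_add hv)).fun_sub (ac_norm_sq hu)).fun_sub
    (ac_norm_sq hv)).const_mul (1/2)
  convert! h using 2 with t
  rw [norm_add_sq_real]
  ring

lemma ac_of_hasDerivAt {E : Type*} [NormedAddCommGroup E] [NormedSpace ℝ E] {u u' : ℝ → E}
    {a b : ℝ} (hab : a ≤ b) (hu : ∀ t ∈ Set.Icc a b, HasDerivAt u (u' t) t)
    (hc : ContinuousOn u' (Set.Icc a b)) : AbsolutelyContinuousOnInterval u a b := by
  obtain ⟨C, hC⟩ := isCompact_Icc.exists_bound_of_continuousOn hc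
  have := Convex.lipschitzOnWith_of_nnnorm_hasDerivWithin_le (C := C.toNNReal) (convex_Icc a b)
    (fun t ht => (hu t ht).hasDerivWithinAt) (fun t ht => by
      rw [← NNReal.coe_le_coe]
      exact (hC t ht).trans (Real.le_coe_toNNReal C))
  rw [← Set.uIcc_of_le hab] at this
  exact this.absolutelyContinuousOnInterval

/-- Where the minimum of finitely many differentiable functions is differentiable, its derivative
is that of one of the functions (namely of any one attaining the minimum there). -/
lemma exists_active_hasDerivAt {ι : Type*} [Fintype ι] (hne : (Finset.univ : Finset ι).Nonempty)
    {g : ι → ℝ → ℝ} {g' : ι → ℝ} {t d : ℝ} (hg : ∀ i, HasDerivAt (g i) (g' i) t)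
    (hd : HasDerivAt (fun s => Finset.univ.inf' hne fun i => g i s) d t) : ∃ i, d = g' i := by
  obtain ⟨i, hi, h⟩ := Finset.exists_mem_eq_inf' hne fun i => g i t
  refine ⟨i, ?_⟩
  have hmin : IsLocalMin (fun s => g i s - Finset.univ.inf' hne fun i => g i s) t := by
    refine Filter.Eventually.of_forall fun s => ?_
    have : (Finset.univ.inf' hne fun i => g i s) ≤ g i s := Finset.inf'_le _ hi
    simp only [h, sub_self]
    linarith
  have := hmin.hasDerivAt_eq_zero ((hg i).fun_sub hd)
  linarith

/-- A Grönwall comparison with rate `t ^ (-r)`; the integrating factor is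
`exp (t ^ (1 - r) / (1 - r))`. -/
lemma ac_gronwall_nonpos {Y : ℝ → ℝ} {a b r : ℝ} (ha : 0 < a) (hab : a ≤ b) (hr : r < 1)
    (hY : AbsolutelyContinuousOnInterval Y a b)
    (hd : ∀ᵐ t, t ∈ Set.Icc a b → ∀ d, HasDerivAt Y d t → d + t ^ (-r) * Y t ≤ 0)
    (h0 : Y a ≤ 0) : Y b ≤ 0 := by
  set Γ : ℝ → ℝ := fun t => Real.exp (t ^ (1 - r) / (1 - r)) with hΓ
  have hr' : 1 - r ≠ 0 := by linarith
  have hΓd : ∀ t ∈ Set.Icc a b, HasDerivAt Γ (Γ t * t ^ (-r)) t := by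
    intro t ht
    have ht0 : 0 < t := ha.trans_le ht.1
    have h1 := ((Real.hasDerivAt_rpow_const (x := t) (p := 1 - r)
      (Or.inl ht0.ne')).div_const (1 - r)).exp
    convert! h1 using 1
    rw [show 1 - r - 1 = -r by ring]
    field_simp
    rfl
  have hΓc : ContinuousOn (fun t => Γ t * t ^ (-r)) (Set.Icc a b) := by
    refine ContinuousOn.mul (fun t ht => (hΓd t ht).continuousAt.continuousWithinAt) ?_
    exact fun t ht => (Real.continuousAt_rpow_const _ _
      (Or.inl (ha.trans_le ht.1).ne')).continuousWithinAt
  have hΓac := ac_of_hasDerivAt hab hΓd hΓc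
  have hmain : Γ b * Y b ≤ Γ a * Y a := by
    refine ac_le_of_deriv_nonpos (Y := fun t => Γ t * Y t) hab (hΓac.fun_mul hY) ?_
    filter_upwards [hd, hY.ae_differentiableAt] with t ht htY htm d hdd
    have hdY := (htY (by rwa [Set.uIcc_of_le hab])).hasDerivAt
    have h1 := hdd.unique ((hΓd t htm).fun_mul hdY)
    have h2 := ht htm _ hdY
    rw [h1]
    have : Γ t * t ^ (-r) * Y t + Γ t * deriv Y t = Γ t * (deriv Y t + t ^ (-r) * Y t) := by ring
    rw [this]
    exact mul_nonpos_of_nonneg_of_nonpos (Real.exp_pos _).le h2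
  have h2 : Γ a * Y a ≤ 0 := mul_nonpos_of_nonneg_of_nonpos (Real.exp_pos _).le h0
  by_contra hcon
  have : 0 < Γ b * Y b := mul_pos (Real.exp_pos _) (not_le.mp hcon)
  linarith

end AbsolutelyContinuous

/-! ### Convex functions and minimum-norm points -/

section Convexity

variable {H : Type*} [NormedAddCommGroup H] [InnerProductSpace ℝ H]

/-- The first-order (gradient) inequality of a convex function. -/
lemma convexOn_add_inner_gradient_le [CompleteSpace H] {f : H → ℝ} {g y z : H}
    (hf : ConvexOn ℝ Set.univ f) (hg : HasGradientAt f g y) : f y + ⟪g, z - y⟫_ℝ ≤ f z := by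
  have hline : ConvexOn ℝ Set.univ (fun s : ℝ => f (AffineMap.lineMap y z s)) := by
    simpa using! hf.comp_affineMap (AffineMap.lineMap y z : ℝ →ᵃ[ℝ] H)
  have hd : HasDerivAt (fun s : ℝ => f (AffineMap.lineMap y z s)) ⟪g, z - y⟫_ℝ 0 := by
    have h1 : HasDerivAt (fun s : ℝ => (AffineMap.lineMap y z s : H)) (z - y) 0 :=
      AffineMap.hasDerivAt_lineMap
    have h2 : HasFDerivAt f ((InnerProductSpace.toDual ℝ H) g)
        ((AffineMap.lineMap y z : ℝ →ᵃ[ℝ] H) (0 : ℝ)) := by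
      simpa using hg.hasFDerivAt
    simpa using! h2.comp_hasDerivAt (0 : ℝ) h1
  have := hline.le_slope_of_hasDerivAt (Set.mem_univ 0) (Set.mem_univ 1) one_pos hd
  simp [slope_def_field] at this
  linarith

/-- A minimum-norm element `u` of a convex set is the projection of the origin: this gives the
variational inequality `‖u‖² ≤ ⟪u, w⟫` and the strong form `‖w - u‖² ≤ ‖w‖² - ‖u‖²` of
minimality. -/
lemma norm_sub_sq_le_of_minNorm {K : Set H} (hK : Convex ℝ K) {u w : H} (hu : u ∈ K)
    (hmin : ∀ y ∈ K, ‖u‖ ≤ ‖y‖) (hw : w ∈ K) :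
    ‖u‖ ^ 2 ≤ ⟪u, w⟫_ℝ ∧ ‖w - u‖ ^ 2 ≤ ‖w‖ ^ 2 - ‖u‖ ^ 2 := by
  have key : ‖u‖ ^ 2 ≤ ⟪u, w⟫_ℝ := by
    have h : ∀ s : ℝ, 0 < s → s ≤ 1 → 0 ≤ 2 * (⟪u, w⟫_ℝ - ‖u‖ ^ 2) + s * ‖w - u‖ ^ 2 := by
      intro s hs hs1
      have h1 := hmin _ (hK.add_smul_sub_mem hu hw ⟨hs.le, hs1⟩)
      have h2 : ‖u‖ ^ 2 ≤ ‖u + s • (w - u)‖ ^ 2 := by gcongr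
      rw [norm_add_sq_real, inner_smul_right, norm_smul, mul_pow, inner_sub_right,
        real_inner_self_eq_norm_sq, Real.norm_eq_abs, sq_abs] at h2
      have h3 : 0 ≤ s * (2 * (⟪u, w⟫_ℝ - ‖u‖ ^ 2) + s * ‖w - u‖ ^ 2) := by linarith
      exact nonneg_of_mul_nonneg_right h3 hs
    have hlim : Tendsto (fun s : ℝ => 2 * (⟪u, w⟫_ℝ - ‖u‖ ^ 2) + s * ‖w - u‖ ^ 2) (𝓝[>] 0)
        (𝓝 (2 * (⟪u, w⟫_ℝ - ‖u‖ ^ 2) + 0 * ‖w - u‖ ^ 2)) := by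
      refine Tendsto.mono_left ?_ nhdsWithin_le_nhds
      exact (Continuous.tendsto (by fun_prop) 0)
    have := ge_of_tendsto hlim (by
      filter_upwards [Ioo_mem_nhdsGT (zero_lt_one' ℝ)] with s hs using h s hs.1 hs.2.le)
    linarith
  refine ⟨key, ?_⟩
  rw [norm_sub_sq_real, real_inner_comm]
  linarith

/-- Strong convergence to the minimum-norm point of an intersection of nested closed convex sets,
for a curve that eventually enters each of them and is asymptotically no longer than that point. -/
lemma tendsto_of_nested_minNorm [CompleteSpace H] {L : ℕ → Set H} (hanti : Antitone L)
    (hclosed : ∀ k, IsClosed (L k)) (hconv : ∀ k, Convex ℝ (L k)) {zs : H} (hzs : ∀ k, zs ∈ L k)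
    (hmin : ∀ u, (∀ k, u ∈ L k) → ‖zs‖ ≤ ‖u‖) {y : ℝ → H}
    (hy : ∀ k, ∀ᶠ t in atTop, y t ∈ L k)
    (hyn : ∀ ε > 0, ∀ᶠ t in atTop, ‖y t‖ ^ 2 ≤ ‖zs‖ ^ 2 + ε) : Tendsto y atTop (𝓝 zs) := by
  -- the minimum-norm points `u k` of the sets `L k` have increasing bounded norms, hence form a
  -- Cauchy sequence; by minimality of `zs` their norms tend to at least `‖zs‖`
  have hex : ∀ k, ∃ u ∈ L k, ∀ w ∈ L k, ‖u‖ ≤ ‖w‖ := by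
    intro k
    obtain ⟨u, hu, h⟩ := exists_norm_eq_iInf_of_complete_convex ⟨zs, hzs k⟩
      (hclosed k).isComplete (hconv k) 0
    refine ⟨u, hu, fun w hw => ?_⟩
    simp only [zero_sub, norm_neg] at h
    rw [h]
    exact ciInf_le ⟨0, by rintro _ ⟨w, rfl⟩; positivity⟩ (⟨w, hw⟩ : L k)
  choose u huL humin using hex
  have hmono : Monotone fun k => ‖u k‖ ^ 2 := fun j k hjk => by
    have := humin j _ (hanti hjk (huL k))
    dsimp only
    gcongr
  have hbd : BddAbove (Set.range fun k => ‖u k‖ ^ 2) := by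
    refine ⟨‖zs‖ ^ 2, ?_⟩
    rintro _ ⟨k, rfl⟩
    have := humin k _ (hzs k)
    dsimp only
    gcongr
  have hlim := tendsto_atTop_ciSup hmono hbd
  have hcau : CauchySeq u := by
    have hc := hlim.cauchySeq
    rw [Metric.cauchySeq_iff'] at hc ⊢
    intro ε hε
    obtain ⟨N, hN⟩ := hc (ε ^ 2) (by positivity)
    refine ⟨N, fun n hn => ?_⟩
    have h1 := (norm_sub_sq_le_of_minNorm (hconv N) (huL N) (humin N) (hanti hn (huL n))).2
    have h2 := hN n hn
    rw [Real.dist_eq] at h2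
    have h3 := le_abs_self (‖u n‖ ^ 2 - ‖u N‖ ^ 2)
    rw [dist_eq_norm]
    exact lt_of_pow_lt_pow_left₀ 2 hε.le (by linarith)
  obtain ⟨v, hv⟩ := cauchySeq_tendsto_of_complete hcau
  have hvL : ∀ k, v ∈ L k := fun k => (hclosed k).mem_of_tendsto hv (by
    filter_upwards [eventually_ge_atTop k] with n hn using hanti hn (huL n))
  have hvn : Tendsto (fun k => ‖u k‖ ^ 2) atTop (𝓝 (‖v‖ ^ 2)) := (hv.norm).pow 2
  have hzv : ‖zs‖ ^ 2 ≤ ‖v‖ ^ 2 := by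
    have := hmin v hvL
    gcongr
  rw [Metric.tendsto_nhds]
  intro ε hε
  have hev : ∀ᶠ k in atTop, ‖zs‖ ^ 2 - ε ^ 2 / 16 < ‖u k‖ ^ 2 :=
    hvn.eventually_const_lt (by nlinarith [pow_pos hε 2])
  obtain ⟨k, hk⟩ := hev.exists
  -- both `y t` and `zs` lie in `L k` and are barely longer than `u k`, hence close to it
  filter_upwards [hy k, hyn (ε ^ 2 / 16) (by positivity)] with t ht1 ht2
  have h1 := (norm_sub_sq_le_of_minNorm (hconv k) (huL k) (humin k) ht1).2
  have h2 := (norm_sub_sq_le_of_minNorm (hconv k) (huL k) (humin k) (hzs k)).2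
  have h3 : ‖y t - u k‖ < ε / 2 := lt_of_pow_lt_pow_left₀ 2 (by positivity) (by
    nlinarith [pow_pos hε 2])
  have h4 : ‖zs - u k‖ < ε / 2 := lt_of_pow_lt_pow_left₀ 2 (by positivity) (by
    nlinarith [pow_pos hε 2])
  calc dist (y t) zs ≤ dist (y t) (u k) + dist zs (u k) := dist_triangle_right _ _ _
    _ < ε := by rw [dist_eq_norm, dist_eq_norm]; linarith

end Convexity

/-! ### The energy estimate -/

section Dynamics

variable {H : Type*} [NormedAddCommGroup H] [InnerProductSpace ℝ H]

lemma le_inner_of_mem_convexHull {s : Set H} {v g : H} {c : ℝ} (hs : ∀ y ∈ s, c ≤ ⟪v, y⟫_ℝ)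
    (hg : g ∈ convexHull ℝ s) : c ≤ ⟪v, g⟫_ℝ :=
  convexHull_min (t := {y : H | c ≤ ⟪v, y⟫_ℝ}) hs
    (convex_halfSpace_ge (innerₛₗ ℝ v).isLinear c) hg

lemma norm_le_sum_of_mem_convexHull_range {m : ℕ} {G : Fin m → H} {g : H}
    (hg : g ∈ convexHull ℝ (Set.range G)) : ‖g‖ ≤ ∑ i, ‖G i‖ := by
  have h : convexHull ℝ (Set.range G) ⊆ Metric.closedBall 0 (∑ i, ‖G i‖) := by
    refine convexHull_min ?_ (convex_closedBall _ _)
    rintro _ ⟨i, rfl⟩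
    rw [mem_closedBall_zero_iff]
    exact Finset.single_le_sum (f := fun i => ‖G i‖) (fun _ _ => norm_nonneg _) (Finset.mem_univ i)
  simpa using h hg

/-- The minimum-norm inclusion at a fixed time, rewritten as a second-order equation driven by some
convex combination `g` of the gradients, together with the variational inequality of the projection
tested on every single gradient. -/
lemma ode_of_minNorm {m : ℕ} {G : Fin m → H} {y v w : H} {a e : ℝ} (ha : 0 < a)
    (h1 : (-a) • v ∈ (fun g => g + e • y + w) '' (convexHull ℝ (Set.range G)))
    (h2 : ∀ u ∈ (fun g => g + e • y + w) '' (convexHull ℝ (Set.range G)), ‖a • v‖ ≤ ‖u‖) :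
    ∃ g ∈ convexHull ℝ (Set.range G), w = -(a • v) - e • y - g ∧
      ∀ i, ⟪v, G i + e • y + w⟫_ℝ ≤ -a * ‖v‖ ^ 2 := by
  have hconv : Convex ℝ ((fun g => g + e • y + w) '' (convexHull ℝ (Set.range G))) := by
    have := (convex_convexHull ℝ (Set.range G)).translate (e • y + w)
    have hfun : (fun g => g + e • y + w) = fun g => e • y + w + g := by
      funext g
      abel
    rwa [hfun]
  have hproj : ∀ i, ⟪v, G i + e • y + w⟫_ℝ ≤ -a * ‖v‖ ^ 2 := by
    intro i
    have h3 := (norm_sub_sq_le_of_minNorm hconv h1 (fun u hu => by simpa using h2 u hu)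
      (w := G i + e • y + w) ⟨G i, subset_convexHull _ _ ⟨i, rfl⟩, rfl⟩).1
    rw [neg_smul, norm_neg, norm_smul, inner_neg_left, real_inner_smul_left, mul_pow,
      Real.norm_eq_abs, sq_abs] at h3
    have h4 : 0 ≤ a * (-a * ‖v‖ ^ 2 - ⟪v, G i + e • y + w⟫_ℝ) := by linarith
    linarith [nonneg_of_mul_nonneg_right h4 ha]
  obtain ⟨g, hg, hgv⟩ := h1
  refine ⟨g, hg, ?_, hproj⟩
  dsimp only at hgv
  rw [neg_smul] at hgv
  rw [← hgv]
  abel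

/-- The differential inequality for the energy at a fixed time. Here `y, v, w` stand for position,
velocity and acceleration, `Gi` for an active gradient, `g` for the driving convex combination, `k`
for the smallest objective gap, `a, e, l` for the damping, Tikhonov and energy coefficients, and
`e', l'` for the derivatives of `e, l`; `C` bounds `‖y - z‖`. -/
lemma energy_step {y z v w g Gi : H} {a e l e' l' k C : ℝ} (he' : e' ≤ 0)
    (hl : 0 ≤ l) (hla : 3 * l ≤ a) (hl'0 : l' ≤ 0) (hl' : -(l * a) ≤ l')
    (hw : w = -(a • v) - e • y - g) (hv : ⟪v, Gi + e • y + w⟫_ℝ ≤ -a * ‖v‖ ^ 2)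
    (hk : k ≤ ⟪y - z, g⟫_ℝ) (hC : ‖y - z‖ ≤ C) (he : 0 ≤ e) :
    (⟪Gi, v⟫_ℝ + 1 / 2 * (2 * ⟪v, w⟫_ℝ)
        + (e' / 2 * (‖y‖ ^ 2 - ‖z‖ ^ 2) + e / 2 * (2 * ⟪y, v⟫_ℝ))
        + (l' * ⟪y - z, v⟫_ℝ + l * (⟪y - z, w⟫_ℝ + ⟪v, v⟫_ℝ)))
      + l * (k + 1 / 2 * ‖v‖ ^ 2 + e / 2 * (‖y‖ ^ 2 - ‖z‖ ^ 2) + l * ⟪y - z, v⟫_ℝ)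
      ≤ 2 * a * l ^ 2 * C ^ 2 + -e' / 2 * ‖z‖ ^ 2 := by
  have ha : 0 ≤ a := by linarith
  have hyz : ⟪y - z, y⟫_ℝ = (‖y‖ ^ 2 - ‖z‖ ^ 2 + ‖y - z‖ ^ 2) / 2 := by
    rw [norm_sub_sq_real, inner_sub_left, real_inner_self_eq_norm_sq, real_inner_comm]
    ring
  have hyw : ⟪y - z, w⟫_ℝ = -a * ⟪y - z, v⟫_ℝ
      - e * ((‖y‖ ^ 2 - ‖z‖ ^ 2 + ‖y - z‖ ^ 2) / 2) - ⟪y - z, g⟫_ℝ := by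
    rw [← hyz, hw, inner_sub_right, inner_sub_right, inner_neg_right, real_inner_smul_right,
      real_inner_smul_right]
    ring
  rw [inner_add_right, inner_add_right, real_inner_smul_right, real_inner_comm,
    real_inner_comm y v] at hv
  rw [hyw, real_inner_self_eq_norm_sq]
  have hP : |⟪y - z, v⟫_ℝ| ≤ C * ‖v‖ :=
    (abs_real_inner_le_norm _ _).trans (by gcongr)
  generalize ⟪y - z, v⟫_ℝ = P at *
  -- the cross term `P` is absorbed by the damping `a * ‖v‖²` through Young's inequality `h5`
  have hcoef : |l' - l * a + l ^ 2| ≤ 2 * l * a := by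
    rw [abs_le]
    constructor <;> nlinarith
  have hcross : (l' - l * a + l ^ 2) * P ≤ 2 * l * a * (C * ‖v‖) :=
    (le_abs_self _).trans (by rw [abs_mul]; gcongr)
  have h1 : l * k ≤ l * ⟪y - z, g⟫_ℝ := by gcongr
  have h2 : 0 ≤ l * e * ‖y - z‖ ^ 2 := by positivity
  have h3 : e' * ‖y‖ ^ 2 ≤ 0 := mul_nonpos_of_nonpos_of_nonneg he' (by positivity)
  have h4 : 3 * l * ‖v‖ ^ 2 ≤ a * ‖v‖ ^ 2 := by gcongr
  have h5 : 0 ≤ a * (‖v‖ - 2 * l * C) ^ 2 := by positivity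
  nlinarith

variable {m : ℕ} {f : Fin m → H → ℝ} {G : Fin m → H → H}
  {t₀ α β q p : ℝ} {x x' x'' : ℝ → H}

/-- The equation forces the acceleration to be locally essentially bounded, so that the velocity is
locally Lipschitz. -/
lemma ac_velocity (hGc : ∀ i, Continuous (G i)) (ht₀ : 0 < t₀)
    (hx : ∀ t ∈ Set.Ici t₀, HasDerivAt x (x' t) t)
    (hx'c : ContinuousOn x' (Set.Ici t₀)) (hx''m : StronglyMeasurable x'')
    (hx'int : ∀ t ∈ Set.Ici t₀, x' t = x' t₀ + ∫ s in t₀..t, x'' s)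
    (hode : ∀ᵐ t, t ∈ Set.Ici t₀ → ∃ g ∈ convexHull ℝ (Set.range fun i => G i (x t)),
      x'' t = -((α * t ^ (-q)) • x' t) - (β * t ^ (-p)) • x t - g)
    {a b : ℝ} (ha : t₀ ≤ a) (hab : a ≤ b) : AbsolutelyContinuousOnInterval x' a b := by
  have hsub : Set.Icc t₀ b ⊆ Set.Ici t₀ := Set.Icc_subset_Ici_self
  have hxc : ContinuousOn x (Set.Icc t₀ b) :=
    fun t ht => (hx t (hsub ht)).continuousAt.continuousWithinAt
  have hpow : ∀ e : ℝ, ContinuousOn (fun t : ℝ => t ^ e) (Set.Icc t₀ b) := fun e t ht =>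
    (Real.continuousAt_rpow_const _ _ (Or.inl (ht₀.trans_le ht.1).ne')).continuousWithinAt
  have hcont : ContinuousOn (fun t => ‖(α * t ^ (-q)) • x' t‖ + ‖(β * t ^ (-p)) • x t‖
      + ∑ i, ‖G i (x t)‖) (Set.Icc t₀ b) := by
    refine ((ContinuousOn.norm ?_).add (ContinuousOn.norm ?_)).add
      (continuousOn_finsetSum _ fun i _ => ((hGc i).comp_continuousOn hxc).norm)
    · exact (continuousOn_const.mul (hpow _)).smul (hx'c.mono hsub)
    · exact (continuousOn_const.mul (hpow _)).smul hxc
  obtain ⟨C, hC⟩ := isCompact_Icc.exists_bound_of_continuousOn hcont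
  have hbound : ∀ᵐ t, t ∈ Set.Icc t₀ b → ‖x'' t‖ ≤ C := by
    filter_upwards [hode] with t ht htm
    obtain ⟨g, hg, hw⟩ := ht (hsub htm)
    have h1 := norm_le_sum_of_mem_convexHull_range hg
    have h2 := (le_abs_self _).trans (hC t htm)
    have h3 : ‖x'' t‖ ≤ ‖(α * t ^ (-q)) • x' t‖ + ‖(β * t ^ (-p)) • x t‖ + ‖g‖ := by
      rw [hw]
      refine (norm_sub_le _ _).trans (add_le_add_left ((norm_sub_le _ _).trans ?_) _)
      rw [norm_neg]
    linarith
  have hint : ∀ t ∈ Set.Icc t₀ b, IntervalIntegrable x'' volume t₀ t := by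
    intro t ht
    rw [intervalIntegrable_iff_integrableOn_Ioc_of_le ht.1]
    refine Measure.integrableOn_of_bounded (M := C) (by simp) hx''m.aestronglyMeasurable ?_
    rw [ae_restrict_iff' measurableSet_Ioc]
    filter_upwards [hbound] with u hu hum using hu ⟨hum.1.le, hum.2.trans ht.2⟩
  have hlip : LipschitzOnWith C.toNNReal x' (Set.uIcc a b) := by
    rw [Set.uIcc_of_le hab]
    refine LipschitzOnWith.of_dist_le_mul fun u hu w hw => ?_
    have hu' : u ∈ Set.Icc t₀ b := ⟨ha.trans hu.1, hu.2⟩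
    have hw' : w ∈ Set.Icc t₀ b := ⟨ha.trans hw.1, hw.2⟩
    have h1 : x' u - x' w = ∫ s in w..u, x'' s := by
      rw [hx'int u hu'.1, hx'int w hw'.1, add_sub_add_left_eq_sub,
        intervalIntegral.integral_interval_sub_left (hint u hu') (hint w hw')]
    rw [dist_eq_norm, h1, Real.dist_eq]
    refine (intervalIntegral.norm_integral_le_of_norm_le_const_ae (C := C) ?_).trans ?_
    · filter_upwards [hbound] with s hs hsm
      have := Set.uIoc_subset_uIcc hsm
      exact hs ((Set.uIcc_subset_Icc hw' hu') this)
    · gcongr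
      exact Real.le_coe_toNNReal C
  exact hlip.absolutelyContinuousOnInterval

/-- The comparisons between powers of a large time that make the energy argument work: the energy
coefficient `t ^ (-r)` is dominated by the damping, and the forcing terms of the energy inequality
are of order `t ^ (-s - r)`. -/
lemma rate_bounds {α q p r s t : ℝ} (hα : 0 < α) (ht1 : 1 ≤ t)
    (hs1 : s ≤ r + q) (hs2 : s ≤ p + 1 - r) (h3 : 3 / α ≤ t ^ (r - q)) (hr : r / α ≤ t ^ (1 - q))
    (hs : 2 * s ≤ t ^ (1 - r)) :
    3 * t ^ (-r) ≤ α * t ^ (-q) ∧ -(t ^ (-r) * (α * t ^ (-q))) ≤ -r * t ^ (-r - 1) ∧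
      t ^ (-q) * (t ^ (-r)) ^ 2 ≤ t ^ (-s - r) ∧ t ^ (-p - 1) ≤ t ^ (-s - r) ∧
      2 * (s * t ^ (-s - 1)) ≤ t ^ (-s - r) := by
  have ht0 : 0 < t := by linarith
  have hsplit : ∀ e e' : ℝ, t ^ (e + e') = t ^ e * t ^ e' := fun e e' => Real.rpow_add ht0 e e'
  rw [div_le_iff₀ hα] at h3 hr
  refine ⟨?_, ?_, ?_, Real.rpow_le_rpow_of_exponent_le ht1 (by linarith), ?_⟩
  · rw [show -q = r - q + -r by ring, hsplit]
    have := mul_le_mul_of_nonneg_right h3 (Real.rpow_pos_of_pos ht0 (-r)).le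
    linarith
  · have h1 : t ^ (-q) = t ^ (1 - q) * t ^ (-1 : ℝ) := by rw [← hsplit]; ring_nf
    have h2 : t ^ (-r - 1) = t ^ (-r) * t ^ (-1 : ℝ) := by rw [← hsplit]; ring_nf
    rw [h1, h2]
    have h3 : 0 < t ^ (-r) * t ^ (-1 : ℝ) := by positivity
    have := mul_le_mul_of_nonneg_right hr h3.le
    linarith
  · rw [pow_two, ← hsplit, ← hsplit]
    exact Real.rpow_le_rpow_of_exponent_le ht1 (by linarith)
  · rw [show -s - r = 1 - r + (-s - 1) by ring, hsplit]
    have := mul_le_mul_of_nonneg_right hs (Real.rpow_pos_of_pos ht0 (-s - 1)).le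
    linarith

/-- The decay estimate: for `q < r < 1` and `s ≤ min (r + q) (p + 1 - r)`, the energy built on any
comparison point `z` of norm at most `M` is at most `B * t ^ (-s)`, with `B` and the starting time
independent of `z`. -/
lemma energy_decay [CompleteSpace H] (hne : (Finset.univ : Finset (Fin m)).Nonempty)
    (hconv : ∀ i, ConvexOn ℝ Set.univ (f i))
    (hG : ∀ i y, HasGradientAt (f i) (G i y) y) (hGc : ∀ i, Continuous (G i)) (ht₀ : 0 < t₀)
    (hα : 0 < α) (hβ : 0 < β) (hp : 0 < p) (hq : q < 1)
    (hx : ∀ t ∈ Set.Ici t₀, HasDerivAt x (x' t) t)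
    (hx'c : ContinuousOn x' (Set.Ici t₀)) (hx''m : StronglyMeasurable x'')
    (hx'int : ∀ t ∈ Set.Ici t₀, x' t = x' t₀ + ∫ s in t₀..t, x'' s)
    (hode : ∀ᵐ t, t ∈ Set.Ici t₀ → HasDerivAt x' (x'' t) t ∧
      ∃ g ∈ convexHull ℝ (Set.range fun i => G i (x t)),
        x'' t = -((α * t ^ (-q)) • x' t) - (β * t ^ (-p)) • x t - g ∧
        ∀ i, ⟪x' t, G i (x t) + (β * t ^ (-p)) • x t + x'' t⟫_ℝ
          ≤ -(α * t ^ (-q)) * ‖x' t‖ ^ 2)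
    {M : ℝ} (hM : ∀ t ∈ Set.Ici t₀, ‖x t‖ ≤ M) {r s : ℝ} (hqr : q < r) (hr0 : 0 < r) (hr1 : r < 1)
    (hs1 : s ≤ r + q) (hs2 : s ≤ p + 1 - r) :
    ∃ T, t₀ ≤ T ∧ ∃ B, 0 ≤ B ∧ ∀ z, ‖z‖ ≤ M → ∀ t, T ≤ t →
      (Finset.univ.inf' hne fun i => f i (x t) - f i z) + 1 / 2 * ‖x' t‖ ^ 2
        + β * t ^ (-p) / 2 * (‖x t‖ ^ 2 - ‖z‖ ^ 2) + t ^ (-r) * ⟪x t - z, x' t⟫_ℝ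
        ≤ B * t ^ (-s) := by
  have hM0 : 0 ≤ M := (norm_nonneg _).trans (hM t₀ (Set.mem_Ici.mpr le_rfl))
  have hlarge : ∀ᶠ t : ℝ in atTop, max t₀ 1 ≤ t ∧ 3 / α ≤ t ^ (r - q) ∧ r / α ≤ t ^ (1 - q) ∧
      2 * s ≤ t ^ (1 - r) :=
    (eventually_ge_atTop _).and (((tendsto_rpow_atTop (by linarith)).eventually_ge_atTop _).and
      (((tendsto_rpow_atTop (by linarith)).eventually_ge_atTop _).and
        ((tendsto_rpow_atTop (by linarith)).eventually_ge_atTop _)))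
  obtain ⟨T, hT⟩ := eventually_atTop.mp hlarge
  have hTt₀ : t₀ ≤ T := (le_max_left _ _).trans (hT T le_rfl).1
  have hT0 : 0 < T := ht₀.trans_le hTt₀
  set C₃ := 2 * α * (2 * M) ^ 2 + p * β / 2 * M ^ 2 with hC₃
  have hC₃0 : 0 ≤ C₃ := by positivity
  have ⟨i₀, _⟩ := hne
  set E₀ := |f i₀ (x T) - f i₀ 0| + ‖G i₀ 0‖ * M + 1 / 2 * ‖x' T‖ ^ 2
    + β * T ^ (-p) / 2 * ‖x T‖ ^ 2 + T ^ (-r) * (2 * M * ‖x' T‖) with hE₀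
  have hE₀0 : 0 ≤ E₀ := by positivity
  -- `2 * C₃` absorbs the forcing term, `E₀ * T ^ s` makes the comparison hold at time `T`
  refine ⟨T, hTt₀, 2 * C₃ + E₀ * T ^ s, by positivity, fun z hz b hb => ?_⟩
  set B := 2 * C₃ + E₀ * T ^ s with hB
  have hsub : Set.Icc T b ⊆ Set.Ici t₀ := fun t ht => hTt₀.trans ht.1
  have hdist : ∀ t ∈ Set.Ici t₀, ‖x t - z‖ ≤ 2 * M := fun t ht =>
    (norm_sub_le _ _).trans (by linarith [hM t ht])
  set V : ℝ → ℝ := fun t => Finset.univ.inf' hne fun i => f i (x t) - f i z with hV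
  set R : ℝ → ℝ := fun t => 1 / 2 * ‖x' t‖ ^ 2
    + β * t ^ (-p) / 2 * (‖x t‖ ^ 2 - ‖z‖ ^ 2) + t ^ (-r) * ⟪x t - z, x' t⟫_ℝ
    - B * t ^ (-s) with hR
  have hfd : ∀ i, ∀ t ∈ Set.Ici t₀,
      HasDerivAt (fun t => f i (x t) - f i z) ⟪G i (x t), x' t⟫_ℝ t := by
    intro i t ht
    simpa using! ((hG i (x t)).hasFDerivAt.comp_hasDerivAt t (hx t ht)).sub_const (f i z)
  have hxc : ContinuousOn x (Set.Icc T b) :=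
    fun t ht => (hx t (hsub ht)).continuousAt.continuousWithinAt
  have hVac : AbsolutelyContinuousOnInterval V T b :=
    ac_inf' hne fun i => ac_of_hasDerivAt hb (fun t ht => hfd i t (hsub ht))
      (((hGc i).comp_continuousOn hxc).inner (hx'c.mono hsub))
  have hxac : AbsolutelyContinuousOnInterval x T b :=
    ac_of_hasDerivAt hb (fun t ht => hx t (hsub ht)) (hx'c.mono hsub)
  have hx'ac : AbsolutelyContinuousOnInterval x' T b :=
    ac_velocity hGc ht₀ hx hx'c hx''m hx'int (by
      filter_upwards [hode] with t ht htm
      obtain ⟨-, g, hg, hw, -⟩ := ht htm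
      exact ⟨g, hg, hw⟩) hTt₀ hb
  have hpowd : ∀ e : ℝ, ∀ t ∈ Set.Icc T b, HasDerivAt (fun t : ℝ => t ^ e) (e * t ^ (e - 1)) t :=
    fun e t ht => Real.hasDerivAt_rpow_const (Or.inl (hT0.trans_le ht.1).ne')
  have hpowac : ∀ e : ℝ, AbsolutelyContinuousOnInterval (fun t : ℝ => t ^ e) T b := fun e =>
    ac_of_hasDerivAt hb (hpowd e) (continuousOn_const.mul fun t ht =>
      (Real.continuousAt_rpow_const _ _ (Or.inl (hT0.trans_le ht.1).ne')).continuousWithinAt)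
  have hzac : AbsolutelyContinuousOnInterval (fun _ : ℝ => z) T b :=
    ac_of_hasDerivAt hb (fun t _ => hasDerivAt_const t z) continuousOn_const
  have hRac : AbsolutelyContinuousOnInterval R T b := by
    refine ((((ac_norm_sq hx'ac).const_mul (1 / 2)).fun_add ?_).fun_add
      ((hpowac _).fun_mul (ac_inner (hxac.fun_sub hzac) hx'ac))).fun_sub
      ((hpowac _).const_mul B)
    have := ((hpowac (-p)).const_mul (β / 2)).fun_mul
      ((ac_norm_sq hxac).fun_sub (ac_norm_sq hzac))
    convert! this using 2
    ring
  have hYT : V T + R T ≤ 0 := by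
    have h1 : V T ≤ f i₀ (x T) - f i₀ z := Finset.inf'_le _ (Finset.mem_univ i₀)
    have h2 := convexOn_add_inner_gradient_le (hconv i₀) (hG i₀ 0) (z := z)
    have h3 : -(‖G i₀ 0‖ * M) ≤ ⟪G i₀ 0, z - 0⟫_ℝ := by
      rw [sub_zero]
      have := (abs_le.mp (abs_real_inner_le_norm (G i₀ 0) z)).1
      have h' : ‖G i₀ 0‖ * ‖z‖ ≤ ‖G i₀ 0‖ * M := by gcongr
      linarith
    have h4 : ⟪x T - z, x' T⟫_ℝ ≤ 2 * M * ‖x' T‖ :=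
      (real_inner_le_norm _ _).trans (by gcongr; exact hdist T hTt₀)
    have h5 : T ^ (-r) * ⟪x T - z, x' T⟫_ℝ ≤ T ^ (-r) * (2 * M * ‖x' T‖) := by gcongr
    have h6 : B * T ^ (-s) = 2 * C₃ * T ^ (-s) + E₀ := by
      rw [hB, add_mul, mul_assoc E₀, ← Real.rpow_add hT0]
      simp
    have h7 : 0 ≤ 2 * C₃ * T ^ (-s) := by positivity
    have h8 : 0 ≤ β * T ^ (-p) / 2 * ‖z‖ ^ 2 := by positivity
    have h9 := le_abs_self (f i₀ (x T) - f i₀ 0)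
    simp only [hR, h6]
    linarith
  have hfin : V b + R b ≤ 0 := by
    refine ac_gronwall_nonpos (Y := fun t => V t + R t) hT0 hb hr1 (hVac.fun_add hRac) ?_ hYT
    filter_upwards [hode, hVac.ae_differentiableAt] with t ht htV htm d hd
    obtain ⟨hx't, g, hg, hw, hvi⟩ := ht (hsub htm)
    have ht0 : 0 < t := hT0.trans_le htm.1
    obtain ⟨hbig1, hbig2, hbig3, hbig4⟩ := hT t htm.1
    have ht1 : 1 ≤ t := (le_max_right _ _).trans hbig1
    have hxt := hx t (hsub htm)
    have hVd := (htV (by rwa [Set.uIcc_of_le hb])).hasDerivAt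
    obtain ⟨i, hi⟩ := exists_active_hasDerivAt hne (fun i => hfd i t (hsub htm)) hVd
    have hRd : HasDerivAt R (1 / 2 * (2 * ⟪x' t, x'' t⟫_ℝ)
        + ((β * (-p * t ^ (-p - 1)) / 2) * (‖x t‖ ^ 2 - ‖z‖ ^ 2)
          + β * t ^ (-p) / 2 * (2 * ⟪x t, x' t⟫_ℝ))
        + ((-r * t ^ (-r - 1)) * ⟪x t - z, x' t⟫_ℝ
          + t ^ (-r) * (⟪x t - z, x'' t⟫_ℝ + ⟪x' t, x' t⟫_ℝ))
        - B * (-s * t ^ (-s - 1))) t :=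
      (((hx't.norm_sq.const_mul (1 / 2)).fun_add
        ((((hpowd (-p) t htm).const_mul β).div_const 2).fun_mul
          (hxt.norm_sq.sub_const (‖z‖ ^ 2)))).fun_add
        ((hpowd (-r) t htm).fun_mul ((hxt.sub_const z).inner ℝ hx't))).fun_sub
        ((hpowd (-s) t htm).const_mul B)
    have hdeq := hd.unique (hVd.fun_add hRd)
    have hk : V t ≤ ⟪x t - z, g⟫_ℝ := by
      refine le_inner_of_mem_convexHull ?_ hg
      rintro _ ⟨j, rfl⟩
      have h1 : V t ≤ f j (x t) - f j z := Finset.inf'_le _ (Finset.mem_univ j)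
      have h2 := convexOn_add_inner_gradient_le (hconv j) (hG j (x t)) (z := z)
      rw [← neg_sub, inner_neg_right, real_inner_comm] at h2
      linarith
    obtain ⟨hla, hl', hdamp, htik, hsup⟩ :=
      rate_bounds hα ht1 hs1 hs2 hbig2 hbig3 hbig4
    have hstep := energy_step (y := x t) (z := z) (v := x' t) (w := x'' t) (g := g)
      (Gi := G i (x t)) (a := α * t ^ (-q)) (e := β * t ^ (-p)) (l := t ^ (-r))
      (e' := β * (-p * t ^ (-p - 1))) (l' := -r * t ^ (-r - 1)) (k := V t) (C := 2 * M)
      (by have : 0 ≤ β * (p * t ^ (-p - 1)) := by positivity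
          linarith)
      (by positivity) hla
      (by have : 0 ≤ r * t ^ (-r - 1) := by positivity
          linarith)
      hl' hw (hvi i) hk (hdist t (hsub htm)) (by positivity)
    have hforce : 2 * (α * t ^ (-q)) * (t ^ (-r)) ^ 2 * (2 * M) ^ 2
        + -(β * (-p * t ^ (-p - 1))) / 2 * ‖z‖ ^ 2 ≤ C₃ * t ^ (-s - r) := by
      calc _ = 2 * α * (2 * M) ^ 2 * (t ^ (-q) * (t ^ (-r)) ^ 2)
            + p * β / 2 * ‖z‖ ^ 2 * t ^ (-p - 1) := by ring
        _ ≤ 2 * α * (2 * M) ^ 2 * t ^ (-s - r) + p * β / 2 * M ^ 2 * t ^ (-s - r) := by gcongr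
        _ = C₃ * t ^ (-s - r) := by rw [hC₃]; ring
    have hrs : t ^ (-r) * t ^ (-s) = t ^ (-s - r) := by rw [← Real.rpow_add ht0]; ring_nf
    have hBC : 2 * C₃ ≤ B := by
      have : 0 ≤ E₀ * T ^ s := by positivity
      linarith
    have hB0 : 0 ≤ B := by linarith
    have h1 : B * (2 * (s * t ^ (-s - 1))) ≤ B * t ^ (-s - r) := by gcongr
    have h2 : 2 * C₃ * t ^ (-s - r) ≤ B * t ^ (-s - r) := by gcongr
    have h3 : t ^ (-r) * (B * t ^ (-s)) = B * t ^ (-s - r) := by rw [← hrs]; ring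
    rw [hdeq, hi]
    simp only [hR]
    linarith
  simp only [hV, hR] at hfin
  linarith

/-- Along the trajectory every function `f i ∘ x` plus the kinetic and Tikhonov energies is
nonincreasing. -/
lemma energy_antitone [CompleteSpace H]
    (hG : ∀ i y, HasGradientAt (f i) (G i y) y) (hGc : ∀ i, Continuous (G i)) (ht₀ : 0 < t₀)
    (hα : 0 < α) (hβ : 0 < β) (hp : 0 < p)
    (hx : ∀ t ∈ Set.Ici t₀, HasDerivAt x (x' t) t)
    (hx'c : ContinuousOn x' (Set.Ici t₀)) (hx''m : StronglyMeasurable x'')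
    (hx'int : ∀ t ∈ Set.Ici t₀, x' t = x' t₀ + ∫ s in t₀..t, x'' s)
    (hode : ∀ᵐ t, t ∈ Set.Ici t₀ → HasDerivAt x' (x'' t) t ∧
      ∃ g ∈ convexHull ℝ (Set.range fun i => G i (x t)),
        x'' t = -((α * t ^ (-q)) • x' t) - (β * t ^ (-p)) • x t - g ∧
        ∀ i, ⟪x' t, G i (x t) + (β * t ^ (-p)) • x t + x'' t⟫_ℝ
          ≤ -(α * t ^ (-q)) * ‖x' t‖ ^ 2) (i : Fin m) :
    AntitoneOn (fun t => f i (x t) + 1 / 2 * ‖x' t‖ ^ 2 + β * t ^ (-p) / 2 * ‖x t‖ ^ 2)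
      (Set.Ici t₀) := by
  intro T hT b _ hb
  have hT0 : 0 < T := ht₀.trans_le hT
  have hsub : Set.Icc T b ⊆ Set.Ici t₀ := fun t ht => le_trans hT ht.1
  have hfd : ∀ t ∈ Set.Ici t₀, HasDerivAt (fun t => f i (x t)) ⟪G i (x t), x' t⟫_ℝ t := by
    intro t ht
    simpa using! (hG i (x t)).hasFDerivAt.comp_hasDerivAt t (hx t ht)
  have hxc : ContinuousOn x (Set.Icc T b) :=
    fun t ht => (hx t (hsub ht)).continuousAt.continuousWithinAt
  have hfac := ac_of_hasDerivAt hb (fun t ht => hfd t (hsub ht))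
      (((hGc i).comp_continuousOn hxc).inner (hx'c.mono hsub))
  have hxac : AbsolutelyContinuousOnInterval x T b :=
    ac_of_hasDerivAt hb (fun t ht => hx t (hsub ht)) (hx'c.mono hsub)
  have hx'ac : AbsolutelyContinuousOnInterval x' T b :=
    ac_velocity hGc ht₀ hx hx'c hx''m hx'int (by
      filter_upwards [hode] with t ht htm
      obtain ⟨-, g, hg, hw, -⟩ := ht htm
      exact ⟨g, hg, hw⟩) hT hb
  have hpowd : ∀ e : ℝ, ∀ t ∈ Set.Icc T b, HasDerivAt (fun t : ℝ => t ^ e) (e * t ^ (e - 1)) t :=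
    fun e t ht => Real.hasDerivAt_rpow_const (Or.inl (hT0.trans_le ht.1).ne')
  have hpowac : AbsolutelyContinuousOnInterval (fun t : ℝ => t ^ (-p)) T b :=
    ac_of_hasDerivAt hb (hpowd _) (continuousOn_const.mul fun t ht =>
      (Real.continuousAt_rpow_const _ _ (Or.inl (hT0.trans_le ht.1).ne')).continuousWithinAt)
  refine ac_le_of_deriv_nonpos
    (Y := fun t => f i (x t) + 1 / 2 * ‖x' t‖ ^ 2 + β * t ^ (-p) / 2 * ‖x t‖ ^ 2) hb ?_ ?_
  · refine (hfac.fun_add ((ac_norm_sq hx'ac).const_mul (1 / 2))).fun_add ?_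
    have := (hpowac.const_mul (β / 2)).fun_mul (ac_norm_sq hxac)
    convert! this using 2
    ring
  · filter_upwards [hode] with t ht htm d hd
    obtain ⟨hx't, g, -, -, hvi⟩ := ht (hsub htm)
    have ht0 : 0 < t := hT0.trans_le htm.1
    have hd' := ((hfd t (hsub htm)).fun_add (hx't.norm_sq.const_mul (1 / 2))).fun_add
      ((((hpowd (-p) t htm).const_mul β).div_const 2).fun_mul (hx t (hsub htm)).norm_sq)
    rw [hd.unique hd']
    have h1 := hvi i
    rw [inner_add_right, inner_add_right, real_inner_smul_right, real_inner_comm,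
      real_inner_comm (x t) (x' t)] at h1
    have h2 : 0 ≤ α * t ^ (-q) * ‖x' t‖ ^ 2 := by positivity
    have h3 : 0 ≤ β * (p * t ^ (-p - 1)) / 2 * ‖x t‖ ^ 2 := by positivity
    linarith

end Dynamics

/-! ### Convergence of the trajectory -/

/-- For `q ∈ (0,1)`, `p ∈ (0,2]` with `p < q + 1` and a bounded trajectory
solution `x` of (MTRIGS), under (A3), nonemptiness of all `S(c)`, and the existence of a
continuous minimum-norm selection `z₀` of `S`, the trajectory `x(t)` converges strongly to some
weakly Pareto optimal `x*` which has minimum norm in `{z : f_i(z) ≤ f_i(x*) ∀ i}`. -/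
theorem stmt_16
    {H : Type*} [NormedAddCommGroup H] [InnerProductSpace ℝ H] [CompleteSpace H]
    {m : ℕ} (hm : 0 < m) (f : Fin m → H → ℝ)
    (hconv : ∀ i, ConvexOn ℝ Set.univ (f i))
    (hdiff : ∀ i, Differentiable ℝ (f i))
    (hlip : ∀ i, ∃ L : ℝ≥0, LipschitzWith L (gradient (f i)))
    (t₀ α β q p : ℝ) (ht₀ : 0 < t₀) (hα : 0 < α) (hβ : 0 < β)
    (hq : q ∈ Set.Ioo (0:ℝ) 1) (hp : p ∈ Set.Ioc (0:ℝ) 2) (hpq : p < q + 1)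
    (x x' x'' : ℝ → H)
    (hx : ∀ t ∈ Set.Ici t₀, HasDerivAt x (x' t) t)
    (hx'c : ContinuousOn x' (Set.Ici t₀))
    (hx''m : StronglyMeasurable x'')
    (hx'int : ∀ t ∈ Set.Ici t₀, x' t = x' t₀ + ∫ s in t₀..t, x'' s)
    (hx'' : ∀ᵐ t ∂(volume.restrict (Set.Ici t₀)), HasDerivAt x' (x'' t) t)
    (hMTRIGS : ∀ᵐ t ∂(volume.restrict (Set.Ici t₀)),
      ((-(α / t ^ q)) • x' t ∈
        (fun g => g + (β / t ^ p) • x t + x'' t) ''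
          (convexHull ℝ (Set.range fun i => gradient (f i) (x t)))) ∧
      (∀ w ∈ (fun g => g + (β / t ^ p) • x t + x'' t) ''
          (convexHull ℝ (Set.range fun i => gradient (f i) (x t))),
        ‖(α / t ^ q) • x' t‖ ≤ ‖w‖))
    (hbdd : ∃ M : ℝ, ∀ t ∈ Set.Ici t₀, ‖x t‖ ≤ M)
    (hA3a : ∀ w : H,
      (∀ i, f i w ≤ f i (x t₀)
        + (β / (2 * t₀ ^ p) * ‖x t₀‖ ^ 2 + (1/2) * ‖x' t₀‖ ^ 2)) →
      ∃ u : H, (∀ i, f i u ≤ f i w) ∧ ¬ ∃ y : H, ∀ i, f i y < f i u)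
    (hA3b : ∃ R : ℝ, 0 ≤ R ∧ ∀ y : H,
      ((∀ i, f i y ≤ f i (x t₀)
          + (β / (2 * t₀ ^ p) * ‖x t₀‖ ^ 2 + (1/2) * ‖x' t₀‖ ^ 2)) ∧
        ¬ ∃ u : H, ∀ i, f i u < f i y) →
      ∀ ε : ℝ, 0 < ε → ∃ z' : H, (∀ i, f i z' = f i y) ∧ ‖z'‖ ≤ R + ε)
    (S : (Fin m → ℝ) → Set H)
    (hSdef : ∀ c : Fin m → ℝ,
      S c = {u : H | ∀ y : H, (⨆ i, (f i u - c i)) ≤ ⨆ i, (f i y - c i)})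
    (hS : ∀ c : Fin m → ℝ, (S c).Nonempty)
    (z₀ : (Fin m → ℝ) → H) (hz₀cont : Continuous z₀)
    (hz₀mem : ∀ c, z₀ c ∈ S c) (hz₀min : ∀ c, ∀ y ∈ S c, ‖z₀ c‖ ≤ ‖y‖) :
    ∃ xstar : H, Tendsto (fun t => ‖x t - xstar‖) atTop (𝓝 0) ∧
      (¬ ∃ y : H, ∀ i, f i y < f i xstar) ∧
      (∀ z : H, (∀ i, f i z ≤ f i xstar) → ‖xstar‖ ≤ ‖z‖) := by
  have hne : (Finset.univ : Finset (Fin m)).Nonempty := ⟨⟨0, hm⟩, Finset.mem_univ _⟩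
  have : Nonempty (Fin m) := ⟨⟨0, hm⟩⟩
  obtain ⟨hq0, hq1⟩ := hq
  obtain ⟨hp0, hp2⟩ := hp
  set G : Fin m → H → H := fun i => gradient (f i) with hGdef
  have hG : ∀ i y, HasGradientAt (f i) (G i y) y := fun i y => (hdiff i y).hasGradientAt
  have hGc : ∀ i, Continuous (G i) := fun i => by
    obtain ⟨L, hL⟩ := hlip i
    exact hL.continuous
  have hfc : ∀ i, Continuous (f i) := fun i => (hdiff i).continuous
  have hode : ∀ᵐ t, t ∈ Set.Ici t₀ → HasDerivAt x' (x'' t) t ∧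
      ∃ g ∈ convexHull ℝ (Set.range fun i => G i (x t)),
        x'' t = -((α * t ^ (-q)) • x' t) - (β * t ^ (-p)) • x t - g ∧
        ∀ i, ⟪x' t, G i (x t) + (β * t ^ (-p)) • x t + x'' t⟫_ℝ
          ≤ -(α * t ^ (-q)) * ‖x' t‖ ^ 2 := by
    rw [ae_restrict_iff' measurableSet_Ici] at hx'' hMTRIGS
    filter_upwards [hx'', hMTRIGS] with t h1 h2 htm
    have ht0 : 0 < t := ht₀.trans_le htm
    refine ⟨h1 htm, ?_⟩
    obtain ⟨h3, h4⟩ := h2 htm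
    rw [div_eq_mul_inv, ← Real.rpow_neg ht0.le, div_eq_mul_inv, ← Real.rpow_neg ht0.le] at h3
    simp only [div_eq_mul_inv, ← Real.rpow_neg ht0.le] at h4
    exact ode_of_minNorm (by positivity) h3 h4
  obtain ⟨M₀, hM₀⟩ := hbdd
  have hpow0 : ∀ e : ℝ, 0 < e → Tendsto (fun t : ℝ => t ^ (-e)) atTop (𝓝 0) := fun e he =>
    tendsto_rpow_neg_atTop he
  -- `r` lies strictly between `max q (p - q)` and `1`, which is possible because `p < q + 1`
  obtain ⟨r, hqr, hpr, hr1⟩ : ∃ r, q < r ∧ p - q < r ∧ r < 1 := by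
    obtain ⟨r, h1, h2⟩ := exists_between (max_lt hq1 (show p - q < 1 by linarith))
    exact ⟨r, (le_max_left _ _).trans_lt h1, (le_max_right _ _).trans_lt h1, h2⟩
  -- since `p < r + q` and `r < 1`, the decay rate `s` of the energy can beat `p`
  obtain ⟨s, hps, hs1, hs2⟩ : ∃ s, p < s ∧ s ≤ r + q ∧ s ≤ p + 1 - r :=
    ⟨min (r + q) (p + 1 - r), lt_min (by linarith) (by linarith), min_le_left _ _,
      min_le_right _ _⟩
  have hs0 : 0 < s := hp0.trans hps
  -- comparing with `z = x t` kills every term of the energy except the kinetic one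
  have hvel : Tendsto (fun t => ‖x' t‖ ^ 2) atTop (𝓝 0) := by
    obtain ⟨T, hT, B, hB, hdec⟩ := energy_decay hne hconv hG hGc ht₀ hα hβ hp0 hq1 hx hx'c hx''m
      hx'int hode hM₀ hqr (hq0.trans hqr) hr1 hs1 hs2
    have hlim : Tendsto (fun t : ℝ => 2 * B * t ^ (-s)) atTop (𝓝 0) := by
      simpa using (hpow0 s hs0).const_mul (2 * B)
    refine squeeze_zero' (Eventually.of_forall fun t => by positivity) ?_ hlim
    filter_upwards [eventually_ge_atTop T] with t ht
    have h := hdec (x t) (hM₀ t (hT.trans ht)) t ht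
    simp only [sub_self, inner_zero_left, mul_zero, add_zero, Finset.inf'_const, zero_add] at h
    linarith
  have htik : Tendsto (fun t => β * t ^ (-p) / 2 * ‖x t‖ ^ 2) atTop (𝓝 0) := by
    have hlim : Tendsto (fun t : ℝ => β / 2 * M₀ ^ 2 * t ^ (-p)) atTop (𝓝 0) := by
      simpa using (hpow0 p hp0).const_mul (β / 2 * M₀ ^ 2)
    refine squeeze_zero' ?_ ?_ hlim
    · filter_upwards [eventually_gt_atTop 0] with t ht
      positivity
    · filter_upwards [eventually_ge_atTop t₀] with t ht
      have ht0 : 0 < t := ht₀.trans_le ht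
      have h1 : ‖x t‖ ^ 2 ≤ M₀ ^ 2 := by
        have := hM₀ t ht
        gcongr
      have h2 : 0 ≤ β / 2 * t ^ (-p) := by positivity
      nlinarith
  have hFi : ∀ i, ∃ c, Tendsto (fun t => f i (x t)) atTop (𝓝 c) := by
    intro i
    have hanti := energy_antitone hG hGc ht₀ hα hβ hp0 hx hx'c hx''m hx'int hode i
    set W : ℝ → ℝ := fun t => f i (x t) + 1 / 2 * ‖x' t‖ ^ 2 + β * t ^ (-p) / 2 * ‖x t‖ ^ 2
    have hanti' : Antitone fun t => W (max t t₀) := fun a b hab =>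
      hanti (Set.mem_Ici.mpr (le_max_right _ _)) (Set.mem_Ici.mpr (le_max_right _ _))
        (max_le_max_right _ hab)
    have hbelow : BddBelow (Set.range fun t => W (max t t₀)) := by
      refine ⟨f i 0 - ‖G i 0‖ * M₀, ?_⟩
      rintro _ ⟨t, rfl⟩
      have ht : t₀ ≤ max t t₀ := le_max_right _ _
      dsimp only
      generalize max t t₀ = t at ht
      have ht0 : 0 < t := ht₀.trans_le ht
      have h1 := convexOn_add_inner_gradient_le (hconv i) (hG i 0) (z := x t)
      rw [sub_zero] at h1
      have h2 := (abs_le.mp (abs_real_inner_le_norm (G i 0) (x t))).1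
      have h3 : ‖G i 0‖ * ‖x t‖ ≤ ‖G i 0‖ * M₀ := by
        have := hM₀ t ht
        gcongr
      have h4 : 0 ≤ 1 / 2 * ‖x' t‖ ^ 2 + β * t ^ (-p) / 2 * ‖x t‖ ^ 2 := by positivity
      simp only [W]
      linarith
    have hlim := tendsto_atTop_ciInf hanti' hbelow
    have hlimW : Tendsto W atTop (𝓝 (⨅ t, W (max t t₀))) := by
      refine hlim.congr' ?_
      filter_upwards [eventually_ge_atTop t₀] with t ht
      rw [max_eq_left ht]
    refine ⟨_, ((hlimW.sub (hvel.const_mul (1 / 2))).sub htik).congr fun t => ?_⟩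
    simp only [W]
    ring
  choose c hc using hFi
  -- the moving comparison points are the minimum-norm points of the current level sets
  set ζ : ℝ → H := fun t => z₀ fun i => f i (x t) with hζ
  set zs : H := z₀ c with hzs
  have hζlim : Tendsto ζ atTop (𝓝 zs) :=
    (hz₀cont.tendsto c).comp (tendsto_pi_nhds.mpr hc)
  have hfζ : ∀ t i, f i (ζ t) ≤ f i (x t) := by
    intro t i
    have h1 := hz₀mem fun i => f i (x t)
    rw [hSdef] at h1
    have h2 := h1 (x t)
    simp only [sub_self, ciSup_const] at h2
    have h3 := le_ciSup (Set.finite_range fun i => f i (ζ t) - f i (x t)).bddAbove i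
    linarith [h3.trans h2]
  have hfzs : ∀ i, f i zs ≤ c i := fun i =>
    le_of_tendsto_of_tendsto' (((hfc i).tendsto zs).comp hζlim) (hc i) fun t => hfζ t i
  set M := max M₀ (‖zs‖ + 1) with hMdef
  have hM : ∀ t ∈ Set.Ici t₀, ‖x t‖ ≤ M := fun t ht => (hM₀ t ht).trans (le_max_left _ _)
  have hζM : ∀ᶠ t in atTop, ‖ζ t‖ ≤ M := by
    filter_upwards [hζlim.norm.eventually_le_const (show ‖zs‖ < ‖zs‖ + 1 by linarith)] with t ht
    exact ht.trans (le_max_right _ _)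
  obtain ⟨T, hT, B, hB, hdec⟩ := energy_decay hne hconv hG hGc ht₀ hα hβ hp0 hq1 hx hx'c hx''m
    hx'int hode hM hqr (hq0.trans hqr) hr1 hs1 hs2
  -- completing the square absorbs the kinetic and cross terms of the energy at `z = ζ t`
  have hkey : ∀ᶠ t in atTop, (Finset.univ.inf' hne fun i => f i (x t) - f i (ζ t))
      + β * t ^ (-p) / 2 * (‖x t‖ ^ 2 - ‖ζ t‖ ^ 2) ≤ (B + 2 * M ^ 2) * t ^ (-s) := by
    filter_upwards [hζM, eventually_ge_atTop T, eventually_ge_atTop 1] with t h1 h2 ht1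
    have ht0 : 0 < t := by linarith
    have h3 := hdec (ζ t) h1 t h2
    have h4 : ‖x t - ζ t‖ ≤ 2 * M := (norm_sub_le _ _).trans (by linarith [hM t (hT.trans h2)])
    have h5 : (t ^ (-r)) ^ 2 ≤ t ^ (-s) := by
      rw [pow_two, ← Real.rpow_add ht0]
      exact Real.rpow_le_rpow_of_exponent_le ht1 (by linarith)
    have h6 : (t ^ (-r)) ^ 2 * ‖x t - ζ t‖ ^ 2 ≤ t ^ (-s) * (2 * M) ^ 2 := by gcongr
    have h7 := norm_add_sq_real (t ^ (-r) • (x t - ζ t)) (x' t)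
    rw [norm_smul, mul_pow, real_inner_smul_left, Real.norm_eq_abs, sq_abs] at h7
    have h8 := sq_nonneg ‖t ^ (-r) • (x t - ζ t) + x' t‖
    linarith
  have hweak : ∀ y, ∃ i, c i ≤ f i y := by
    -- the objective gaps to `ζ t` cannot all stay bounded away from zero
    have hactive : ∃ i, c i ≤ f i zs := by
      by_contra! hcon
      have hgap : ∀ i, ∃ δ > 0, ∀ᶠ t in atTop, δ ≤ f i (x t) - f i (ζ t) := fun i => by
        refine ⟨(c i - f i zs) / 2, by linarith [hcon i], ?_⟩
        have := (hc i).sub (((hfc i).tendsto zs).comp hζlim)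
        exact this.eventually_const_le (by linarith [hcon i])
      choose δ hδ hδt using hgap
      have hδm : 0 < Finset.univ.inf' hne δ := by
        rw [Finset.lt_inf'_iff]
        exact fun i _ => hδ i
      have hlim : Tendsto (fun t : ℝ => (B + 2 * M ^ 2) * t ^ (-s) + β / 2 * M ^ 2 * t ^ (-p))
          atTop (𝓝 0) := by
        simpa using ((hpow0 s hs0).const_mul (B + 2 * M ^ 2)).add
          ((hpow0 p hp0).const_mul (β / 2 * M ^ 2))
      obtain ⟨t, h1, h2, h3, h4, h5⟩ := (hkey.and ((eventually_all.mpr hδt).and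
        ((hlim.eventually_lt_const hδm).and (hζM.and (eventually_gt_atTop 0))))).exists
      have h6 : Finset.univ.inf' hne δ ≤ Finset.univ.inf' hne fun i => f i (x t) - f i (ζ t) :=
        Finset.inf'_mono_fun fun i _ => h2 i
      have h7 : 0 ≤ β * t ^ (-p) / 2 * ‖x t‖ ^ 2 := by positivity
      have h8 : β * t ^ (-p) / 2 * ‖ζ t‖ ^ 2 ≤ β * t ^ (-p) / 2 * M ^ 2 := by gcongr
      linarith
    obtain ⟨i₀, hi₀⟩ := hactive
    intro y
    by_contra! hcon
    have h1 := hz₀mem c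
    rw [hSdef] at h1
    have h2 := h1 y
    have h3 := le_ciSup (Set.finite_range fun i => f i zs - c i).bddAbove i₀
    obtain ⟨j, hj⟩ := exists_eq_ciSup_of_finite (f := fun i => f i y - c i)
    have h4 := hcon j
    linarith
  -- the optimal value defining `S c` is zero, so the level set of `c` lies in `S c`
  have hlevel : ∀ y, (∀ i, f i y ≤ c i) → ‖zs‖ ≤ ‖y‖ := by
    intro y hy
    refine hz₀min c y ?_
    rw [hSdef]
    intro w
    obtain ⟨i, hi⟩ := hweak w
    have h1 : (⨆ i, (f i y - c i)) ≤ 0 := ciSup_le fun i => by linarith [hy i]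
    have h2 := le_ciSup (Set.finite_range fun i => f i w - c i).bddAbove i
    linarith
  have hnorm : ∀ ε > 0, ∀ᶠ t in atTop, ‖x t‖ ^ 2 ≤ ‖zs‖ ^ 2 + ε := by
    intro ε hε
    have h1 : ∀ᶠ t in atTop, ‖ζ t‖ ^ 2 < ‖zs‖ ^ 2 + ε / 2 :=
      (hζlim.norm.pow 2).eventually_lt_const (by linarith)
    have h2 : Tendsto (fun t : ℝ => 2 / β * (B + 2 * M ^ 2) * t ^ (-(s - p))) atTop (𝓝 0) := by
      simpa using (hpow0 (s - p) (by linarith)).const_mul (2 / β * (B + 2 * M ^ 2))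
    filter_upwards [hkey, h1, h2.eventually_lt_const (half_pos hε), eventually_gt_atTop 0]
      with t h3 h4 h5 ht0
    have h6 : 0 ≤ Finset.univ.inf' hne fun i => f i (x t) - f i (ζ t) :=
      Finset.le_inf' _ _ fun i _ => by linarith [hfζ t i]
    have h7 : t ^ (-s) = t ^ (-(s - p)) * t ^ (-p) := by
      rw [← Real.rpow_add ht0]
      ring_nf
    have h8 : 0 < β * t ^ (-p) / 2 := by positivity
    have h9 : β * t ^ (-p) / 2 * (‖x t‖ ^ 2 - ‖ζ t‖ ^ 2)
        ≤ β * t ^ (-p) / 2 * (2 / β * (B + 2 * M ^ 2) * t ^ (-(s - p))) := by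
      have : β * t ^ (-p) / 2 * (2 / β * (B + 2 * M ^ 2) * t ^ (-(s - p)))
          = (B + 2 * M ^ 2) * t ^ (-s) := by
        rw [h7]
        field_simp
      linarith
    have h10 := le_of_mul_le_mul_left h9 h8
    linarith
  have hconvg : Tendsto x atTop (𝓝 zs) := by
    have hpos : ∀ k : ℕ, (0 : ℝ) < 1 / ((k : ℝ) + 1) := fun k => by positivity
    refine tendsto_of_nested_minNorm (L := fun k : ℕ => {y | ∀ i, f i y ≤ c i + 1 / ((k : ℝ) + 1)})
      ?_ ?_ ?_ ?_ ?_ ?_ hnorm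
    · intro j k hjk y hy i
      have h1 : 1 / ((k : ℝ) + 1) ≤ 1 / ((j : ℝ) + 1) := by gcongr
      exact (hy i).trans (by linarith)
    · intro k
      simp only [Set.ofPred_forall]
      exact isClosed_iInter fun i => isClosed_le (hfc i) continuous_const
    · intro k
      simp only [Set.ofPred_forall]
      refine convex_iInter fun i => ?_
      simpa using (hconv i).convex_le (c i + 1 / ((k : ℝ) + 1))
    · exact fun k i => (hfzs i).trans (by linarith [hpos k])
    · intro u hu
      refine hlevel u fun i => ?_
      refine ge_of_tendsto' (?_ : Tendsto (fun k : ℕ => c i + 1 / ((k : ℝ) + 1)) atTop (𝓝 (c i)))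
        fun k => hu k i
      simpa using tendsto_one_div_add_atTop_nhds_zero_nat.const_add (c i)
    · intro k
      refine eventually_all.mpr fun i => ?_
      exact (hc i).eventually_le_const (by linarith [hpos k])
  refine ⟨zs, tendsto_iff_norm_sub_tendsto_zero.mp hconvg, ?_, fun z hz => hlevel z fun i =>
    (hz i).trans (hfzs i)⟩
  rintro ⟨y, hy⟩
  obtain ⟨i, hi⟩ := hweak y
  linarith [hy i, hfzs i]
end

section
/- Let p ∈ (0,2) and q ∈ (0,1) with q + 1 < p, and let x be a trajectory solution of (MTRIGS). Assume S(F(x(t))) ≠ ∅ for every t ≥ t₀ and assume (A3). Then for every r ∈ [q, (q+1)/2], the integral ∫_{t₀}^{∞} s^{2r−q}·‖ẋ(s)‖² ds is finite. -/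
open Filter Topology MeasureTheory
open scoped NNReal InnerProductSpace

/-!
Along the trajectory the least-norm condition says that, for almost every `t`, there is `g` in the
convex hull of the gradients at `x t` with `x'' + (α / t ^ q) x' + g + (β / t ^ p) x = 0` and
`⟪∇ f i (x t), x'⟫ ≤ ⟪g, x'⟫` for all `i` (`dyn_of_inclusion`). Hence every energy
`f i (x t) + (β / (2 t ^ p)) ‖x‖² + ‖x'‖² / 2` decreases at rate at least `α t ^ (-q) ‖x'‖²`
(`energy_decay`). In particular `x b` stays in the level set of (A3), which supplies, for every
horizon `b`, a point `z` in a fixed ball with `f i z ≤ f i (x b)` for all `i`; then for `t ≤ b` every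
energy minus `f i z` is at least `D t = ‖x' b‖² / 2 + α ∫_t^b s ^ (-q) ‖x' s‖² ds`, and so convexity
gives `⟪g, x - z⟫ ≥ D t - (β / (2 t ^ p)) ‖x‖² - ‖x'‖² / 2`.

With `c = α / (q + 1)`, this makes the function
`t ^ (q + 1) D / (q + 1) + (α / 2) ‖x - z‖² + t ^ q ⟪x', x - z⟫` decrease at rate at least
`(c / 2) t ‖x'‖²` for large `t`, up to an error `O(t ^ (q - p))`, integrable because `q + 1 < p`.
The cross term `q t ^ (q - 1) ⟪x', x - z⟫` is absorbed by `t ‖x'‖²` and by the Tikhonov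
contribution `t ^ (q - p) ‖x - z‖²`, which is possible since `q + p < 3`, so no a priori bound on the
trajectory is needed. The function is nonnegative at time `b`, whence `∫ s ‖x' s‖² ds` is bounded
uniformly in `b` (`lyapunov_estimate`). This is the case `r = (q + 1) / 2`; smaller weights are
dominated by it on `[t₀, ∞)`.

All these monotonicity statements hold for almost every `t` only, so they rest on absolute
continuity of `x'`, which follows from the local boundedness of `x''` (`ac_velocity`).
-/

/-! ### Absolutely continuous functions -/

namespace MTRIGS

theorem ac_of_hasDerivAt {E : Type*} [NormedAddCommGroup E] [NormedSpace ℝ E] {G G' : ℝ → E}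
    {a b : ℝ} (hab : a ≤ b) (hG : ∀ t ∈ Set.Icc a b, HasDerivAt G (G' t) t)
    (hc : ContinuousOn G' (Set.Icc a b)) : AbsolutelyContinuousOnInterval G a b := by
  obtain ⟨C, hC⟩ := isCompact_Icc.exists_bound_of_continuousOn hc
  have : LipschitzOnWith (Real.toNNReal C) G (Set.uIcc a b) := by
    rw [Set.uIcc_of_le hab]
    refine (convex_Icc a b).lipschitzOnWith_of_nnnorm_hasDerivWithin_le (f' := G')
      (fun t ht => (hG t ht).hasDerivWithinAt) (fun t ht => ?_)
    rw [← NNReal.coe_le_coe, coe_nnnorm]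
    exact (hC t ht).trans (Real.le_coe_toNNReal C)
  exact this.absolutelyContinuousOnInterval

theorem ac_norm {E : Type*} [NormedAddCommGroup E] {u : ℝ → E} {a b : ℝ}
    (hu : AbsolutelyContinuousOnInterval u a b) :
    AbsolutelyContinuousOnInterval (fun t => ‖u t‖) a b := by
  refine squeeze_zero (fun E => ?_) (fun E => ?_) hu
  · exact Finset.sum_nonneg fun i _ => dist_nonneg
  · exact Finset.sum_le_sum fun i _ => by
      simpa [dist_eq_norm] using abs_norm_sub_norm_le (u (E.2 i).1) (u (E.2 i).2)

/-- Polarization reduces this to norms and products of real functions. -/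
theorem ac_inner {H : Type*} [NormedAddCommGroup H] [InnerProductSpace ℝ H] {u v : ℝ → H}
    {a b : ℝ} (hu : AbsolutelyContinuousOnInterval u a b)
    (hv : AbsolutelyContinuousOnInterval v a b) :
    AbsolutelyContinuousOnInterval (fun t => ⟪u t, v t⟫_ℝ) a b := by
  have h1 := ac_norm (hu.fun_add hv)
  have h2 := ac_norm (hu.fun_sub hv)
  have h := ((h1.fun_mul h1).fun_sub (h2.fun_mul h2)).const_mul (1 / 4)
  convert h using 2 with t
  have e1 := norm_add_mul_self_real (u t) (v t)
  have e2 := norm_sub_mul_self_real (u t) (v t)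
  linarith

/-- An absolutely continuous function whose derivative is almost everywhere nonpositive does not
increase. -/
theorem le_of_ae_deriv_nonpos {G : ℝ → ℝ} {a b : ℝ} (hab : a ≤ b)
    (hG : AbsolutelyContinuousOnInterval G a b)
    (h : ∀ᵐ t : ℝ, t ∈ Set.Icc a b → ∃ d ≤ 0, HasDerivAt G d t) : G b ≤ G a := by
  rw [← sub_nonpos, ← hG.integral_deriv_eq_sub, intervalIntegral.integral_of_le hab,
    ← integral_Icc_eq_integral_Ioc]
  refine integral_nonpos_of_ae ?_
  refine (ae_restrict_iff' measurableSet_Icc).2 ?_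
  filter_upwards [h] with t ht hmem
  obtain ⟨d, hd, hd'⟩ := ht hmem
  simpa [hd'.deriv] using hd

/-- A function continuous on `[t₀, ∞)` has a primitive there; at `t₀` the two-sided derivative is
obtained by extending the function by a constant to the left of `t₀`. -/
theorem exists_primitive {φ : ℝ → ℝ} {t₀ : ℝ} (hφ : ContinuousOn φ (Set.Ici t₀)) :
    ∃ J : ℝ → ℝ, ∀ t ∈ Set.Ici t₀, HasDerivAt J (φ t) t := by
  have hc : Continuous fun t => φ (max t t₀) :=
    hφ.comp_continuous (by fun_prop) (fun t => Set.mem_Ici.2 (le_max_right _ _))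
  refine ⟨fun t => ∫ s in t₀..t, φ (max s t₀), fun t ht => ?_⟩
  have := hc.integral_hasStrictDerivAt t₀ t
  simpa [max_eq_left (Set.mem_Ici.1 ht)] using this.hasDerivAt

theorem hasDerivAt_rpow {t : ℝ} (ht : 0 < t) (e : ℝ) :
    HasDerivAt (fun s : ℝ => s ^ e) (e * t ^ (e - 1)) t :=
  Real.hasDerivAt_rpow_const (Or.inl ht.ne')

theorem ac_rpow {a b : ℝ} (ha : 0 < a) (hab : a ≤ b) (e : ℝ) :
    AbsolutelyContinuousOnInterval (fun s : ℝ => s ^ e) a b := by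
  refine ac_of_hasDerivAt hab (fun t ht => hasDerivAt_rpow (ha.trans_le ht.1) e) ?_
  refine continuousOn_const.mul (continuousOn_id.rpow_const fun t ht => Or.inl ?_)
  exact (ha.trans_le ht.1).ne'

/-! ### Convexity and the projection characterization -/

section
variable {H : Type*} [NormedAddCommGroup H] [InnerProductSpace ℝ H]

theorem hasDerivAt_comp_gradient [CompleteSpace H] {f : H → ℝ} (hf : Differentiable ℝ f)
    {u : ℝ → H} {u' : H} {t : ℝ} (hu : HasDerivAt u u' t) :
    HasDerivAt (fun s => f (u s)) ⟪gradient f (u t), u'⟫_ℝ t := by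
  have := (hf (u t)).hasFDerivAt.comp_hasDerivAt t hu
  rwa [← inner_gradient_left] at this

theorem gradient_inequality [CompleteSpace H] {f : H → ℝ} (hf : Differentiable ℝ f)
    (hc : ConvexOn ℝ Set.univ f) (x z : H) : f x + ⟪gradient f x, z - x⟫_ℝ ≤ f z := by
  have hline : ConvexOn ℝ Set.univ (fun s : ℝ => f (AffineMap.lineMap x z s)) := by
    simpa using! hc.comp_affineMap (AffineMap.lineMap x z : ℝ →ᵃ[ℝ] H)
  have hd : HasDerivAt (fun s : ℝ => f (AffineMap.lineMap x z s)) ⟪gradient f x, z - x⟫_ℝ 0 := by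
    have h0 : HasDerivAt (fun s : ℝ => (AffineMap.lineMap x z s : H)) (z - x) 0 :=
      AffineMap.hasDerivAt_lineMap
    simpa using hasDerivAt_comp_gradient hf h0
  have := hline.le_slope_of_hasDerivAt (Set.mem_univ 0) (Set.mem_univ 1) one_pos hd
  simp only [slope_def_field, AffineMap.lineMap_apply_one, AffineMap.lineMap_apply_zero, sub_zero,
    div_one] at this
  linarith

/-- The variational inequality for a least-norm element `g + c` of the translate `C + c` of a
convex set. -/
theorem inner_nonneg_of_min_norm {C : Set H} (hC : Convex ℝ C) {g c w : H} (hg : g ∈ C)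
    (hmin : ∀ u ∈ C, ‖g + c‖ ≤ ‖u + c‖) (hw : w ∈ C) : 0 ≤ ⟪g + c, w - g⟫_ℝ := by
  by_contra! hneg
  set I := ⟪g + c, w - g⟫_ℝ with hI
  have hN : 0 ≤ ‖w - g‖ ^ 2 := by positivity
  -- A short step of length `s` from `g` towards `w` would decrease the norm.
  set s := -I / (‖w - g‖ ^ 2 - I) with hs
  have hden : 0 < ‖w - g‖ ^ 2 - I := by linarith
  have hs0 : 0 < s := div_pos (by linarith) hden
  have hs1 : s ≤ 1 := (div_le_one hden).2 (by linarith)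
  have hsd : s * (‖w - g‖ ^ 2 - I) = -I := div_mul_cancel₀ _ hden.ne'
  have hmem := hC.add_smul_sub_mem hg hw ⟨hs0.le, hs1⟩
  have h := hmin _ hmem
  have hsq : ‖g + c‖ ^ 2 ≤ ‖g + s • (w - g) + c‖ ^ 2 := by gcongr
  have hexp : ‖g + s • (w - g) + c‖ ^ 2 = ‖g + c‖ ^ 2 + 2 * (s * I) + s ^ 2 * ‖w - g‖ ^ 2 := by
    rw [add_right_comm, norm_add_sq_real, inner_smul_right, norm_smul, mul_pow,
      Real.norm_eq_abs, sq_abs]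
  have h3 : 0 ≤ s * (2 * I + s * ‖w - g‖ ^ 2) := by nlinarith
  have h4 : 0 ≤ 2 * I + s * ‖w - g‖ ^ 2 := nonneg_of_mul_nonneg_right h3 hs0
  nlinarith [mul_pos hs0 (neg_pos.2 hneg)]

theorem le_inner_of_mem_convexHull {S : Set H} {g y : H} {c : ℝ} (hg : g ∈ convexHull ℝ S)
    (h : ∀ u ∈ S, c ≤ ⟪u, y⟫_ℝ) : c ≤ ⟪g, y⟫_ℝ := by
  have hconv : Convex ℝ {u : H | c ≤ ⟪u, y⟫_ℝ} := by
    simp_rw [real_inner_comm y]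
    exact convex_halfSpace_ge (f := fun u : H => ⟪y, u⟫_ℝ)
      (innerSL ℝ y).toLinearMap.isLinear c
  exact convexHull_min (t := {u : H | c ≤ ⟪u, y⟫_ℝ}) h hconv hg

end

/-! ### Energy estimates -/

section
variable {H : Type*} [NormedAddCommGroup H] [InnerProductSpace ℝ H] [CompleteSpace H]
  {m : ℕ}

/-- The form in which the differential inclusion is used at a time `t`, for position `u`, velocity
`v` and acceleration `w`: the equation
`w + (α / t ^ q) v + g + (β / t ^ p) u = 0` holds for some `g` in the convex hull of the gradients,
and `g` dominates every gradient in the direction `v`. -/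
def Dyn (f : Fin m → H → ℝ) (α β q p t : ℝ) (u v w : H) : Prop :=
  ∃ g ∈ convexHull ℝ (Set.range fun i => gradient (f i) u),
    w = -(α / t ^ q) • v - g - (β / t ^ p) • u ∧
      ∀ i, ⟪gradient (f i) u, v⟫_ℝ ≤ ⟪g, v⟫_ℝ

theorem dyn_of_inclusion {f : Fin m → H → ℝ} {α β q p t : ℝ} (ht : 0 < t) (hα : 0 < α)
    {u v w : H}
    (h1 : (-(α / t ^ q)) • v ∈ (fun g => g + (β / t ^ p) • u + w) ''
      (convexHull ℝ (Set.range fun i => gradient (f i) u)))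
    (h2 : ∀ k ∈ (fun g => g + (β / t ^ p) • u + w) ''
      (convexHull ℝ (Set.range fun i => gradient (f i) u)), ‖(α / t ^ q) • v‖ ≤ ‖k‖) :
    Dyn f α β q p t u v w := by
  obtain ⟨g, hg, hgv⟩ := h1
  have hgv' : g + ((β / t ^ p) • u + w) = -(α / t ^ q) • v := by
    rw [← add_assoc]; exact hgv
  refine ⟨g, hg, ?_, fun i => ?_⟩
  · rw [← hgv]; dsimp only; abel
  · have hpos : 0 < α / t ^ q := by positivity
    have hmin : ∀ k ∈ convexHull ℝ (Set.range fun i => gradient (f i) u),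
        ‖g + ((β / t ^ p) • u + w)‖ ≤ ‖k + ((β / t ^ p) • u + w)‖ := by
      intro k hk
      have := h2 _ ⟨k, hk, rfl⟩
      rwa [hgv', neg_smul, norm_neg, ← add_assoc]
    have h := inner_nonneg_of_min_norm (convex_convexHull ℝ _) hg hmin
      (subset_convexHull ℝ _ (Set.mem_range_self i))
    rw [hgv', real_inner_smul_left, inner_sub_right, real_inner_comm _ v, real_inner_comm g v] at h
    nlinarith

/-- The energy of the `i`-th objective, `f i + (β / (2 t ^ p)) ‖x‖² + ‖x'‖² / 2`. -/
noncomputable def energy (fi : H → ℝ) (β p : ℝ) (x x' : ℝ → H) (t : ℝ) : ℝ :=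
  fi (x t) + β / 2 * t ^ (-p) * ‖x t‖ ^ 2 + 1 / 2 * ‖x' t‖ ^ 2

variable {f : Fin m → H → ℝ} {x x' x'' : ℝ → H} {α β q p a b : ℝ}

/-- Each energy decreases at least as fast as `α ∫ s ^ (-q) ‖x' s‖²` grows. -/
theorem energy_decay (hdiff : ∀ i, Differentiable ℝ (f i)) (hβ : 0 < β) (hp : 0 < p)
    (hgc : ∀ i, Continuous (gradient (f i)))
    (ha : 0 < a) (hab : a ≤ b)
    (hx : ∀ t ∈ Set.Icc a b, HasDerivAt x (x' t) t) (hc : ContinuousOn x' (Set.Icc a b))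
    (hac : AbsolutelyContinuousOnInterval x' a b)
    (hdyn : ∀ᵐ t : ℝ, t ∈ Set.Icc a b →
      HasDerivAt x' (x'' t) t ∧ Dyn f α β q p t (x t) (x' t) (x'' t))
    {J : ℝ → ℝ} (hJ : ∀ t ∈ Set.Icc a b, HasDerivAt J (‖x' t‖ ^ 2 / t ^ q) t)
    (hJac : AbsolutelyContinuousOnInterval J a b) (i : Fin m) :
    energy (f i) β p x x' b + α * J b ≤ energy (f i) β p x x' a + α * J a := by
  have hxac := ac_of_hasDerivAt hab hx hc
  have hxc : ContinuousOn x (Set.Icc a b) := fun t ht => (hx t ht).continuousAt.continuousWithinAt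
  have hfac : AbsolutelyContinuousOnInterval (fun t => f i (x t)) a b :=
    ac_of_hasDerivAt hab (fun t ht => hasDerivAt_comp_gradient (hdiff i) (hx t ht))
      (((hgc i).comp_continuousOn hxc).inner hc)
  refine le_of_ae_deriv_nonpos (G := fun t => energy (f i) β p x x' t + α * J t) hab ?_ ?_
  · have := ((hfac.fun_add (((ac_rpow ha hab (-p)).const_mul (β / 2)).fun_mul
      (ac_inner hxac hxac))).fun_add ((ac_inner hac hac).const_mul (1 / 2))).fun_add
      (hJac.const_mul α)
    simpa only [energy, real_inner_self_eq_norm_sq] using this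
  · filter_upwards [hdyn] with t ht hmem
    obtain ⟨hx't, g, hg, hw, hgi⟩ := ht hmem
    have ht0 : 0 < t := ha.trans_le hmem.1
    have hd := ((((hasDerivAt_comp_gradient (hdiff i) (hx t hmem)).add
      ((((hasDerivAt_rpow ht0 (-p)).const_mul (β / 2)).mul
      (hx t hmem).norm_sq))).add (hx't.norm_sq.const_mul (1 / 2)))).add ((hJ t hmem).const_mul α)
    refine ⟨_, ?_, hd⟩
    have h1 : ⟪x' t, x'' t⟫_ℝ = -(α / t ^ q) * ‖x' t‖ ^ 2 - ⟪g, x' t⟫_ℝ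
        - β / t ^ p * ⟪x t, x' t⟫_ℝ := by
      rw [hw]
      simp only [inner_sub_right, inner_smul_right, real_inner_self_eq_norm_sq]
      rw [real_inner_comm g, real_inner_comm (x t)]
    rw [h1, Real.rpow_neg ht0.le]
    have h2 : 0 ≤ β / 2 * (p * t ^ (-p - 1)) * ‖x t‖ ^ 2 := by positivity
    have h3 := hgi i
    have e1 : β / t ^ p = β * (t ^ p)⁻¹ := div_eq_mul_inv _ _
    have e2 : α * (‖x' t‖ ^ 2 / t ^ q) = α / t ^ q * ‖x' t‖ ^ 2 := by ring
    rw [e1, e2]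
    nlinarith

/-- The scalar inequality behind the Lyapunov estimate. Here `A`, `s`, `X`, `N`, `G` stand for
`⟪x', x - z⟫`, `‖x'‖²`, `‖x - z‖²`, `‖x‖²`, `⟪g, x - z⟫`, and `n`, `P`, `b`
for `‖z‖²`, `t ^ q`, `t ^ p`. -/
theorem scalar_estimate {t P b q c α β A s X N n Z G D : ℝ} (ht : 0 < t) (hP : 0 < P) (hb : 0 < b)
    (hc : 0 < c) (hβ : 0 < β) (hq : 0 < q)
    (hs : 0 ≤ s) (hX : 0 ≤ X) (hn : n ≤ Z) (hA : A ^ 2 ≤ s * X)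
    (hbig : 6 * P ≤ c * t) (hbig' : 2 * q ^ 2 * P * b ≤ c * β * t ^ 3)
    (hG : D - β / (2 * b) * N - 1 / 2 * s ≤ G) :
    P * D - c * t * s + α * A + q * (P / t) * A
      + P * (-(α / P) * A - G - β / b * (1 / 2 * N + 1 / 2 * X - 1 / 2 * n) + s)
      - β / 2 * Z * (P / b) + c / 2 * (t * s) ≤ 0 := by
  have h1 : P * (α / P) = α := by field_simp
  have hPG := mul_le_mul_of_nonneg_left hG hP.le
  -- Young's inequality for `q (P / t) A`, with weights `(c / 4) t` and `(q² / c) P² / t³`.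
  have hY : q * (P / t) * A ≤ c / 4 * t * s + β / 2 * (P / b) * X := by
    have h2 : q * (P / t) * A ≤ c / 4 * t * s + q ^ 2 / c * (P ^ 2 / t ^ 3) * X := by
      have hU : 0 ≤ c / 4 * t * s := by positivity
      have hV : 0 ≤ q ^ 2 / c * (P ^ 2 / t ^ 3) * X := by positivity
      refine abs_le_of_sq_le_sq' ?_ (by positivity) |>.2
      have h3 : (q * (P / t) * A) ^ 2 ≤ (q * (P / t)) ^ 2 * (s * X) := by
        rw [mul_pow]; gcongr
      have h4 : (q * (P / t)) ^ 2 * (s * X)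
          = 4 * (c / 4 * t * s) * (q ^ 2 / c * (P ^ 2 / t ^ 3) * X) := by
        field_simp
      nlinarith [sq_nonneg (c / 4 * t * s - q ^ 2 / c * (P ^ 2 / t ^ 3) * X)]
    have h5 : q ^ 2 / c * (P ^ 2 / t ^ 3) ≤ β / 2 * (P / b) := by
      rw [div_mul_div_comm, div_mul_div_comm, div_le_div_iff₀ (by positivity) (by positivity)]
      nlinarith [mul_le_mul_of_nonneg_left hbig' hP.le]
    linarith [mul_le_mul_of_nonneg_right h5 hX]
  have h6 : 6 * P * s ≤ c * t * s := mul_le_mul_of_nonneg_right hbig hs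
  have h7 : 0 ≤ β / 2 * (P / b) * (Z - n) := by
    have : 0 ≤ Z - n := by linarith
    positivity
  have e1 : P * (β / (2 * b) * N) = β / 2 * (P / b) * N := by field_simp
  have e2 : P * (-(α / P) * A - G - β / b * (1 / 2 * N + 1 / 2 * X - 1 / 2 * n) + s)
    = - (P * (α / P)) * A - P * G - β / 2 * (P / b) * N - β / 2 * (P / b) * X
      + β / 2 * (P / b) * n + P * s := by field_simp; ring
  rw [e2, h1]
  nlinarith

/-- The Lyapunov estimate. If `z` is such that every `energy (f i) - f i z` dominates
`‖x' b‖² / 2 + α ∫_t^b s ^ (-q) ‖x' s‖² ds`, then `∫_a^b s ‖x' s‖² ds` is bounded by quantities at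
time `a`. -/
theorem lyapunov_estimate (hdiff : ∀ i, Differentiable ℝ (f i))
    (hconv : ∀ i, ConvexOn ℝ Set.univ (f i))
    (hα : 0 < α) (hβ : 0 < β) (hq : 0 < q) (hpq : q + 1 < p)
    (ha : 0 < a) (hab : a ≤ b)
    (hx : ∀ t ∈ Set.Icc a b, HasDerivAt x (x' t) t) (hc : ContinuousOn x' (Set.Icc a b))
    (hac : AbsolutelyContinuousOnInterval x' a b)
    (hdyn : ∀ᵐ t : ℝ, t ∈ Set.Icc a b →
      HasDerivAt x' (x'' t) t ∧ Dyn f α β q p t (x t) (x' t) (x'' t))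
    {J J₁ : ℝ → ℝ} (hJ : ∀ t ∈ Set.Icc a b, HasDerivAt J (‖x' t‖ ^ 2 / t ^ q) t)
    (hJac : AbsolutelyContinuousOnInterval J a b)
    (hJ₁ : ∀ t ∈ Set.Icc a b, HasDerivAt J₁ (t * ‖x' t‖ ^ 2) t)
    (hJ₁ac : AbsolutelyContinuousOnInterval J₁ a b)
    {c Z : ℝ} (hcα : c * (q + 1) = α) {z : H} (hz : ‖z‖ ^ 2 ≤ Z)
    (hlow : ∀ t ∈ Set.Icc a b, ∀ i,
      1 / 2 * ‖x' b‖ ^ 2 + α * (J b - J t) ≤ energy (f i) β p x x' t - f i z)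
    (hbig : ∀ t ∈ Set.Icc a b, 6 * t ^ q ≤ c * t)
    (hbig' : ∀ t ∈ Set.Icc a b, 2 * q ^ 2 * t ^ q * t ^ p ≤ c * β * t ^ 3) :
    c / 2 * (J₁ b - J₁ a) ≤
      a ^ (q + 1) * (1 / (q + 1) * (1 / 2 * ‖x' b‖ ^ 2 + α * (J b - J a)))
        + α / 2 * ‖x a - z‖ ^ 2 + a ^ q * ⟪x' a, x a - z⟫_ℝ
        + β / 2 * Z / (p - q - 1) * a ^ (q + 1 - p) := by
  have hc0 : 0 < c := by
    by_contra! h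
    nlinarith
  have hxac := ac_of_hasDerivAt hab hx hc
  have hy : ∀ t ∈ Set.Icc a b, HasDerivAt (fun s => x s - z) (x' t) t :=
    fun t ht => (hx t ht).sub_const z
  have hyac := ac_of_hasDerivAt hab hy hc
  let Ψ : ℝ → ℝ := fun t =>
    t ^ (q + 1) * (1 / (q + 1) * (1 / 2 * ‖x' b‖ ^ 2 + α * (J b - J t)))
        + α / 2 * ‖x t - z‖ ^ 2 + t ^ q * ⟪x' t, x t - z⟫_ℝ
        + β / 2 * Z / (p - q - 1) * t ^ (q + 1 - p) + c / 2 * J₁ t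
  have hconst : ∀ k : ℝ, AbsolutelyContinuousOnInterval (fun _ : ℝ => k) a b := fun k =>
    ac_of_hasDerivAt (G' := fun _ => 0) hab (fun t _ => hasDerivAt_const t k) continuousOn_const
  have hmono : Ψ b ≤ Ψ a := by
    refine le_of_ae_deriv_nonpos hab ?_ ?_
    · have h1 := (ac_rpow ha hab (q + 1)).fun_mul (((hconst (1 / 2 * ‖x' b‖ ^ 2)).fun_add
        (((hconst (J b)).fun_sub hJac).const_mul α)).const_mul (1 / (q + 1)))
      have h2 := (ac_inner hyac hyac).const_mul (α / 2)
      have h3 := (ac_rpow ha hab q).fun_mul (ac_inner hac hyac)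
      have h4 := (ac_rpow ha hab (q + 1 - p)).const_mul (β / 2 * Z / (p - q - 1))
      have := (((h1.fun_add h2).fun_add h3).fun_add h4).fun_add (hJ₁ac.const_mul (c / 2))
      simpa only [Ψ, real_inner_self_eq_norm_sq] using this
    · filter_upwards [hdyn] with t ht hmem
      obtain ⟨hx't, g, hg, hw, -⟩ := ht hmem
      have ht0 : 0 < t := ha.trans_le hmem.1
      have d1 := (hasDerivAt_rpow ht0 (q + 1)).mul (((((hJ t hmem).const_sub (J b)).const_mul
        α).const_add (1 / 2 * ‖x' b‖ ^ 2)).const_mul (1 / (q + 1)))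
      have d2 := (hy t hmem).norm_sq.const_mul (α / 2)
      have d3 := (hasDerivAt_rpow ht0 q).mul (hx't.inner ℝ (hy t hmem))
      have d4 := (hasDerivAt_rpow ht0 (q + 1 - p)).const_mul (β / 2 * Z / (p - q - 1))
      have hd := (((d1.add d2).add d3).add d4).add ((hJ₁ t hmem).const_mul (c / 2))
      refine ⟨_, ?_, hd⟩
      have hP : 0 < t ^ q := by positivity
      have hb : 0 < t ^ p := by positivity
      have hG : ((1 / 2 * ‖x' b‖ ^ 2 + α * (J b - J t)) - β / (2 * t ^ p) * ‖x t‖ ^ 2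
          - 1 / 2 * ‖x' t‖ ^ 2) ≤ ⟪g, x t - z⟫_ℝ := by
        refine le_inner_of_mem_convexHull hg ?_
        rintro _ ⟨i, rfl⟩
        have h1 := hlow t hmem i
        have h2 := gradient_inequality (hdiff i) (hconv i) (x t) z
        rw [← neg_sub (x t) z, inner_neg_right] at h2
        have h3 : β / (2 * t ^ p) = β / 2 * t ^ (-p) := by
          rw [Real.rpow_neg ht0.le]; field_simp
        rw [energy] at h1
        rw [h3]
        linarith
      have hA : ⟪x' t, x t - z⟫_ℝ ^ 2 ≤ ‖x' t‖ ^ 2 * ‖x t - z‖ ^ 2 := by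
        rw [← mul_pow, ← sq_abs]
        gcongr
        exact abs_real_inner_le_norm _ _
      have key := scalar_estimate (α := α) ht0 hP hb hc0 hβ hq (sq_nonneg ‖x' t‖)
        (sq_nonneg ‖x t - z‖) hz hA (hbig t hmem) (hbig' t hmem) hG
      have hxy : ⟪x t, x t - z⟫_ℝ
          = 1 / 2 * ‖x t‖ ^ 2 + 1 / 2 * ‖x t - z‖ ^ 2 - 1 / 2 * ‖z‖ ^ 2 := by
        have := norm_sub_sq_real (x t) z
        rw [inner_sub_right, real_inner_self_eq_norm_sq]
        linarith
      have hwy : ⟪x'' t, x t - z⟫_ℝ = -(α / t ^ q) * ⟪x' t, x t - z⟫_ℝ - ⟪g, x t - z⟫_ℝ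
          - β / t ^ p * ⟪x t, x t - z⟫_ℝ := by
        rw [hw]
        simp only [inner_sub_left, real_inner_smul_left]
      have r1 : t ^ (q + 1) = t ^ q * t := Real.rpow_add_one ht0.ne' q
      have r2 : t ^ (q - 1) = t ^ q / t := Real.rpow_sub_one ht0.ne' q
      have r3 : t ^ (q + 1 - p - 1) = t ^ q / t ^ p := by
        rw [← Real.rpow_sub ht0]; congr 1; ring
      have r4 : t ^ (q + 1 - 1) = t ^ q := by congr 1; ring
      rw [real_inner_self_eq_norm_sq, real_inner_comm (x' t) (x t - z), hwy, hxy, r1, r2, r3, r4]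
      refine le_trans (le_of_eq ?_) key
      have e1 : p - q - 1 ≠ 0 := by linarith
      have e2 : q + 1 ≠ 0 := by linarith
      rw [← hcα]
      field_simp
      ring
  have hend : 0 ≤ b ^ (q + 1) * (1 / (q + 1) * (1 / 2 * ‖x' b‖ ^ 2 + α * (J b - J b)))
      + α / 2 * ‖x b - z‖ ^ 2 + b ^ q * ⟪x' b, x b - z⟫_ℝ := by
    have hb0 : 0 < b := ha.trans_le hab
    have hP : 0 < b ^ q := by positivity
    have hPb := hbig b ⟨hab, le_rfl⟩
    rw [Real.rpow_add_one hb0.ne' q, sub_self, mul_zero, add_zero]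
    have hA := abs_real_inner_le_norm (x' b) (x b - z)
    have h1 := (abs_le.1 hA).1
    have hV := norm_nonneg (x' b)
    have hY := norm_nonneg (x b - z)
    have h2 : b ^ q * (‖x' b‖ * ‖x b - z‖) ≤ b ^ q * b * (1 / (q + 1) * (1 / 2 * ‖x' b‖ ^ 2))
        + α / 2 * ‖x b - z‖ ^ 2 := by
      have h3 : b ^ q * b * (1 / (q + 1) * (1 / 2 * ‖x' b‖ ^ 2)) * α
          = 1 / 2 * (b ^ q * (c * b)) * ‖x' b‖ ^ 2 := by
        rw [← hcα]; field_simp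
      have h4 : b ^ q * (6 * b ^ q) * ‖x' b‖ ^ 2 ≤ b ^ q * (c * b) * ‖x' b‖ ^ 2 := by gcongr
      have h5 := sq_nonneg (b ^ q * ‖x' b‖ - α * ‖x b - z‖)
      have h6 : 0 ≤ (b ^ q * ‖x' b‖) ^ 2 := sq_nonneg _
      refine le_of_mul_le_mul_right ?_ hα
      nlinarith
    nlinarith
  have hZ : 0 ≤ Z := (sq_nonneg _).trans hz
  have hend' : 0 ≤ β / 2 * Z / (p - q - 1) * b ^ (q + 1 - p) := by
    have : 0 < p - q - 1 := by linarith
    have : 0 < b := ha.trans_le hab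
    positivity
  simp only [Ψ] at hmono
  linarith

/-- Since the gradients are bounded along a compact piece of the trajectory, the acceleration is
essentially bounded there, so the velocity is absolutely continuous. -/
theorem ac_velocity (hgc : ∀ i, Continuous (gradient (f i)))
    (ha : 0 < a) (hab : a ≤ b)
    (hx : ∀ t ∈ Set.Icc a b, HasDerivAt x (x' t) t) (hc : ContinuousOn x' (Set.Icc a b))
    (hm : StronglyMeasurable x'') (hint : ∀ t ∈ Set.Icc a b, x' t = x' a + ∫ s in a..t, x'' s)
    (hdyn : ∀ᵐ t : ℝ, t ∈ Set.Icc a b → Dyn f α β q p t (x t) (x' t) (x'' t)) :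
    AbsolutelyContinuousOnInterval x' a b := by
  have hxc : ContinuousOn x (Set.Icc a b) := fun t ht => (hx t ht).continuousAt.continuousWithinAt
  have hpos : ∀ t ∈ Set.Icc a b, 0 < t := fun t ht => ha.trans_le ht.1
  have hr : ∀ e : ℝ, ContinuousOn (fun t : ℝ => t ^ e) (Set.Icc a b) := fun e =>
    continuousOn_id.rpow_const fun t ht => Or.inl (hpos t ht).ne'
  obtain ⟨C₁, hC₁⟩ := isCompact_Icc.exists_bound_of_continuousOn (f := fun t => (α / t ^ q) • x' t)
    ((continuousOn_const.div (hr q) fun t ht => (Real.rpow_pos_of_pos (hpos t ht) q).ne').smul hc)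
  obtain ⟨C₂, hC₂⟩ := isCompact_Icc.exists_bound_of_continuousOn (f := fun t => (β / t ^ p) • x t)
    ((continuousOn_const.div (hr p) fun t ht => (Real.rpow_pos_of_pos (hpos t ht) p).ne').smul hxc)
  have hg : ∀ i, ∃ C, ∀ t ∈ Set.Icc a b, ‖gradient (f i) (x t)‖ ≤ C := fun i =>
    isCompact_Icc.exists_bound_of_continuousOn ((hgc i).comp_continuousOn hxc)
  choose C hC using hg
  have hC0 : ∀ i, 0 ≤ C i := fun i => (norm_nonneg _).trans (hC i a ⟨le_rfl, hab⟩)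
  have hbound : ∀ᵐ t : ℝ, t ∈ Set.Icc a b → ‖x'' t‖ ≤ C₁ + ∑ i, C i + C₂ := by
    filter_upwards [hdyn] with t ht hmem
    obtain ⟨g, hg, hw, -⟩ := ht hmem
    have hgn : ‖g‖ ≤ ∑ i, C i := by
      have : convexHull ℝ (Set.range fun i => gradient (f i) (x t))
          ⊆ Metric.closedBall 0 (∑ i, C i) := by
        refine convexHull_min ?_ (convex_closedBall _ _)
        rintro _ ⟨i, rfl⟩
        rw [mem_closedBall_zero_iff]
        exact (hC i t hmem).trans (Finset.single_le_sum (fun j _ => hC0 j) (Finset.mem_univ i))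
      simpa using this hg
    have h1 := hC₁ t hmem
    have h2 := hC₂ t hmem
    rw [hw, neg_smul]
    refine norm_sub_le_of_le (norm_sub_le_of_le ?_ hgn) h2
    rwa [norm_neg]
  have hii : IntegrableOn x'' (Set.Icc a b) := by
    refine Measure.integrableOn_of_bounded (M := C₁ + ∑ i, C i + C₂) (by simp)
      hm.aestronglyMeasurable ?_
    exact (ae_restrict_iff' measurableSet_Icc).2 hbound
  have hsub : ∀ s ∈ Set.Icc a b, ∀ t ∈ Set.Icc a b, IntervalIntegrable x'' volume s t :=
    fun s hs t ht => (hii.mono_set (Set.uIcc_subset_Icc hs ht)).intervalIntegrable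
  have hamem : a ∈ Set.Icc a b := ⟨le_rfl, hab⟩
  have hlip : LipschitzOnWith (Real.toNNReal (C₁ + ∑ i, C i + C₂)) x' (Set.uIcc a b) := by
    rw [Set.uIcc_of_le hab]
    refine LipschitzOnWith.of_dist_le_mul fun t ht s hs => ?_
    rw [dist_eq_norm, hint t ht, hint s hs, add_sub_add_left_eq_sub,
      intervalIntegral.integral_interval_sub_left (hsub a hamem t ht) (hsub a hamem s hs),
      Real.dist_eq]
    refine intervalIntegral.norm_integral_le_of_norm_le_const_ae ?_
    filter_upwards [hbound] with r hr hmem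
    exact (hr (Set.uIcc_subset_Icc hs ht (Set.uIoc_subset_uIcc hmem))).trans
      (Real.le_coe_toNNReal _)
  exact hlip.absolutelyContinuousOnInterval

end

/-- The two conditions under which the error terms of the Lyapunov estimate are absorbed hold for
large times, since `q < 1` and `q + p < 3`. -/
theorem eventually_absorb {q p c β : ℝ} (hq0 : 0 < q) (hq : q < 1) (hp : p < 2) (hc : 0 < c)
    (hβ : 0 < β) : ∀ᶠ t : ℝ in atTop,
      6 * t ^ q ≤ c * t ∧ 2 * q ^ 2 * t ^ q * t ^ p ≤ c * β * t ^ 3 := by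
  have h1 := (tendsto_rpow_neg_atTop (show 0 < 1 - q by linarith)).eventually_le_const
    (show 0 < c / 6 by positivity)
  have h2 := (tendsto_rpow_neg_atTop (show 0 < 3 - (q + p) by linarith)).eventually_le_const
    (show 0 < c * β / (2 * q ^ 2) by positivity)
  filter_upwards [h1, h2, eventually_gt_atTop 0] with t h1 h2 ht
  constructor
  · rw [neg_sub, Real.rpow_sub_one ht.ne', div_le_iff₀ ht] at h1
    linarith
  · rw [neg_sub, Real.rpow_sub ht, Real.rpow_add ht, Real.rpow_ofNat, div_le_iff₀ (by positivity),
      div_mul_eq_mul_div, le_div_iff₀ (by positivity)] at h2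
    linarith

end MTRIGS

/-- For `p ∈ (0,2)`, `q ∈ (0,1)` with `q + 1 < p`, a trajectory solution `x`
of (MTRIGS), under (A3) and nonemptiness of `S(F(x(t)))`, for every `r ∈ [q, (q+1)/2]` the
integral `∫_{t₀}^∞ s^{2r−q} ‖ẋ(s)‖² ds` is finite. -/
theorem stmt_18
    {H : Type*} [NormedAddCommGroup H] [InnerProductSpace ℝ H] [CompleteSpace H]
    {m : ℕ} (hm : 0 < m) (f : Fin m → H → ℝ)
    (hconv : ∀ i, ConvexOn ℝ Set.univ (f i))
    (hdiff : ∀ i, Differentiable ℝ (f i))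
    (hlip : ∀ i, ∃ L : ℝ≥0, LipschitzWith L (gradient (f i)))
    (t₀ α β q p : ℝ) (ht₀ : 0 < t₀) (hα : 0 < α) (hβ : 0 < β)
    (hq : q ∈ Set.Ioo (0:ℝ) 1) (hp : p ∈ Set.Ioo (0:ℝ) 2) (hpq : q + 1 < p)
    (x x' x'' : ℝ → H)
    (hx : ∀ t ∈ Set.Ici t₀, HasDerivAt x (x' t) t)
    (hx'c : ContinuousOn x' (Set.Ici t₀))
    (hx''m : StronglyMeasurable x'')
    (hx'int : ∀ t ∈ Set.Ici t₀, x' t = x' t₀ + ∫ s in t₀..t, x'' s)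
    (hx'' : ∀ᵐ t ∂(volume.restrict (Set.Ici t₀)), HasDerivAt x' (x'' t) t)
    (hMTRIGS : ∀ᵐ t ∂(volume.restrict (Set.Ici t₀)),
      ((-(α / t ^ q)) • x' t ∈
        (fun g => g + (β / t ^ p) • x t + x'' t) ''
          (convexHull ℝ (Set.range fun i => gradient (f i) (x t)))) ∧
      (∀ w ∈ (fun g => g + (β / t ^ p) • x t + x'' t) ''
          (convexHull ℝ (Set.range fun i => gradient (f i) (x t))),
        ‖(α / t ^ q) • x' t‖ ≤ ‖w‖))
    (hS : ∀ t, t₀ ≤ t →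
      ∃ u : H, ∀ y : H, (⨆ i, (f i u - f i (x t))) ≤ ⨆ i, (f i y - f i (x t)))
    (hA3a : ∀ w : H,
      (∀ i, f i w ≤ f i (x t₀)
        + (β / (2 * t₀ ^ p) * ‖x t₀‖ ^ 2 + (1/2) * ‖x' t₀‖ ^ 2)) →
      ∃ u : H, (∀ i, f i u ≤ f i w) ∧ ¬ ∃ y : H, ∀ i, f i y < f i u)
    (hA3b : ∃ R : ℝ, 0 ≤ R ∧ ∀ y : H,
      ((∀ i, f i y ≤ f i (x t₀)
          + (β / (2 * t₀ ^ p) * ‖x t₀‖ ^ 2 + (1/2) * ‖x' t₀‖ ^ 2)) ∧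
        ¬ ∃ u : H, ∀ i, f i u < f i y) →
      ∀ ε : ℝ, 0 < ε → ∃ z' : H, (∀ i, f i z' = f i y) ∧ ‖z'‖ ≤ R + ε) :
    ∀ r ∈ Set.Icc q ((q + 1) / 2),
      (∫⁻ s in Set.Ici t₀, ENNReal.ofReal (s ^ (2 * r - q) * ‖x' s‖ ^ 2)) < ⊤ := by
  obtain ⟨hq0, hq1⟩ := hq
  obtain ⟨hp0, hp2⟩ := hp
  obtain ⟨R, hR, hA3b⟩ := hA3b
  have hgc : ∀ i, Continuous (gradient (f i)) := fun i => (hlip i).choose_spec.continuous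
  have hpos : ∀ t ∈ Set.Ici t₀, 0 < t := fun t ht => ht₀.trans_le ht
  have hdyn : ∀ᵐ t : ℝ, t ∈ Set.Ici t₀ →
      HasDerivAt x' (x'' t) t ∧ MTRIGS.Dyn f α β q p t (x t) (x' t) (x'' t) := by
    have h1 := (ae_restrict_iff' measurableSet_Ici).1 hx''
    have h2 := (ae_restrict_iff' measurableSet_Ici).1 hMTRIGS
    filter_upwards [h1, h2] with t h1 h2 hmem
    exact ⟨h1 hmem, MTRIGS.dyn_of_inclusion (hpos t hmem) hα (h2 hmem).1 (h2 hmem).2⟩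
  have hsub : ∀ a b : ℝ, t₀ ≤ a → Set.Icc a b ⊆ Set.Ici t₀ := fun a b ha t ht => ha.trans ht.1
  have hac₀ : ∀ b, t₀ ≤ b → AbsolutelyContinuousOnInterval x' t₀ b := fun b hb =>
    MTRIGS.ac_velocity hgc ht₀ hb (fun t ht => hx t ht.1) (hx'c.mono (hsub _ _ le_rfl)) hx''m
      (fun t ht => hx'int t ht.1) (hdyn.mono fun t ht hmem => (ht hmem.1).2)
  have hac : ∀ a b, t₀ ≤ a → a ≤ b → AbsolutelyContinuousOnInterval x' a b := by
    intro a b ha hab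
    refine (hac₀ b (ha.trans hab)).mono ?_
    rw [Set.uIcc_of_le hab, Set.uIcc_of_le (ha.trans hab)]
    exact Set.Icc_subset_Icc_left ha
  have hφc : ContinuousOn (fun t => ‖x' t‖ ^ 2 / t ^ q) (Set.Ici t₀) :=
    (hx'c.norm.pow 2).div (continuousOn_id.rpow_const fun t ht => Or.inl (hpos t ht).ne')
      fun t ht => (Real.rpow_pos_of_pos (hpos t ht) q).ne'
  have hφ₁c : ContinuousOn (fun t => t * ‖x' t‖ ^ 2) (Set.Ici t₀) :=
    continuousOn_id.mul (hx'c.norm.pow 2)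
  obtain ⟨J, hJ⟩ := MTRIGS.exists_primitive hφc
  obtain ⟨J₁, hJ₁⟩ := MTRIGS.exists_primitive hφ₁c
  have hJac : ∀ a b, t₀ ≤ a → a ≤ b → AbsolutelyContinuousOnInterval J a b := fun a b ha hab =>
    MTRIGS.ac_of_hasDerivAt hab (fun t ht => hJ t (hsub _ _ ha ht)) (hφc.mono (hsub _ _ ha))
  have hJ₁ac : ∀ a b, t₀ ≤ a → a ≤ b → AbsolutelyContinuousOnInterval J₁ a b :=
    fun a b ha hab =>
      MTRIGS.ac_of_hasDerivAt hab (fun t ht => hJ₁ t (hsub _ _ ha ht)) (hφ₁c.mono (hsub _ _ ha))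
  have hdecay : ∀ a b, t₀ ≤ a → a ≤ b → ∀ i, MTRIGS.energy (f i) β p x x' b + α * J b
      ≤ MTRIGS.energy (f i) β p x x' a + α * J a := fun a b ha hab i =>
    MTRIGS.energy_decay hdiff hβ hp0 hgc (ht₀.trans_le ha) hab
      (fun t ht => hx t (hsub _ _ ha ht)) (hx'c.mono (hsub _ _ ha)) (hac a b ha hab)
      (hdyn.mono fun t ht hmem => ht (hsub _ _ ha hmem)) (fun t ht => hJ t (hsub _ _ ha ht))
      (hJac a b ha hab) i
  have hJmono : ∀ b, t₀ ≤ b → J t₀ ≤ J b := by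
    intro b hb
    refine monotoneOn_of_deriv_nonneg (convex_Icc t₀ b)
      (fun t ht => (hJ t ht.1).continuousAt.continuousWithinAt)
      (fun t ht => (hJ t (interior_subset ht).1).differentiableAt.differentiableWithinAt)
      (fun t ht => ?_) ⟨le_rfl, hb⟩ ⟨hb, le_rfl⟩ hb
    have ht' := hpos t (interior_subset ht).1
    rw [(hJ t (interior_subset ht).1).deriv]
    positivity
  -- Comparison points: `z` lies in a fixed ball and `f i z ≤ f i (x b)` for all `i`.
  have hz : ∀ b, t₀ ≤ b → ∃ z : H, ‖z‖ ≤ R + 1 ∧ ∀ i, f i z ≤ f i (x b) := by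
    intro b hb
    have hlev : ∀ i, f i (x b) ≤ f i (x t₀)
        + (β / (2 * t₀ ^ p) * ‖x t₀‖ ^ 2 + (1/2) * ‖x' t₀‖ ^ 2) := by
      intro i
      have h1 := hdecay t₀ b le_rfl hb i
      have h2 := mul_le_mul_of_nonneg_left (hJmono b hb) hα.le
      have hb0 := hpos b hb
      have h3 : 0 ≤ β / 2 * b ^ (-p) * ‖x b‖ ^ 2 := by positivity
      have h4 : β / (2 * t₀ ^ p) = β / 2 * t₀ ^ (-p) := by
        rw [Real.rpow_neg ht₀.le]; field_simp
      simp only [MTRIGS.energy] at h1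
      rw [h4]
      nlinarith [sq_nonneg ‖x' b‖]
    obtain ⟨u, hu, huw⟩ := hA3a (x b) hlev
    obtain ⟨z, hz, hzn⟩ := hA3b u ⟨fun i => (hu i).trans (hlev i), huw⟩ 1 one_pos
    exact ⟨z, hzn, fun i => (hz i).trans_le (hu i)⟩
  have hc0 : 0 < α / (q + 1) := by positivity
  obtain ⟨t₁, ht₁⟩ := eventually_atTop.1
    ((MTRIGS.eventually_absorb hq0 hq1 hp2 hc0 hβ).and (eventually_ge_atTop t₀))
  have ht₀₁ : t₀ ≤ t₁ := (ht₁ t₁ le_rfl).2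
  have ht₁0 : 0 < t₁ := ht₀.trans_le ht₀₁
  obtain ⟨K, hK⟩ : ∃ K, ∀ b, t₁ ≤ b → J₁ b - J₁ t₁ ≤ K := by
    let i₀ : Fin m := ⟨0, hm⟩
    set Y := ‖x t₁‖ + (R + 1) with hY
    set D := MTRIGS.energy (f i₀) β p x x' t₁ - f i₀ (x t₁) + ‖gradient (f i₀) (x t₁)‖ * Y with hD
    refine ⟨(t₁ ^ (q + 1) * (1 / (q + 1) * D) + α / 2 * Y ^ 2 + t₁ ^ q * (‖x' t₁‖ * Y)
        + β / 2 * (R + 1) ^ 2 / (p - q - 1) * t₁ ^ (q + 1 - p)) / (α / (q + 1) / 2),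
      fun b hb => ?_⟩
    obtain ⟨z, hzn, hzf⟩ := hz b (ht₀₁.trans hb)
    have hlow : ∀ t ∈ Set.Icc t₁ b, ∀ i, 1 / 2 * ‖x' b‖ ^ 2 + α * (J b - J t)
        ≤ MTRIGS.energy (f i) β p x x' t - f i z := by
      intro t ht i
      have h1 := hdecay t b (ht₀₁.trans ht.1) ht.2 i
      have hb0 := ht₁0.trans_le hb
      have h3 : 0 ≤ β / 2 * b ^ (-p) * ‖x b‖ ^ 2 := by positivity
      have h4 := hzf i
      rw [MTRIGS.energy] at h1
      linarith
    have hYz : ‖x t₁ - z‖ ≤ Y := (norm_sub_le _ _).trans (by rw [hY]; gcongr)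
    have hmain := MTRIGS.lyapunov_estimate (c := α / (q + 1)) (Z := (R + 1) ^ 2)
      hdiff hconv hα hβ hq0 hpq ht₁0 hb
      (fun t ht => hx t (hsub _ _ ht₀₁ ht)) (hx'c.mono (hsub _ _ ht₀₁)) (hac _ _ ht₀₁ hb)
      (hdyn.mono fun t ht hmem => ht (hsub _ _ ht₀₁ hmem)) (fun t ht => hJ t (hsub _ _ ht₀₁ ht))
      (hJac _ _ ht₀₁ hb) (fun t ht => hJ₁ t (hsub _ _ ht₀₁ ht)) (hJ₁ac _ _ ht₀₁ hb)
      (div_mul_cancel₀ _ (by positivity)) (by gcongr) hlow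
      (fun t ht => (ht₁ t ht.1).1.1) (fun t ht => (ht₁ t ht.1).1.2)
    have hDz : 1 / 2 * ‖x' b‖ ^ 2 + α * (J b - J t₁) ≤ D := by
      have h1 := hlow t₁ ⟨le_rfl, hb⟩ i₀
      have h2 := MTRIGS.gradient_inequality (hdiff i₀) (hconv i₀) (x t₁) z
      have h3 := (abs_le.1 (abs_real_inner_le_norm (gradient (f i₀) (x t₁)) (x t₁ - z))).2
      rw [← neg_sub (x t₁) z, inner_neg_right] at h2
      have h4 := mul_le_mul_of_nonneg_left hYz (norm_nonneg (gradient (f i₀) (x t₁)))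
      rw [hD]
      linarith
    have hin : ⟪x' t₁, x t₁ - z⟫_ℝ ≤ ‖x' t₁‖ * Y :=
      (real_inner_le_norm _ _).trans (by gcongr)
    rw [le_div_iff₀ (by positivity), mul_comm]
    refine hmain.trans ?_
    gcongr
  intro r hr
  have hint₁ : IntegrableOn (fun t => t * ‖x' t‖ ^ 2) (Set.Ioi t₁) := by
    have hii : ∀ b, IntegrableOn (fun t => t * ‖x' t‖ ^ 2) (Set.Icc t₁ b) := fun b =>
      (hφ₁c.mono (hsub _ _ ht₀₁)).integrableOn_compact isCompact_Icc
    refine integrableOn_Ioi_of_intervalIntegral_norm_bounded (b := id) (l := atTop) K t₁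
      (fun b => (hii b).mono_set Set.Ioc_subset_Icc_self) tendsto_id ?_
    filter_upwards [eventually_ge_atTop t₁] with b hb
    have hcongr : ∫ t in t₁..b, ‖t * ‖x' t‖ ^ 2‖ = ∫ t in t₁..b, t * ‖x' t‖ ^ 2 := by
      refine intervalIntegral.integral_congr fun t ht => ?_
      rw [Set.uIcc_of_le hb] at ht
      have := ht₁0.trans_le ht.1
      exact Real.norm_of_nonneg (by positivity)
    rw [id, hcongr, intervalIntegral.integral_eq_sub_of_hasDerivAt (f := J₁)]
    · exact hK b hb
    · intro t ht
      rw [Set.uIcc_of_le hb] at ht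
      exact hJ₁ t (hsub _ _ ht₀₁ ht)
    · rw [intervalIntegrable_iff_integrableOn_Icc_of_le hb]
      exact hii b
  have hint : IntegrableOn (fun t => t * ‖x' t‖ ^ 2) (Set.Ici t₀) := by
    rw [← Set.Icc_union_Ioi_eq_Ici ht₀₁]
    exact ((hφ₁c.mono (hsub _ _ le_rfl)).integrableOn_compact isCompact_Icc).union hint₁
  -- As `2 r - q ≤ 1`, the weight `s ^ (2 r - q)` is dominated by a multiple of `s` on `[t₀, ∞)`.
  refine lt_of_le_of_lt ?_ (hint.const_mul (t₀ ^ (2 * r - q - 1))).lintegral_lt_top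
  refine setLIntegral_mono' measurableSet_Ici fun s hs => ENNReal.ofReal_le_ofReal ?_
  have hs0 := hpos s hs
  have h1 : s ^ (2 * r - q - 1) ≤ t₀ ^ (2 * r - q - 1) :=
    Real.rpow_le_rpow_of_nonpos ht₀ hs (by linarith [hr.2])
  rw [Real.rpow_sub_one hs0.ne', div_le_iff₀ hs0] at h1
  nlinarith [mul_le_mul_of_nonneg_right h1 (sq_nonneg ‖x' s‖)]
end

section
/- Assume either (p ∈ (0,2), q ∈ (0,1) and q + 1 < p) or (p = 2, q ∈ (0,1) and β ≥ q(1−q)). Let x be a trajectory solution of (MTRIGS) that is bounded on [t₀,∞); assume S(F(x(t))) ≠ ∅ for every t ≥ t₀ and assume (A3). Then for each i = 1,…,m the limit f_i^∞ := lim_{t→∞} f_i(x(t)) exists, and there exists x∞ ∈ H such that x(t) converges weakly to x∞ as t → ∞ (i.e. ⟨x(t), y⟩ → ⟨x∞, y⟩ for every y ∈ H), x∞ is weakly Pareto optimal, and f_i(x∞) ≤ f_i^∞ for every i = 1,…,m. -/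
/-!
Write `v = ‖x'‖²`, and let `W i` be the energy `f i (x) + β / 2 * t ^ (-p) * ‖x‖² + ‖x'‖² / 2`.
The minimal norm condition says that the driving vector `g` in the convex hull of the gradients is
the one with the largest inner product with `x'` (`exists_of_minimal_norm`), so that every `W i`
satisfies `(W i)' ≤ -α * t ^ (-q) * v`. As `x` is bounded, each `W i` decreases to a limit `w i`.
Both alternatives on the parameters imply `q + 1 < p`, which makes the Tikhonov term
`β * t ^ (-p) * x` negligible against the damping.

Let `S = {z | ∀ i, f i z ≤ w i}`. By weak lower semicontinuity `S` contains every weak cluster point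
of the bounded trajectory; in particular it is nonempty. If `f i z + δ ≤ w i` for all `i`, with
`δ ≥ 0`, then `h = ‖x - z‖² / 2` satisfies, by the gradient inequality,
`h'' + α * t ^ (-q) * h' ≤ 3 / 2 * v - V - δ + C * t ^ (-p)`, where `V = min (W i - w i) ≥ 0` and
`V' ≤ -α * t ^ (-q) * v`. Three consequences are drawn:

* combining the inequality with the decrease of `t ^ (2 * q) * V` gives `∫ t ^ q * v < ∞`
  (`integral_bounded`);
* hence `v → 0`, since `v'` is bounded above (`tendsto_zero_of_integral_bounded`), so that
  `f i (x t) → w i`;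
* multiplying the inequality by `t ^ q` and integrating shows that `δ = 0` and that `h` converges
  (`tendsto_of_integral_bounded`).

Opial's lemma (`opial`) then yields weak convergence to a point of `S`, and that point is weakly
Pareto optimal because a point strictly better in all objectives would allow some `δ > 0`.

The velocity is only absolutely continuous, so the differential inequalities hold almost everywhere;
the predicate `ACD` and its calculus rules handle this, including the minimum `V` of energies.
-/

open Filter Topology MeasureTheory
open scoped NNReal InnerProductSpace

/-! ### Locally absolutely continuous functions on a half-line -/

/-- `φ` is locally absolutely continuous on `[a, ∞)`, with almost everywhere derivative `φ'`. -/
def ACD {E : Type*} [NormedAddCommGroup E] [NormedSpace ℝ E] (a : ℝ) (φ φ' : ℝ → E) : Prop :=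
  (∀ b, a ≤ b → AbsolutelyContinuousOnInterval φ a b) ∧
    ∀ᵐ t ∂(volume.restrict (Set.Ici a)), HasDerivAt φ (φ' t) t

theorem AbsolutelyContinuousOnInterval.norm' {E : Type*} [NormedAddCommGroup E] {a b : ℝ}
    {φ : ℝ → E} (h : AbsolutelyContinuousOnInterval φ a b) :
    AbsolutelyContinuousOnInterval (fun t => ‖φ t‖) a b := by
  refine squeeze_zero (fun t => Finset.sum_nonneg fun i _ => dist_nonneg) (fun t => ?_) h
  exact Finset.sum_le_sum fun i _ => by
    simpa only [dist_eq_norm (φ _)] using dist_norm_norm_le _ _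

namespace ACD

variable {E : Type*} [NormedAddCommGroup E] [NormedSpace ℝ E]
  {H : Type*} [NormedAddCommGroup H] [InnerProductSpace ℝ H]

theorem add {a : ℝ} {φ φ' ψ ψ' : ℝ → E} (h₁ : ACD a φ φ') (h₂ : ACD a ψ ψ') :
    ACD a (fun t => φ t + ψ t) (fun t => φ' t + ψ' t) := by
  refine ⟨fun b hb => (h₁.1 b hb).add (h₂.1 b hb), ?_⟩
  filter_upwards [h₁.2, h₂.2] with t h1 h2 using h1.add h2

theorem sub {a : ℝ} {φ φ' ψ ψ' : ℝ → E} (h₁ : ACD a φ φ') (h₂ : ACD a ψ ψ') :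
    ACD a (fun t => φ t - ψ t) (fun t => φ' t - ψ' t) := by
  refine ⟨fun b hb => (h₁.1 b hb).sub (h₂.1 b hb), ?_⟩
  filter_upwards [h₁.2, h₂.2] with t h1 h2 using h1.sub h2

theorem mul {a : ℝ} {φ φ' ψ ψ' : ℝ → ℝ} (h₁ : ACD a φ φ') (h₂ : ACD a ψ ψ') :
    ACD a (fun t => φ t * ψ t) (fun t => φ' t * ψ t + φ t * ψ' t) := by
  refine ⟨fun b hb => (h₁.1 b hb).mul (h₂.1 b hb), ?_⟩
  filter_upwards [h₁.2, h₂.2] with t h1 h2 using h1.mul h2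

theorem const_mul {a : ℝ} {φ φ' : ℝ → ℝ} (c : ℝ) (h₁ : ACD a φ φ') :
    ACD a (fun t => c * φ t) (fun t => c * φ' t) := by
  refine ⟨fun b hb => (h₁.1 b hb).const_mul c, ?_⟩
  filter_upwards [h₁.2] with t h1 using h1.const_mul c

theorem mono {a a' : ℝ} (ha : a ≤ a') {φ φ' : ℝ → E} (h : ACD a φ φ') : ACD a' φ φ' := by
  refine ⟨fun b hb => (h.1 b (ha.trans hb)).mono ?_, ?_⟩
  · rw [Set.uIcc_of_le hb, Set.uIcc_of_le (ha.trans hb)]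
    exact Set.Icc_subset_Icc_left ha
  · exact ae_restrict_of_ae_restrict_of_subset (Set.Ici_subset_Ici.2 ha) h.2

theorem congr_deriv {a : ℝ} {φ φ' ψ' : ℝ → E} (h : ACD a φ φ')
    (he : ∀ t, a ≤ t → φ' t = ψ' t) : ACD a φ ψ' := by
  refine ⟨h.1, ?_⟩
  filter_upwards [h.2, ae_restrict_mem measurableSet_Ici] with t h1 h2
  rw [← he t h2]; exact h1

/-- A `C¹` function is locally absolutely continuous. -/
theorem of_hasDerivAt {a : ℝ} {φ φ' : ℝ → E} (h : ∀ t, a ≤ t → HasDerivAt φ (φ' t) t)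
    (hc : ContinuousOn φ' (Set.Ici a)) : ACD a φ φ' := by
  refine ⟨fun b hb => ?_, ?_⟩
  · obtain ⟨C, hC⟩ := isCompact_Icc.exists_bound_of_continuousOn
      (hc.mono (Set.Icc_subset_Ici_self : Set.Icc a b ⊆ _))
    have hL : LipschitzOnWith C.toNNReal φ (Set.uIcc a b) := by
      rw [Set.uIcc_of_le hb]
      refine (convex_Icc a b).lipschitzOnWith_of_nnnorm_hasDerivWithin_le
        (f' := φ') (fun t ht => (h t ht.1).hasDerivWithinAt) fun t ht => ?_
      rw [← NNReal.coe_le_coe, coe_nnnorm]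
      exact (hC t ht).trans (Real.le_coe_toNNReal C)
    exact hL.absolutelyContinuousOnInterval
  · filter_upwards [ae_restrict_mem measurableSet_Ici] with t ht using h t ht

theorem inner {a : ℝ} {φ φ' ψ ψ' : ℝ → H} (h₁ : ACD a φ φ') (h₂ : ACD a ψ ψ') :
    ACD a (fun t => ⟪φ t, ψ t⟫_ℝ) (fun t => ⟪φ t, ψ' t⟫_ℝ + ⟪φ' t, ψ t⟫_ℝ) := by
  refine ⟨fun b hb => ?_, ?_⟩
  · have hs := ((h₁.1 b hb).add (h₂.1 b hb)).norm'
    have h1 := (h₁.1 b hb).norm'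
    have h2 := (h₂.1 b hb).norm'
    -- polarization reduces the inner product to squares of norms
    have := (((hs.mul hs).sub (h1.mul h1)).sub (h2.mul h2)).const_mul (1 / 2)
    refine cast ?_ this
    congr 1
    funext t
    simp only [Pi.sub_apply, Pi.mul_apply, Pi.add_apply]
    have := norm_add_mul_self_real (φ t) (ψ t)
    linarith
  · filter_upwards [h₁.2, h₂.2] with t h1 h2 using h1.inner ℝ h2

theorem antitoneOn {a : ℝ} {φ φ' : ℝ → ℝ} (h : ACD a φ φ')
    (hneg : ∀ᵐ t ∂(volume.restrict (Set.Ici a)), φ' t ≤ 0) : AntitoneOn φ (Set.Ici a) := by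
  intro s hs t ht hst
  have hac := ((h.mono hs).1 t hst).integral_deriv_eq_sub
  have : ∫ u in s..t, deriv φ u ≤ 0 := by
    have h0 : ∀ᵐ u ∂(volume.restrict (Set.Icc s t)), deriv φ u ≤ 0 := by
      refine ae_restrict_of_ae_restrict_of_subset
        (Set.Icc_subset_Ici_self.trans (Set.Ici_subset_Ici.2 hs)) ?_
      filter_upwards [h.2, hneg] with u h1 h2
      rw [h1.deriv]; exact h2
    have := intervalIntegral.integral_nonneg_of_ae_restrict (f := fun u => - deriv φ u) hst
      (by filter_upwards [h0] with u hu using by simpa using hu)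
    rw [intervalIntegral.integral_neg] at this
    linarith
  linarith

/-- The pointwise minimum of finitely many locally absolutely continuous functions is locally
absolutely continuous, and inherits a common upper bound on the derivatives: where everything is
differentiable, the minimum has the same derivative as any function attaining it. -/
theorem iInf {ι : Type*} [Fintype ι] [Nonempty ι] {a : ℝ} {φ φ' : ι → ℝ → ℝ} {k : ℝ → ℝ}
    (h : ∀ i, ACD a (φ i) (φ' i))
    (hk : ∀ i, ∀ᵐ t ∂(volume.restrict (Set.Ici a)), φ' i t ≤ k t) :
    ∃ V' : ℝ → ℝ, ACD a (fun t => ⨅ i, φ i t) V' ∧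
      ∀ᵐ t ∂(volume.restrict (Set.Ici a)), V' t ≤ k t := by
  set V : ℝ → ℝ := fun t => ⨅ i, φ i t with hV
  have hle : ∀ t i, V t ≤ φ i t := fun t i => ciInf_le (Set.finite_range _).bddBelow i
  have hex : ∀ t, ∃ i, φ i t = V t := fun t => exists_eq_ciInf_of_finite
  have hac : ∀ b, a ≤ b → AbsolutelyContinuousOnInterval V a b := by
    intro b hb
    have hsum := tendsto_finsetSum Finset.univ fun i _ => (h i).1 b hb
    rw [Finset.sum_const_zero] at hsum
    refine squeeze_zero (fun t => Finset.sum_nonneg fun i _ => dist_nonneg) (fun t => ?_) hsum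
    rw [Finset.sum_comm]
    refine Finset.sum_le_sum fun n _ => ?_
    have key : ∀ s t, V s - V t ≤ ∑ i, dist (φ i s) (φ i t) := by
      intro s t
      obtain ⟨i, hi⟩ := hex t
      calc V s - V t ≤ φ i s - φ i t := by rw [hi]; linarith [hle s i]
        _ ≤ dist (φ i s) (φ i t) := by rw [Real.dist_eq]; exact le_abs_self _
        _ ≤ _ := Finset.single_le_sum (f := fun i => dist (φ i s) (φ i t))
            (fun i _ => dist_nonneg) (Finset.mem_univ i)
    rw [Real.dist_eq, abs_sub_le_iff]
    refine ⟨key _ _, (key _ _).trans (le_of_eq ?_)⟩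
    exact Finset.sum_congr rfl fun i _ => dist_comm _ _
  have hd : ∀ᵐ t ∂(volume.restrict (Set.Ici a)), DifferentiableAt ℝ V t := by
    rw [ae_restrict_iff' measurableSet_Ici]
    have : ∀ n : ℕ, ∀ᵐ t : ℝ, t ∈ Set.uIcc a (a + n) → DifferentiableAt ℝ V t :=
      fun n => (hac (a + n) (by simp)).ae_differentiableAt
    filter_upwards [ae_all_iff.2 this] with t ht hta
    obtain ⟨n, hn⟩ := exists_nat_ge (t - a)
    exact ht n (by rw [Set.uIcc_of_le (by simp)]; exact ⟨hta, by linarith⟩)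
  refine ⟨deriv V, ⟨hac, ?_⟩, ?_⟩
  · filter_upwards [hd] with t ht using ht.hasDerivAt
  · filter_upwards [hd, ae_all_iff.2 hk, ae_all_iff.2 fun i => (h i).2] with t h1 h2 h3
    obtain ⟨i, hi⟩ := hex t
    -- `V - φ i` has a maximum at `t`
    have hmax : IsLocalMax (fun s => V s - φ i s) t :=
      Filter.Eventually.of_forall fun s => by
        show V s - φ i s ≤ V t - φ i t
        rw [hi]; linarith [hle s i]
    have := hmax.hasDerivAt_eq_zero (h1.hasDerivAt.sub (h3 i))
    linarith [h2 i]

end ACD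

/-! ### Scalar damped differential inequalities -/

theorem hasDerivAt_rpow_of_one_le {a t : ℝ} (ha : 1 ≤ a) (ht : a ≤ t) (r : ℝ) :
    HasDerivAt (fun s : ℝ => s ^ r) (r * t ^ (r - 1)) t :=
  Real.hasDerivAt_rpow_const (Or.inl (by linarith))

theorem continuousOn_rpow_Ici {a : ℝ} (ha : 0 < a) (r : ℝ) :
    ContinuousOn (fun s : ℝ => s ^ r) (Set.Ici a) :=
  continuousOn_id.rpow_const fun _ hs => Or.inl (ne_of_gt (lt_of_lt_of_le ha hs))

theorem acd_rpow {a : ℝ} (ha : 1 ≤ a) (r : ℝ) :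
    ACD a (fun s : ℝ => s ^ r) (fun t => r * t ^ (r - 1)) :=
  ACD.of_hasDerivAt (fun _ ht => hasDerivAt_rpow_of_one_le ha ht r)
    (continuousOn_const.mul (continuousOn_rpow_Ici (by linarith) _))

/-- The function `t ^ r * h' + α * t ^ (r - q) * h - r * t ^ (r - 1) * h` has derivative
`t ^ r * (h'' + α * t ^ (-q) * h')` up to lower-order terms in `h` alone; these are integrable when
`h` is bounded and `r ≤ q < 1`. -/
theorem acd_weighted {a α q r : ℝ} (ha : 1 ≤ a) {h h1 h2 : ℝ → ℝ}
    (H1 : ACD a h h1) (H2 : ACD a h1 h2) :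
    ACD a (fun t => t ^ r * h1 t + α * (t ^ (r - q) * h t) - r * (t ^ (r - 1) * h t))
      (fun t => t ^ r * (h2 t + α * t ^ (-q) * h1 t) +
        (α * ((r - q) * t ^ (r - q - 1)) - r * ((r - 1) * t ^ (r - 2))) * h t) := by
  refine ((((acd_rpow ha r).mul H2).add (((acd_rpow ha (r - q)).mul H1).const_mul α)).sub
    (((acd_rpow ha (r - 1)).mul H1).const_mul r)).congr_deriv fun t ht => ?_
  have ht0 : 0 < t := by linarith
  have e1 : t ^ (r - q) = t ^ r * t ^ (-q) := by rw [← Real.rpow_add ht0]; ring_nf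
  have e2 : t ^ (r - 1 - 1) = t ^ (r - 2) := by ring_nf
  rw [e1, e2]; ring

/-- A nonnegative function cannot have a derivative below `- t ^ (-r)`, `r < 1`, from some time
on, because `t ^ (-r)` is not integrable at infinity. -/
theorem exists_ge_deriv_ge {a r : ℝ} (ha : 1 ≤ a) (hr : r < 1) {h h1 : ℝ → ℝ}
    (hd : ∀ t, a ≤ t → HasDerivAt h (h1 t) t) (h0 : ∀ t, a ≤ t → 0 ≤ h t) (t : ℝ) (ht : a ≤ t) :
    ∃ T, t ≤ T ∧ -1 ≤ T ^ r * h1 T := by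
  by_contra! hcon
  have hanti : AntitoneOn (fun s => h s + s ^ (1 - r) / (1 - r)) (Set.Ici t) := by
    have hder : ∀ s ∈ Set.Ici t, HasDerivAt (fun s => h s + s ^ (1 - r) / (1 - r))
        (h1 s + (1 - r) * s ^ (1 - r - 1) / (1 - r)) s := fun s hs =>
      (hd s (ht.trans hs)).add ((hasDerivAt_rpow_of_one_le ha (ht.trans hs) _).div_const _)
    refine antitoneOn_of_deriv_nonpos (convex_Ici t)
      (fun s hs => (hder s hs).continuousAt.continuousWithinAt)
      (fun s hs => (hder s (interior_subset hs)).differentiableAt.differentiableWithinAt)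
      fun s hs => ?_
    have hs' : t ≤ s := interior_subset hs
    rw [(hder s hs').deriv]
    have hs0 : 0 < s := by linarith
    have h3 := hcon s hs'
    have e : (1 - r) * s ^ (1 - r - 1) / (1 - r) = (s ^ r)⁻¹ := by
      rw [mul_div_assoc, mul_div_cancel₀ _ (by linarith), ← Real.rpow_neg hs0.le]; ring_nf
    rw [e]
    have hp : 0 < s ^ r := Real.rpow_pos_of_pos hs0 r
    have : s ^ r * (h1 s + (s ^ r)⁻¹) ≤ 0 := by
      rw [mul_add, mul_inv_cancel₀ hp.ne']; linarith
    by_contra hc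
    push Not at hc
    linarith [mul_pos hp hc]
  have hlim : Tendsto (fun s : ℝ => s ^ (1 - r) / (1 - r)) atTop atTop :=
    (tendsto_rpow_atTop (by linarith)).atTop_div_const (by linarith)
  obtain ⟨s, hs1, hs2⟩ := ((hlim.eventually_gt_atTop (h t + t ^ (1 - r) / (1 - r))).and
    (eventually_ge_atTop t)).exists
  have := hanti Set.self_mem_Ici (Set.mem_Ici.2 hs2) hs2
  simp only at this
  linarith [h0 s (ht.trans hs2)]

/-- If `α h + t ^ q h'` is eventually below `α c`, then `limsup h ≤ c`: multiply by the integrating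
factor `exp (α t ^ (1 - q) / (1 - q))`, which tends to infinity. -/
theorem eventually_le_of_first_order {a α q c η : ℝ} (ha : 1 ≤ a) (hα : 0 < α) (hq : q < 1)
    (hη : 0 < η) {h h1 : ℝ → ℝ} (hd : ∀ t, a ≤ t → HasDerivAt h (h1 t) t)
    (hw : ∀ᶠ t in atTop, t ^ q * h1 t + α * h t ≤ α * c) : ∀ᶠ t in atTop, h t ≤ c + η := by
  obtain ⟨T0, hT0⟩ := eventually_atTop.1 hw
  set T := max a T0
  have hTa : a ≤ T := le_max_left _ _
  set A : ℝ → ℝ := fun t => α * (t ^ (1 - q) / (1 - q)) with hA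
  have hAd : ∀ t, T ≤ t → HasDerivAt A (α * t ^ (-q)) t := by
    intro t ht
    have := ((hasDerivAt_rpow_of_one_le ha (hTa.trans ht) (1 - q)).div_const (1 - q)).const_mul α
    refine this.congr_deriv ?_
    rw [mul_div_assoc, mul_div_cancel₀ _ (by linarith)]; ring_nf
  have hAlim : Tendsto A atTop atTop :=
    ((tendsto_rpow_atTop (by linarith)).atTop_div_const (by linarith)).const_mul_atTop hα
  have hanti : AntitoneOn (fun s => Real.exp (A s) * (h s - c)) (Set.Ici T) := by
    have hder : ∀ s ∈ Set.Ici T, HasDerivAt (fun s => Real.exp (A s) * (h s - c))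
        (Real.exp (A s) * (α * s ^ (-q)) * (h s - c) + Real.exp (A s) * h1 s) s := fun s hs =>
      (hAd s hs).exp.mul ((hd s (hTa.trans hs)).sub_const c)
    refine antitoneOn_of_deriv_nonpos (convex_Ici T)
      (fun s hs => (hder s hs).continuousAt.continuousWithinAt)
      (fun s hs => (hder s (interior_subset hs)).differentiableAt.differentiableWithinAt)
      fun s hs => ?_
    have hs' : T ≤ s := interior_subset hs
    have hs0 : 0 < s := by linarith
    rw [(hder s hs').deriv]
    have h3 := hT0 s ((le_max_right _ _).trans hs')
    have e : s ^ (-q) * s ^ q = 1 := by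
      rw [← Real.rpow_add hs0]; simp
    have e2 : Real.exp (A s) * (α * s ^ (-q)) * (h s - c) + Real.exp (A s) * h1 s =
        Real.exp (A s) * s ^ (-q) * (s ^ q * h1 s + α * h s - α * c) := by
      linear_combination (-(Real.exp (A s) * h1 s)) * e
    rw [e2]
    exact mul_nonpos_of_nonneg_of_nonpos (by positivity) (by linarith)
  set D := Real.exp (A T) * (h T - c)
  have hsmall : ∀ᶠ t in atTop, D * Real.exp (-(A t)) < η := by
    have : Tendsto (fun t => D * Real.exp (-(A t))) atTop (𝓝 (D * 0)) :=
      (Real.tendsto_exp_neg_atTop_nhds_zero.comp hAlim).const_mul D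
    rw [mul_zero] at this
    exact this.eventually_lt_const hη
  filter_upwards [hsmall, eventually_ge_atTop T] with t h1 h2
  have h3 : Real.exp (A t) * (h t - c) ≤ D := hanti Set.self_mem_Ici (Set.mem_Ici.2 h2) h2
  have h4 : h t - c = Real.exp (A t) * (h t - c) * Real.exp (-(A t)) := by
    rw [Real.exp_neg]; field_simp
  have h5 : Real.exp (A t) * (h t - c) * Real.exp (-(A t)) ≤ D * Real.exp (-(A t)) :=
    mul_le_mul_of_nonneg_right h3 (Real.exp_pos _).le
  linarith

theorem tendsto_of_first_order {a α q L : ℝ} (ha : 1 ≤ a) (hα : 0 < α) (hq : q < 1)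
    {h h1 : ℝ → ℝ} (hd : ∀ t, a ≤ t → HasDerivAt h (h1 t) t)
    (hw : Tendsto (fun t => t ^ q * h1 t + α * h t) atTop (𝓝 L)) :
    Tendsto h atTop (𝓝 (L / α)) := by
  have e : ∀ s, α * (L / α + s) = L + α * s := fun s => by field_simp
  rw [Metric.tendsto_nhds]
  intro ε hε
  have hu := eventually_le_of_first_order (c := L / α + ε / 3) (η := ε / 3) ha hα hq (by linarith)
    hd ((hw.eventually_lt_const (u := L + α * (ε / 3)) (by linarith [mul_pos hα hε])).mono
      fun t ht => by rw [e]; exact ht.le)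
  have hl := eventually_le_of_first_order (h := fun t => -h t) (h1 := fun t => -h1 t)
    (c := -(L / α) + ε / 3) (η := ε / 3) ha hα hq (by linarith)
    (fun t ht => (hd t ht).neg)
    ((hw.eventually_const_lt (u := L - α * (ε / 3)) (by linarith [mul_pos hα hε])).mono
      fun t ht => by
        have := e (-(ε / 3))
        linarith)
  filter_upwards [hu, hl] with t h1 h2
  rw [Real.dist_eq, abs_lt]
  constructor <;> linarith

/-- An antitone function on a half-line that is bounded below converges. -/
theorem exists_tendsto_of_antitoneOn {a m : ℝ} {φ : ℝ → ℝ} (h : AntitoneOn φ (Set.Ici a))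
    (hb : ∀ t, a ≤ t → m ≤ φ t) :
    ∃ L, Tendsto φ atTop (𝓝 L) ∧ ∀ t, a ≤ t → L ≤ φ t := by
  have hanti : Antitone fun t => φ (max a t) := fun s t hst =>
    h (Set.mem_Ici.2 (le_max_left _ _)) (Set.mem_Ici.2 (le_max_left _ _)) (max_le_max_left a hst)
  have hlim := tendsto_atTop_ciInf hanti ⟨m, by
    rintro _ ⟨t, rfl⟩; exact hb _ (le_max_left _ _)⟩
  have hlim' : Tendsto φ atTop (𝓝 (⨅ t, φ (max a t))) :=
    hlim.congr' (by
      filter_upwards [eventually_ge_atTop a] with t ht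
      rw [max_eq_right ht])
  refine ⟨_, hlim', fun t ht => le_of_tendsto hlim' ?_⟩
  filter_upwards [eventually_ge_atTop t] with s hs using h ht (Set.mem_Ici.2 (ht.trans hs)) hs

theorem acd_integral {a : ℝ} {k : ℝ → ℝ} (hk : ContinuousOn k (Set.Ici a)) :
    ACD a (fun t => ∫ s in a..t, k s) k := by
  have hint : ∀ b, a ≤ b → IntervalIntegrable k volume a b := fun b hb =>
    (hk.mono (by rw [Set.uIcc_of_le hb]; exact Set.Icc_subset_Ici_self)).intervalIntegrable
  refine ⟨fun b hb => (hint b hb).absolutelyContinuousOnInterval_intervalIntegral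
    Set.left_mem_uIcc, ?_⟩
  rw [← restrict_Ioi_eq_restrict_Ici]
  filter_upwards [ae_restrict_mem measurableSet_Ioi] with t ht
  have hn : Set.Ioi a ∈ 𝓝 t := Ioi_mem_nhds ht
  refine intervalIntegral.integral_hasDerivAt_right (hint t (le_of_lt ht)) ?_ ?_
  · exact (hk.mono Set.Ioi_subset_Ici_self).stronglyMeasurableAtFilter isOpen_Ioi t ht
  · exact (hk.mono Set.Ioi_subset_Ici_self).continuousAt hn

theorem integral_mono_right {a s t : ℝ} {k : ℝ → ℝ} (hk : ContinuousOn k (Set.Ici a))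
    (h0 : ∀ t, a ≤ t → 0 ≤ k t) (hs : a ≤ s) (hst : s ≤ t) :
    ∫ u in a..s, k u ≤ ∫ u in a..t, k u := by
  refine intervalIntegral.integral_mono_interval le_rfl hs hst ?_ ?_
  · filter_upwards [ae_restrict_mem measurableSet_Ioc] with u hu using h0 u hu.1.le
  · exact (hk.mono (by
      rw [Set.uIcc_of_le (hs.trans hst)]; exact Set.Icc_subset_Ici_self)).intervalIntegrable

/-- The weighted kinetic energy `∫ t ^ q * v` is finite. Here `v` stands for `‖x'‖²`, `V` for the
residual energy and `h` for `‖x - z‖² / 2`. The Lyapunov function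
`t ^ (2 * q) * V + 2 * q * (weighted function of h with r = 2 * q - 1) + (α / 2) * ∫ t ^ q * v`
is antitone up to a convergent correction. Its term `t ^ (2 * q - 1) * h'` has no sign, but it is
bounded below at arbitrarily large times, which suffices as the integral is monotone. -/
theorem integral_bounded {a α q p B C : ℝ} (ha : 1 ≤ a) (hα : 0 < α) (hq0 : 0 < q) (hq : q < 1)
    (hp : p ≤ 2) (hpq : q + 1 < p) (hC : 0 ≤ C) {h h1 h2 v V V1 : ℝ → ℝ}
    (hlarge : ∀ t, a ≤ t → 3 * q * t ^ (2 * q - 1) ≤ α / 2 * t ^ q)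
    (hd : ∀ t, a ≤ t → HasDerivAt h (h1 t) t) (H1 : ACD a h h1) (H2 : ACD a h1 h2)
    (h0 : ∀ t, a ≤ t → 0 ≤ h t) (hB : ∀ t, a ≤ t → h t ≤ B)
    (hv : ContinuousOn v (Set.Ici a)) (hv0 : ∀ t, a ≤ t → 0 ≤ v t)
    (HV : ACD a V V1) (hV0 : ∀ t, a ≤ t → 0 ≤ V t)
    (hV1 : ∀ᵐ t ∂(volume.restrict (Set.Ici a)), V1 t ≤ -(α * t ^ (-q) * v t))
    (hineq : ∀ᵐ t ∂(volume.restrict (Set.Ici a)),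
      h2 t + α * t ^ (-q) * h1 t ≤ 3 / 2 * v t + C * t ^ (-p) - V t) :
    ∃ J, ∀ t, a ≤ t → ∫ s in a..t, s ^ q * v s ≤ J := by
  have hB0 : 0 ≤ B := (h0 a le_rfl).trans (hB a le_rfl)
  have hkc : ContinuousOn (fun s => s ^ q * v s) (Set.Ici a) :=
    (continuousOn_rpow_Ici (by linarith) q).mul hv
  have hk0 : ∀ t, a ≤ t → 0 ≤ t ^ q * v t := fun t ht =>
    mul_nonneg (Real.rpow_nonneg (by linarith) _) (hv0 t ht)
  set r := 2 * q - 1 with hr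
  set D := α * (1 - q) + |r * (r - 1)| with hD
  have hD0 : 0 ≤ D := add_nonneg (mul_nonneg hα.le (by linarith)) (abs_nonneg _)
  -- the derivative of `K * t ^ (1 + q - p)` absorbs all error terms of order `t ^ (q - p)`
  set K := 2 * q * (C + D * B) / (p - q - 1) with hK
  have hKe : K * (p - q - 1) = 2 * q * (C + D * B) := div_mul_cancel₀ _ (by linarith)
  have hK0 : 0 ≤ K := div_nonneg (by positivity) (by linarith)
  have HΘ := (((((acd_rpow ha (2 * q)).mul HV).add
    ((acd_weighted (α := α) (q := q) (r := r) ha H1 H2).const_mul (2 * q))).add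
    ((acd_integral hkc).const_mul (α / 2))).add ((acd_rpow ha (1 + q - p)).const_mul K))
  have hanti := HΘ.antitoneOn (by
    filter_upwards [hV1, hineq, ae_restrict_mem measurableSet_Ici] with t hV1 hin ht
    have ht1 : 1 ≤ t := ha.trans ht
    have ht0 : 0 < t := by linarith
    have hpow : ∀ s : ℝ, s ≤ q - p → t ^ s ≤ t ^ (q - p) := fun s hs =>
      Real.rpow_le_rpow_of_exponent_le ht1 hs
    have hP : 0 ≤ t ^ (q - p) := (Real.rpow_pos_of_pos ht0 _).le
    have hr0 : 0 ≤ t ^ r := (Real.rpow_pos_of_pos ht0 _).le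
    have i1 : t ^ (2 * q) * V1 t ≤ -(α * (t ^ q * v t)) := by
      have e : t ^ (2 * q) * t ^ (-q) = t ^ q := by rw [← Real.rpow_add ht0]; ring_nf
      have := mul_le_mul_of_nonneg_left hV1 (Real.rpow_pos_of_pos ht0 (2 * q)).le
      refine this.trans (le_of_eq ?_)
      linear_combination (-(α * v t)) * e
    have i2 : t ^ r * (h2 t + α * t ^ (-q) * h1 t) ≤
        3 / 2 * (t ^ r * v t) + C * t ^ (q - p) - t ^ r * V t := by
      have e : t ^ r * t ^ (-p) ≤ t ^ (q - p) := by
        rw [← Real.rpow_add ht0]; exact hpow _ (by linarith)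
      have := mul_le_mul_of_nonneg_left hin hr0
      have := mul_le_mul_of_nonneg_left e hC
      nlinarith
    have i3 : 3 * q * (t ^ r * v t) ≤ α / 2 * (t ^ q * v t) := by
      have := mul_le_mul_of_nonneg_right (hlarge t ht) (hv0 t ht)
      linarith
    have i4 : (α * ((r - q) * t ^ (r - q - 1)) - r * ((r - 1) * t ^ (r - 2))) * h t ≤
        D * B * t ^ (q - p) := by
      have a1 : α * ((r - q) * t ^ (r - q - 1)) ≤ α * (1 - q) * t ^ (q - p) := by
        have : α * ((r - q) * t ^ (r - q - 1)) ≤ 0 := by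
          have : 0 ≤ t ^ (r - q - 1) := (Real.rpow_pos_of_pos ht0 _).le
          exact mul_nonpos_of_nonneg_of_nonpos hα.le
            (mul_nonpos_of_nonpos_of_nonneg (by linarith) this)
        exact this.trans (mul_nonneg (mul_nonneg hα.le (by linarith)) hP)
      have a2 : -(r * ((r - 1) * t ^ (r - 2))) ≤ |r * (r - 1)| * t ^ (q - p) := by
        calc -(r * ((r - 1) * t ^ (r - 2))) = -(r * (r - 1)) * t ^ (r - 2) := by ring
          _ ≤ |r * (r - 1)| * t ^ (r - 2) :=
            mul_le_mul_of_nonneg_right (neg_le_abs _) (Real.rpow_pos_of_pos ht0 _).le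
          _ ≤ _ := mul_le_mul_of_nonneg_left (hpow _ (by linarith)) (abs_nonneg _)
      calc _ ≤ (D * t ^ (q - p)) * h t :=
            mul_le_mul_of_nonneg_right (by rw [hD]; linarith) (h0 t ht)
        _ ≤ (D * t ^ (q - p)) * B := mul_le_mul_of_nonneg_left (hB t ht) (by positivity)
        _ = _ := by ring
    have e5 : t ^ (1 + q - p - 1) = t ^ (q - p) := by ring_nf
    have e6 : K * ((1 + q - p) * t ^ (q - p)) = -(2 * q * (C + D * B)) * t ^ (q - p) := by
      rw [← hKe]; ring
    rw [e5, e6]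
    have i2' := mul_le_mul_of_nonneg_left i2 (show 0 ≤ 2 * q by linarith)
    have i4' := mul_le_mul_of_nonneg_left i4 (show 0 ≤ 2 * q by linarith)
    linarith)
  set Θ := _
  change AntitoneOn Θ _ at hanti
  refine ⟨(Θ a + 2 * q * (1 + |r| * B)) / (α / 2), fun t ht => ?_⟩
  obtain ⟨T, htT, hT⟩ := exists_ge_deriv_ge (r := r) ha (by linarith) hd h0 t ht
  have haT : a ≤ T := ht.trans htT
  have hT1 : 1 ≤ T := ha.trans haT
  have hT0 : 0 < T := by linarith
  refine (integral_mono_right hkc hk0 ht htT).trans ?_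
  rw [le_div_iff₀ (by linarith)]
  have hΘ := hanti Set.self_mem_Ici (Set.mem_Ici.2 haT) haT
  have j1 : 0 ≤ T ^ (2 * q) * V T := mul_nonneg (Real.rpow_nonneg hT0.le _) (hV0 T haT)
  have j2 : 0 ≤ α * (T ^ (r - q) * h T) :=
    mul_nonneg hα.le (mul_nonneg (Real.rpow_nonneg hT0.le _) (h0 T haT))
  have j3 : r * (T ^ (r - 1) * h T) ≤ |r| * B := by
    have : T ^ (r - 1) ≤ 1 := Real.rpow_le_one_of_one_le_of_nonpos hT1 (by linarith)
    have h3 : T ^ (r - 1) * h T ≤ 1 * B :=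
      mul_le_mul this (hB T haT) (h0 T haT) zero_le_one
    calc r * (T ^ (r - 1) * h T) ≤ |r| * (T ^ (r - 1) * h T) :=
          mul_le_mul_of_nonneg_right (le_abs_self _)
            (mul_nonneg (Real.rpow_nonneg hT0.le _) (h0 T haT))
      _ ≤ _ := mul_le_mul_of_nonneg_left (by linarith) (abs_nonneg _)
  have j4 : 0 ≤ K * T ^ (1 + q - p) := mul_nonneg hK0 (Real.rpow_nonneg hT0.le _)
  have j5 : 2 * q * (-1 - |r| * B) ≤
      2 * q * (T ^ r * h1 T + α * (T ^ (r - q) * h T) - r * (T ^ (r - 1) * h T)) :=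
    mul_le_mul_of_nonneg_left (by linarith) (by linarith)
  have hΘT : Θ T = T ^ (2 * q) * V T +
      2 * q * (T ^ r * h1 T + α * (T ^ (r - q) * h T) - r * (T ^ (r - 1) * h T)) +
      α / 2 * (∫ s in a..T, s ^ q * v s) + K * T ^ (1 + q - p) := rfl
  linarith

/-- If the weighted kinetic energy is finite, then `h` converges; moreover the damped inequality
leaves no room for a positive constant `δ` on the right. The weighted function with `r = q` is
antitone up to convergent corrections, so `t ^ q * h' + α * h` converges, and hence so does `h`. -/
theorem tendsto_of_integral_bounded {a α q p B C J δ : ℝ} (ha : 1 ≤ a) (hα : 0 < α)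
    (hq0 : 0 < q) (hq : q < 1) (hp : p ≤ 2) (hpq : q + 1 < p) (hC : 0 ≤ C) (hδ : 0 ≤ δ)
    {h h1 h2 v : ℝ → ℝ}
    (hd : ∀ t, a ≤ t → HasDerivAt h (h1 t) t) (H1 : ACD a h h1) (H2 : ACD a h1 h2)
    (h0 : ∀ t, a ≤ t → 0 ≤ h t) (hB : ∀ t, a ≤ t → h t ≤ B)
    (hv : ContinuousOn v (Set.Ici a)) (hv0 : ∀ t, a ≤ t → 0 ≤ v t)
    (hJ : ∀ t, a ≤ t → ∫ s in a..t, s ^ q * v s ≤ J)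
    (hineq : ∀ᵐ t ∂(volume.restrict (Set.Ici a)),
      h2 t + α * t ^ (-q) * h1 t ≤ 3 / 2 * v t + C * t ^ (-p) - δ) :
    δ = 0 ∧ ∃ L, Tendsto h atTop (𝓝 L) := by
  have hB0 : 0 ≤ B := (h0 a le_rfl).trans (hB a le_rfl)
  have hkc : ContinuousOn (fun s => s ^ q * v s) (Set.Ici a) :=
    (continuousOn_rpow_Ici (by linarith) q).mul hv
  have hk0 : ∀ t, a ≤ t → 0 ≤ t ^ q * v t := fun t ht =>
    mul_nonneg (Real.rpow_nonneg (by linarith) _) (hv0 t ht)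
  -- the derivative of `K * t ^ (1 + q - p)` absorbs all error terms of order `t ^ (q - p)`
  set K := (C + q * (1 - q) * B) / (p - q - 1) with hK
  have hqq : 0 ≤ q * (1 - q) := mul_nonneg hq0.le (by linarith)
  have hKe : K * (p - q - 1) = C + q * (1 - q) * B := div_mul_cancel₀ _ (by linarith)
  have hK0 : 0 ≤ K := div_nonneg (by positivity) (by linarith)
  have HΘ := (((acd_weighted (α := α) (q := q) (r := q) ha H1 H2).sub
    ((acd_integral hkc).const_mul (3 / 2))).add ((acd_rpow ha (1 + q - p)).const_mul K)).add
    ((acd_rpow ha (q + 1)).const_mul (δ / (q + 1)))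
  have hanti := HΘ.antitoneOn (by
    filter_upwards [hineq, ae_restrict_mem measurableSet_Ici] with t hin ht
    have ht1 : 1 ≤ t := ha.trans ht
    have ht0 : 0 < t := by linarith
    have hP : 0 ≤ t ^ (q - p) := (Real.rpow_pos_of_pos ht0 _).le
    have i2 : t ^ q * (h2 t + α * t ^ (-q) * h1 t) ≤
        3 / 2 * (t ^ q * v t) + C * t ^ (q - p) - δ * t ^ q := by
      have e : t ^ q * t ^ (-p) = t ^ (q - p) := by
        rw [← Real.rpow_add ht0]; rfl
      have := mul_le_mul_of_nonneg_left hin (Real.rpow_pos_of_pos ht0 q).le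
      refine this.trans (le_of_eq ?_)
      linear_combination C * e
    have i4 : (α * ((q - q) * t ^ (q - q - 1)) - q * ((q - 1) * t ^ (q - 2))) * h t ≤
        q * (1 - q) * B * t ^ (q - p) := by
      have a2 : t ^ (q - 2) ≤ t ^ (q - p) :=
        Real.rpow_le_rpow_of_exponent_le ht1 (by linarith)
      calc _ = q * (1 - q) * (t ^ (q - 2) * h t) := by ring
        _ ≤ q * (1 - q) * (t ^ (q - p) * B) :=
          mul_le_mul_of_nonneg_left (mul_le_mul a2 (hB t ht) (h0 t ht) hP) hqq
        _ = _ := by ring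
    have e5 : t ^ (1 + q - p - 1) = t ^ (q - p) := by ring_nf
    have e6 : K * ((1 + q - p) * t ^ (q - p)) = -(C + q * (1 - q) * B) * t ^ (q - p) := by
      rw [← hKe]; ring
    have e7 : δ / (q + 1) * ((q + 1) * t ^ (q + 1 - 1)) = δ * t ^ q := by
      rw [add_sub_cancel_right]; field_simp
    rw [e5, e6, e7]
    linarith)
  set Θ := _
  change AntitoneOn Θ _ at hanti
  have hΘT : ∀ T, Θ T = T ^ q * h1 T + α * (T ^ (q - q) * h T) - q * (T ^ (q - 1) * h T) -
      3 / 2 * (∫ s in a..T, s ^ q * v s) + K * T ^ (1 + q - p) +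
      δ / (q + 1) * T ^ (q + 1) := fun _ => rfl
  have hlow : ∀ t, a ≤ t → (-1 - q * B - 3 / 2 * J) + δ / (q + 1) * t ^ (q + 1) ≤ Θ t := by
    intro t ht
    obtain ⟨T, htT, hT⟩ := exists_ge_deriv_ge (r := q) ha hq hd h0 t ht
    have haT : a ≤ T := ht.trans htT
    have hT1 : 1 ≤ T := ha.trans haT
    have hT0 : 0 < T := by linarith
    have hΘ := hanti (Set.mem_Ici.2 ht) (Set.mem_Ici.2 haT) htT
    have j2 : 0 ≤ α * (T ^ (q - q) * h T) :=
      mul_nonneg hα.le (mul_nonneg (Real.rpow_nonneg hT0.le _) (h0 T haT))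
    have j3 : q * (T ^ (q - 1) * h T) ≤ q * B := by
      have : T ^ (q - 1) ≤ 1 := Real.rpow_le_one_of_one_le_of_nonpos hT1 (by linarith)
      have h3 : T ^ (q - 1) * h T ≤ 1 * B :=
        mul_le_mul this (hB T haT) (h0 T haT) zero_le_one
      exact mul_le_mul_of_nonneg_left (by linarith) hq0.le
    have j4 : 0 ≤ K * T ^ (1 + q - p) := mul_nonneg hK0 (Real.rpow_nonneg hT0.le _)
    have j5 : δ / (q + 1) * t ^ (q + 1) ≤ δ / (q + 1) * T ^ (q + 1) :=
      mul_le_mul_of_nonneg_left (Real.rpow_le_rpow (by linarith) htT (by linarith))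
        (div_nonneg hδ (by linarith))
    have := hJ T haT
    rw [hΘT] at hΘ
    linarith
  have hδ0 : δ = 0 := by
    by_contra hne
    have hpos : 0 < δ / (q + 1) := div_pos (lt_of_le_of_ne hδ (Ne.symm hne)) (by linarith)
    have hlim : Tendsto (fun t : ℝ => δ / (q + 1) * t ^ (q + 1)) atTop atTop :=
      (tendsto_rpow_atTop (by linarith)).const_mul_atTop hpos
    obtain ⟨t, hta, ht⟩ := ((eventually_ge_atTop a).and
      (hlim.eventually_gt_atTop (Θ a - (-1 - q * B - 3 / 2 * J)))).exists
    have := hanti Set.self_mem_Ici (Set.mem_Ici.2 hta) hta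
    linarith [hlow t hta]
  refine ⟨hδ0, ?_⟩
  obtain ⟨L, hL, -⟩ := exists_tendsto_of_antitoneOn (m := -1 - q * B - 3 / 2 * J) hanti
    fun t ht => by simpa [hδ0] using hlow t ht
  obtain ⟨L', hL', -⟩ := exists_tendsto_of_antitoneOn (a := a) (m := -J)
    (φ := fun t => -∫ s in a..t, s ^ q * v s)
    (fun s hs t _ hst => neg_le_neg (integral_mono_right hkc hk0 hs hst))
    fun t ht => neg_le_neg (hJ t ht)
  have hp0 : Tendsto (fun t : ℝ => t ^ (1 + q - p)) atTop (𝓝 0) := by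
    have := tendsto_rpow_neg_atTop (y := p - q - 1) (by linarith)
    refine this.congr fun t => ?_
    ring_nf
  have hh0 : Tendsto (fun t : ℝ => t ^ (q - 1) * h t) atTop (𝓝 0) := by
    have h3 : Tendsto (fun t : ℝ => t ^ (q - 1) * B) atTop (𝓝 (0 * B)) := by
      refine Tendsto.mul_const B ((tendsto_rpow_neg_atTop (y := 1 - q) (by linarith)).congr
        fun t => ?_)
      ring_nf
    rw [zero_mul] at h3
    refine squeeze_zero' ?_ ?_ h3
    · filter_upwards [eventually_ge_atTop a] with t ht
      exact mul_nonneg (Real.rpow_nonneg (by linarith) _) (h0 t ht)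
    · filter_upwards [eventually_ge_atTop a] with t ht
      exact mul_le_mul_of_nonneg_left (hB t ht) (Real.rpow_nonneg (by linarith) _)
  have hw := ((hL.sub (hL'.const_mul (3 / 2))).add (hh0.const_mul q)).sub (hp0.const_mul K)
  refine ⟨_, tendsto_of_first_order ha hα hq hd (hw.congr fun t => ?_)⟩
  rw [hΘT, hδ0, sub_self, Real.rpow_zero]
  ring

/-- A Barbalat-type statement: an integrable nonnegative function whose growth rate is bounded
above tends to zero. -/
theorem tendsto_zero_of_integral_bounded {a N J : ℝ} {k v v1 : ℝ → ℝ} (hN : 0 < N)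
    (hk : ContinuousOn k (Set.Ici a)) (hvk : ∀ t, a ≤ t → v t ≤ k t)
    (hv0 : ∀ t, a ≤ t → 0 ≤ v t) (HV : ACD a v v1)
    (hv1 : ∀ᵐ t ∂(volume.restrict (Set.Ici a)), v1 t ≤ N)
    (hJ : ∀ t, a ≤ t → ∫ s in a..t, k s ≤ J) : Tendsto v atTop (𝓝 0) := by
  have hk0 : ∀ t, a ≤ t → 0 ≤ k t := fun t ht => (hv0 t ht).trans (hvk t ht)
  have hanti : AntitoneOn (fun t => v t - N * t) (Set.Ici a) := by
    refine (HV.sub (ACD.of_hasDerivAt (φ := fun t => N * t) (φ' := fun _ => N) (fun t _ => ?_)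
      continuousOn_const)).antitoneOn ?_
    · simpa using (hasDerivAt_id t).const_mul N
    · filter_upwards [hv1] with t ht using by linarith
  obtain ⟨L, hL, -⟩ := exists_tendsto_of_antitoneOn (a := a) (m := -J)
    (φ := fun t => -∫ s in a..t, k s)
    (fun s hs t _ hst => neg_le_neg (integral_mono_right hk hk0 hs hst))
    fun t ht => neg_le_neg (hJ t ht)
  rw [Metric.tendsto_nhds]
  intro ε hε
  -- on `[t - η, t]` the function `v` is at least `v t - ε / 2`
  set η := ε / (2 * N) with hη
  have hη0 : 0 < η := by positivity
  have hηN : N * η = ε / 2 := by rw [hη]; field_simp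
  have hdiff : Tendsto (fun t => (-∫ s in a..(t - η), k s) - (-∫ s in a..t, k s)) atTop
      (𝓝 (L - L)) :=
    (hL.comp (tendsto_atTop_add_const_right _ (-η) tendsto_id)).sub hL
  rw [sub_self] at hdiff
  filter_upwards [hdiff.eventually_lt_const (show 0 < η * (ε / 2) by positivity),
    eventually_ge_atTop (a + η)] with t ht hta
  have hint : ∀ b, a ≤ b → IntervalIntegrable k volume a b := fun b hb =>
    (hk.mono (by rw [Set.uIcc_of_le hb]; exact Set.Icc_subset_Ici_self)).intervalIntegrable
  have hsub := intervalIntegral.integral_interval_sub_left (hint t (by linarith))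
    (hint (t - η) (by linarith))
  have hlow : ∫ _ in (t - η)..t, (v t - ε / 2) ≤ ∫ s in (t - η)..t, k s := by
    refine intervalIntegral.integral_mono_on (by linarith) intervalIntegrable_const
      ((hint (t - η) (by linarith)).symm.trans (hint t (by linarith))) fun s hs => ?_
    have has : a ≤ s := by linarith [hs.1]
    have := hanti (Set.mem_Ici.2 has) (Set.mem_Ici.2 (by linarith)) hs.2
    simp only at this
    have h5 : N * (t - s) ≤ N * η := mul_le_mul_of_nonneg_left (by linarith [hs.1]) hN.le
    linarith [hvk s has]
  rw [intervalIntegral.integral_const, smul_eq_mul] at hlow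
  have h6 : η * (v t - ε / 2) < η * (ε / 2) := by
    have : t - (t - η) = η := by ring
    rw [this] at hlow
    linarith
  have h7 := lt_of_mul_lt_mul_left h6 hη0.le
  rw [Real.dist_eq, sub_zero, abs_of_nonneg (hv0 t (by linarith))]
  linarith

/-! ### Convexity and weak convergence in Hilbert space -/

section Hilbert

variable {H : Type*} [NormedAddCommGroup H] [InnerProductSpace ℝ H]

theorem gradient_inequality [CompleteSpace H] {f : H → ℝ} (hf : ConvexOn ℝ Set.univ f)
    (hd : Differentiable ℝ f) (u z : H) : f u - f z ≤ ⟪gradient f u, u - z⟫_ℝ := by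
  have hg : HasDerivAt (fun s : ℝ => f (u + s • (z - u))) (⟪gradient f u, z - u⟫_ℝ) 0 := by
    have h1 : HasDerivAt (fun s : ℝ => u + s • (z - u)) (z - u) 0 := by
      simpa using ((hasDerivAt_id (0 : ℝ)).smul_const (z - u)).const_add u
    have h2 := (hd (u + (0 : ℝ) • (z - u))).hasGradientAt.hasFDerivAt.comp_hasDerivAt 0 h1
    refine HasDerivAt.congr_deriv (f := fun s : ℝ => f (u + s • (z - u))) h2 ?_
    simp
  have hc : ConvexOn ℝ Set.univ (fun s : ℝ => f (u + s • (z - u))) := by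
    have := hf.comp_affineMap (AffineMap.lineMap u z : ℝ →ᵃ[ℝ] H)
    refine this.congr fun s _ => ?_
    simp [AffineMap.lineMap_apply, add_comm]
  have := hc.le_slope_of_hasDerivAt (Set.mem_univ 0) (Set.mem_univ 1) one_pos hg
  simp only [slope_def_field, one_smul, zero_smul, add_zero, sub_zero, div_one,
    add_sub_cancel] at this
  rw [← neg_sub z u, inner_neg_right]
  linarith

/-- Along an ultrafilter, an eventually bounded family in a Hilbert space converges weakly. -/
theorem exists_weak_limit [CompleteSpace H] {x : ℝ → H} {M : ℝ} {U : Ultrafilter ℝ}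
    (hM : ∀ᶠ t in (U : Filter ℝ), ‖x t‖ ≤ M) :
    ∃ z : H, ∀ y : H, Tendsto (fun t => ⟪x t, y⟫_ℝ) U (𝓝 ⟪z, y⟫_ℝ) := by
  have hex : ∀ y : H, ∃ l : ℝ, |l| ≤ M * ‖y‖ ∧ Tendsto (fun t => ⟪x t, y⟫_ℝ) U (𝓝 l) := by
    intro y
    obtain ⟨l, hl, h⟩ := (isCompact_Icc (a := -(M * ‖y‖)) (b := M * ‖y‖)).ultrafilter_le_nhds
      (U.map fun t => ⟪x t, y⟫_ℝ) (by
        rw [le_principal_iff]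
        change ∀ᶠ t in (U : Filter ℝ), ⟪x t, y⟫_ℝ ∈ Set.Icc (-(M * ‖y‖)) (M * ‖y‖)
        filter_upwards [hM] with t ht
        rw [Set.mem_Icc, ← abs_le]
        exact (abs_real_inner_le_norm _ _).trans (mul_le_mul_of_nonneg_right ht (norm_nonneg _)))
    exact ⟨l, abs_le.2 hl, h⟩
  choose l hl hlim using hex
  let φ : H →ₗ[ℝ] ℝ :=
    { toFun := l
      map_add' := fun y y' => tendsto_nhds_unique (hlim (y + y'))
        (((hlim y).add (hlim y')).congr fun t => (inner_add_right _ _ _).symm)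
      map_smul' := fun c y => tendsto_nhds_unique (hlim (c • y))
        (((hlim y).const_mul c).congr fun t => (real_inner_smul_right _ _ _).symm) }
  let ψ : H →L[ℝ] ℝ := φ.mkContinuous M hl
  refine ⟨(InnerProductSpace.toDual ℝ H).symm ψ, fun y => ?_⟩
  rw [InnerProductSpace.toDual_symm_apply]
  exact hlim y

/-- Weak lower semicontinuity of a differentiable convex function. -/
theorem le_of_weak_limit [CompleteSpace H] {f : H → ℝ} (hf : ConvexOn ℝ Set.univ f)
    (hd : Differentiable ℝ f) {x : ℝ → H} {z : H} {l : ℝ} {U : Filter ℝ} [U.NeBot]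
    (hz : ∀ y : H, Tendsto (fun t => ⟪x t, y⟫_ℝ) U (𝓝 ⟪z, y⟫_ℝ))
    {g : ℝ → ℝ} (hg : Tendsto g U (𝓝 l)) (hfg : ∀ᶠ t in U, f (x t) ≤ g t) : f z ≤ l := by
  have h1 : Tendsto (fun t => f z + (⟪x t, gradient f z⟫_ℝ - ⟪z, gradient f z⟫_ℝ)) U
      (𝓝 (f z + (⟪z, gradient f z⟫_ℝ - ⟪z, gradient f z⟫_ℝ))) :=
    ((hz _).sub_const _).const_add _
  rw [sub_self, add_zero] at h1
  refine le_of_tendsto_of_tendsto h1 hg ?_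
  filter_upwards [hfg] with t ht
  have := gradient_inequality hf hd z (x t)
  rw [real_inner_comm, inner_sub_left] at this
  linarith

/-- Opial's lemma in continuous time, with `S` containing all weak limits along ultrafilters. -/
theorem opial [CompleteSpace H] {x : ℝ → H} {M : ℝ} {S : Set H}
    (hM : ∀ᶠ t in atTop, ‖x t‖ ≤ M)
    (hS : ∀ z ∈ S, ∃ L, Tendsto (fun t => 1 / 2 * ⟪x t - z, x t - z⟫_ℝ) atTop (𝓝 L))
    (hU : ∀ (U : Ultrafilter ℝ) (z : H), (U : Filter ℝ) ≤ atTop →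
      (∀ y : H, Tendsto (fun t => ⟪x t, y⟫_ℝ) U (𝓝 ⟪z, y⟫_ℝ)) → z ∈ S) :
    ∃ z ∈ S, ∀ y : H, Tendsto (fun t => ⟪x t, y⟫_ℝ) atTop (𝓝 ⟪z, y⟫_ℝ) := by
  have huniq : ∀ (U U' : Ultrafilter ℝ) (z z' : H), (U : Filter ℝ) ≤ atTop →
      (U' : Filter ℝ) ≤ atTop →
      (∀ y : H, Tendsto (fun t => ⟪x t, y⟫_ℝ) U (𝓝 ⟪z, y⟫_ℝ)) →
      (∀ y : H, Tendsto (fun t => ⟪x t, y⟫_ℝ) U' (𝓝 ⟪z', y⟫_ℝ)) → z = z' := by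
    intro U U' z z' hUa hUa' hz hz'
    obtain ⟨L, hL⟩ := hS z (hU U z hUa hz)
    obtain ⟨L', hL'⟩ := hS z' (hU U' z' hUa' hz')
    -- `⟪x t, z' - z⟫` is, up to a constant, the difference of two convergent functions
    have hlim : Tendsto (fun t => ⟪x t, z' - z⟫_ℝ) atTop
        (𝓝 (L - L' - 1 / 2 * (⟪z, z⟫_ℝ - ⟪z', z'⟫_ℝ))) := by
      refine ((hL.sub hL').sub_const _).congr fun t => ?_
      rw [real_inner_sub_sub_self, real_inner_sub_sub_self, inner_sub_right]
      ring
    have e1 := tendsto_nhds_unique (hz (z' - z)) (hlim.mono_left hUa)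
    have e2 := tendsto_nhds_unique (hz' (z' - z)) (hlim.mono_left hUa')
    have : ⟪z' - z, z' - z⟫_ℝ = 0 := by
      rw [inner_sub_left, e1, e2, sub_self]
    exact (sub_eq_zero.1 (inner_self_eq_zero.1 this)).symm
  obtain ⟨z, hz⟩ := exists_weak_limit (U := Ultrafilter.of atTop)
    (hM.filter_mono (Ultrafilter.of_le _))
  refine ⟨z, hU _ z (Ultrafilter.of_le _) hz, fun y => ?_⟩
  rw [tendsto_iff_ultrafilter]
  intro U hUa
  obtain ⟨z', hz'⟩ := exists_weak_limit (hM.filter_mono hUa)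
  rw [huniq _ _ _ _ (Ultrafilter.of_le _) hUa hz hz']
  exact hz' y

/-- Variational characterization of the element of minimal norm in a translated convex set,
written for the inclusion `-(c • v) ∈ C + b` in which `-(c • v)` is that element. -/
theorem exists_of_minimal_norm {C : Set H} (hC : Convex ℝ C) {b v : H} {c : ℝ} (hc : 0 < c)
    (hmem : (-c) • v ∈ (fun g => g + b) '' C)
    (hmin : ∀ w ∈ (fun g => g + b) '' C, ‖c • v‖ ≤ ‖w‖) :
    ∃ g ∈ C, g + b = (-c) • v ∧ ∀ g' ∈ C, ⟪g', v⟫_ℝ ≤ ⟪g, v⟫_ℝ := by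
  obtain ⟨g, hg, hgb⟩ := hmem
  refine ⟨g, hg, hgb, fun g' hg' => ?_⟩
  by_contra hlt
  push Not at hlt
  set d := g' - g
  have hd : 0 < ⟪v, d⟫_ℝ := by
    rw [real_inner_comm, inner_sub_left]; linarith
  have hineq : ∀ s : ℝ, 0 < s → s ≤ 1 → 2 * c * ⟪v, d⟫_ℝ ≤ s * ‖d‖ ^ 2 := by
    intro s hs0 hs1
    have hs : g + s • d ∈ C := hC.add_smul_sub_mem hg hg' ⟨hs0.le, hs1⟩
    have h1 := hmin _ ⟨_, hs, rfl⟩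
    have e : g + s • d + b = (-c) • v + s • d := by
      rw [← hgb]; show g + s • d + b = (g + b) + s • d; abel
    simp only [e] at h1
    have h2 : ‖c • v‖ ^ 2 ≤ ‖(-c) • v + s • d‖ ^ 2 := pow_le_pow_left₀ (norm_nonneg _) h1 2
    rw [norm_add_sq_real, neg_smul, norm_neg, inner_neg_left, real_inner_smul_left,
      real_inner_smul_right, norm_smul s, mul_pow, Real.norm_eq_abs, sq_abs] at h2
    have h3 : s * (2 * c * ⟪v, d⟫_ℝ) ≤ s * (s * ‖d‖ ^ 2) := by linarith
    exact le_of_mul_le_mul_left h3 hs0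
  have h0 : 0 < 2 * c * ⟪v, d⟫_ℝ := by positivity
  have hlim : Tendsto (fun s : ℝ => s * ‖d‖ ^ 2) (𝓝[>] 0) (𝓝 0) := by
    have : Tendsto (fun s : ℝ => s * ‖d‖ ^ 2) (𝓝 0) (𝓝 (0 * ‖d‖ ^ 2)) :=
      tendsto_id.mul_const _
    rw [zero_mul] at this
    exact this.mono_left nhdsWithin_le_nhds
  have : 2 * c * ⟪v, d⟫_ℝ ≤ 0 := by
    refine ge_of_tendsto hlim ?_
    filter_upwards [Ioc_mem_nhdsGT (zero_lt_one (α := ℝ))] with s hs using hineq s hs.1 hs.2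
  linarith

/-- A function with an essentially bounded derivative on bounded intervals, given as the integral
of that derivative, is locally absolutely continuous. -/
theorem acd_of_integral [CompleteSpace H] {a : ℝ} {y y' : ℝ → H} (hm : StronglyMeasurable y')
    (hint : ∀ t ∈ Set.Ici a, y t = y a + ∫ s in a..t, y' s)
    (hd : ∀ᵐ t ∂(volume.restrict (Set.Ici a)), HasDerivAt y (y' t) t)
    (hb : ∀ b, a ≤ b → ∃ K, ∀ᵐ t ∂(volume.restrict (Set.Icc a b)), ‖y' t‖ ≤ K) :
    ACD a y y' := by
  refine ⟨fun b hab => ?_, hd⟩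
  obtain ⟨K, hK⟩ := hb b hab
  have hI : IntegrableOn y' (Set.Icc a b) volume :=
    Integrable.mono' (integrable_const K) hm.aestronglyMeasurable hK
  have hII : ∀ t ∈ Set.Icc a b, IntervalIntegrable y' volume a t := fun t ht => by
    rw [intervalIntegrable_iff_integrableOn_Icc_of_le ht.1]
    exact hI.mono_set (Set.Icc_subset_Icc_right ht.2)
  have hL : LipschitzOnWith K.toNNReal y (Set.uIcc a b) := by
    rw [Set.uIcc_of_le hab]
    refine LipschitzOnWith.of_dist_le_mul fun s hs t ht => ?_
    rw [dist_comm, dist_eq_norm, hint t ht.1, hint s hs.1, add_sub_add_left_eq_sub,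
      intervalIntegral.integral_interval_sub_left (hII t ht) (hII s hs), dist_comm,
      Real.dist_eq]
    refine (intervalIntegral.norm_integral_le_of_norm_le_const_ae (C := K) ?_).trans
      (mul_le_mul_of_nonneg_right (Real.le_coe_toNNReal K) (abs_nonneg _))
    rw [ae_restrict_iff' measurableSet_Icc] at hK
    filter_upwards [hK] with u hu hmem
    refine hu ?_
    have := Set.uIcc_subset_Icc hs ht (Set.uIoc_subset_uIcc hmem)
    exact this
  exact hL.absolutelyContinuousOnInterval

end Hilbert

/-! ### The inertial trajectory -/

section Trajectory

variable {H : Type*} [NormedAddCommGroup H] [InnerProductSpace ℝ H]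

/-- The energy `f(x) + β / 2 * t ^ (-p) * ‖x‖² + ‖x'‖² / 2` of the objective `f` along `x`. -/
noncomputable def energy (f : H → ℝ) (β p : ℝ) (x x' : ℝ → H) (t : ℝ) : ℝ :=
  f (x t) + β / 2 * (t ^ (-p) * ⟪x t, x t⟫_ℝ) + 1 / 2 * ⟪x' t, x' t⟫_ℝ

theorem le_energy (f : H → ℝ) {β p t : ℝ} (hβ : 0 < β) (ht : 0 ≤ t) (x x' : ℝ → H) :
    f (x t) + 1 / 2 * ⟪x' t, x' t⟫_ℝ ≤ energy f β p x x' t := by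
  have h1 : 0 ≤ t ^ (-p) * ⟪x t, x t⟫_ℝ :=
    mul_nonneg (Real.rpow_nonneg ht _) real_inner_self_nonneg
  have : 0 ≤ β / 2 * (t ^ (-p) * ⟪x t, x t⟫_ℝ) := by positivity
  unfold energy; linarith

theorem inner_ge_of_mem_convexHull [CompleteSpace H] {ι : Type*} {f : ι → H → ℝ}
    (hconv : ∀ i, ConvexOn ℝ Set.univ (f i)) (hdiff : ∀ i, Differentiable ℝ (f i)) {u z g : H}
    {ρ : ℝ} (hg : g ∈ convexHull ℝ (Set.range fun i => gradient (f i) u))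
    (hρ : ∀ i, ρ ≤ f i u - f i z) : ρ ≤ ⟪g, u - z⟫_ℝ := by
  have hsub : (Set.range fun i => gradient (f i) u) ⊆ {g : H | ρ ≤ ⟪g, u - z⟫_ℝ} := by
    rintro _ ⟨i, rfl⟩
    exact (hρ i).trans (gradient_inequality (hconv i) (hdiff i) u z)
  exact convexHull_min hsub (convex_halfSpace_ge
    ⟨fun a b => inner_add_left a b _, fun c a => real_inner_smul_left a _ c⟩ ρ) hg

theorem norm_le_of_mem_convexHull {s : Set H} {g : H} {G : ℝ} (hg : g ∈ convexHull ℝ s)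
    (hs : ∀ y ∈ s, ‖y‖ ≤ G) : ‖g‖ ≤ G := by
  have : s ⊆ Metric.closedBall 0 G := fun y hy => mem_closedBall_zero_iff.2 (hs y hy)
  exact mem_closedBall_zero_iff.1 (convexHull_min this (convex_closedBall 0 G) hg)

theorem abs_inner_le_half (y z : H) : |⟪y, z⟫_ℝ| ≤ (‖y‖ ^ 2 + ⟪z, z⟫_ℝ) / 2 := by
  have h1 := abs_real_inner_le_norm y z
  rw [real_inner_self_eq_norm_sq]
  nlinarith [sq_nonneg (‖y‖ - ‖z‖)]

/-- The asymptotic statement for a trajectory on `[a, ∞)` with `a` large, in which the minimal norm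
inclusion has been resolved into its variational form: `g` is the element of the convex hull
driving the motion, and it has the largest inner product with the velocity. -/
theorem trajectory_aux [CompleteSpace H] {m : ℕ} (hm : 0 < m) {f : Fin m → H → ℝ}
    (hconv : ∀ i, ConvexOn ℝ Set.univ (f i)) (hdiff : ∀ i, Differentiable ℝ (f i))
    (hcont : ∀ i, Continuous (gradient (f i)))
    {a α β q p M G : ℝ} (ha : 1 ≤ a) (hα : 0 < α) (hβ : 0 < β) (hq0 : 0 < q) (hq : q < 1)
    (hp : p ≤ 2) (hpq : q + 1 < p)
    (hlarge : ∀ t, a ≤ t → 3 * q * t ^ (2 * q - 1) ≤ α / 2 * t ^ q)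
    {x x' x'' : ℝ → H} (hx : ∀ t, a ≤ t → HasDerivAt x (x' t) t)
    (hx'c : ContinuousOn x' (Set.Ici a)) (HX : ACD a x' x'')
    (hM : ∀ t, a ≤ t → ‖x t‖ ≤ M) (hG : ∀ i t, a ≤ t → ‖gradient (f i) (x t)‖ ≤ G)
    (hg : ∀ᵐ t ∂(volume.restrict (Set.Ici a)),
      ∃ g ∈ convexHull ℝ (Set.range fun i => gradient (f i) (x t)),
        g + ((β * t ^ (-p)) • x t + x'' t) = (-(α * t ^ (-q))) • x' t ∧
        ∀ i, ⟪gradient (f i) (x t), x' t⟫_ℝ ≤ ⟪g, x' t⟫_ℝ) :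
    ∃ l : Fin m → ℝ, (∀ i, Tendsto (fun t => f i (x t)) atTop (𝓝 (l i))) ∧
      ∃ xinf : H,
        (∀ y : H, Tendsto (fun t => ⟪x t, y⟫_ℝ) atTop (𝓝 ⟪xinf, y⟫_ℝ)) ∧
        (¬ ∃ y : H, ∀ i, f i y < f i xinf) ∧
        (∀ i, f i xinf ≤ l i) := by
  have : Nonempty (Fin m) := ⟨⟨0, hm⟩⟩
  have hM0 : 0 ≤ M := (norm_nonneg _).trans (hM a le_rfl)
  have hxc : ContinuousOn x (Set.Ici a) := fun t ht => (hx t ht).continuousAt.continuousWithinAt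
  have X1 : ACD a x x' := ACD.of_hasDerivAt hx hx'c
  have hpos : ∀ t, a ≤ t → 0 < t := fun t ht => by linarith
  have hae : ∀ᵐ t ∂(volume.restrict (Set.Ici a)), a ≤ t := ae_restrict_mem measurableSet_Ici
  set v : ℝ → ℝ := fun t => ⟪x' t, x' t⟫_ℝ with hv
  have hv0 : ∀ t, a ≤ t → 0 ≤ v t := fun t _ => real_inner_self_nonneg
  have hvc : ContinuousOn v (Set.Ici a) := hx'c.inner hx'c
  have Hv : ACD a v (fun t => ⟪x' t, x'' t⟫_ℝ + ⟪x'' t, x' t⟫_ℝ) := HX.inner HX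
  have hxx : ∀ t, a ≤ t → ⟪x t, x t⟫_ℝ ≤ M ^ 2 := fun t ht => by
    rw [real_inner_self_eq_norm_sq]
    exact pow_le_pow_left₀ (norm_nonneg _) (hM t ht) 2
  have htp0 : ∀ t, a ≤ t → 0 < t ^ (-p) := fun t ht => Real.rpow_pos_of_pos (hpos t ht) _
  have htp1 : ∀ t, a ≤ t → t ^ (-p) ≤ 1 := fun t ht =>
    Real.rpow_le_one_of_one_le_of_nonpos (by linarith) (by linarith)
  -- each energy decreases along the trajectory
  set W : Fin m → ℝ → ℝ := fun i => energy (f i) β p x x' with hW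
  have HW : ∀ i, ∃ W' : ℝ → ℝ, ACD a (W i) W' ∧
      ∀ᵐ t ∂(volume.restrict (Set.Ici a)), W' t ≤ -(α * t ^ (-q) * v t) := by
    intro i
    have hf : ACD a (fun t => f i (x t)) (fun t => ⟪gradient (f i) (x t), x' t⟫_ℝ) := by
      refine ACD.of_hasDerivAt (fun t ht => ?_) (((hcont i).comp_continuousOn hxc).inner hx'c)
      exact HasDerivAt.congr_deriv (f := fun t => f i (x t))
        ((hdiff i (x t)).hasGradientAt.hasFDerivAt.comp_hasDerivAt t (hx t ht)) (by simp)
    refine ⟨_, (hf.add (((acd_rpow ha (-p)).mul (X1.inner X1)).const_mul (β / 2))).add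
      (Hv.const_mul (1 / 2)), ?_⟩
    filter_upwards [hg, hae] with t ⟨g, hgC, hge, hgi⟩ ht
    have h1 := congrArg (fun w => ⟪w, x' t⟫_ℝ) hge
    simp only [inner_add_left, real_inner_smul_left] at h1
    have h2 := hgi i
    have h3 : 0 ≤ β / 2 * (p * t ^ (-p - 1) * ⟪x t, x t⟫_ℝ) :=
      mul_nonneg (by linarith) (mul_nonneg (mul_nonneg (by linarith)
        (Real.rpow_nonneg (hpos t ht).le _)) real_inner_self_nonneg)
    rw [real_inner_comm (x' t) (x t), real_inner_comm (x'' t) (x' t)]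
    rw [real_inner_comm (x' t) (x t)] at h1
    simp only [hv]
    linarith
  choose W' HW hW' using HW
  have hWanti : ∀ i, AntitoneOn (W i) (Set.Ici a) := fun i => (HW i).antitoneOn (by
    filter_upwards [hW' i, hae] with t h1 ht
    have : 0 ≤ α * t ^ (-q) * v t :=
      mul_nonneg (mul_nonneg hα.le (Real.rpow_nonneg (hpos t ht).le _)) (hv0 t ht)
    linarith)
  have hfW : ∀ i t, a ≤ t → f i (x t) + 1 / 2 * v t ≤ W i t := fun i t ht =>
    le_energy (f i) hβ (hpos t ht).le x x'
  have hflow : ∀ i t, a ≤ t → f i 0 - ‖gradient (f i) 0‖ * M ≤ f i (x t) := by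
    intro i t ht
    have h1 := gradient_inequality (hconv i) (hdiff i) 0 (x t)
    have h2 := real_inner_le_norm (gradient (f i) 0) (0 - x t)
    rw [zero_sub, norm_neg] at h2
    rw [zero_sub] at h1
    have := mul_le_mul_of_nonneg_left (hM t ht) (norm_nonneg (gradient (f i) 0))
    linarith
  have hWlim : ∀ i, ∃ L, Tendsto (W i) atTop (𝓝 L) ∧ ∀ t, a ≤ t → L ≤ W i t := fun i =>
    exists_tendsto_of_antitoneOn (hWanti i) fun t ht =>
      (hflow i t ht).trans (by linarith [hfW i t ht, hv0 t ht])
  choose w hw hwle using hWlim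
  -- the velocity is bounded
  obtain ⟨B, hB⟩ : ∃ B, ∀ t, a ≤ t → v t ≤ B := by
    let i : Fin m := ⟨0, hm⟩
    refine ⟨2 * (W i a - (f i 0 - ‖gradient (f i) 0‖ * M)), fun t ht => ?_⟩
    have := hWanti i Set.self_mem_Ici (Set.mem_Ici.2 ht) ht
    linarith [hfW i t ht, hflow i t ht]
  -- the residual energy
  obtain ⟨V1, HV, hV1⟩ := ACD.iInf (φ := fun i t => W i t - w i) (φ' := fun i t => W' i t)
    (fun i => ((HW i).sub (ACD.of_hasDerivAt (φ := fun _ => w i) (φ' := fun _ => 0)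
      (fun t _ => hasDerivAt_const t _) continuousOn_const)).congr_deriv fun t _ => sub_zero _)
    hW'
  set V : ℝ → ℝ := fun t => ⨅ i, (W i t - w i) with hV
  have hV0 : ∀ t, a ≤ t → 0 ≤ V t := fun t ht => le_ciInf fun i => sub_nonneg.2 (hwle i t ht)
  have hVle : ∀ i t, V t ≤ W i t - w i := fun i t => ciInf_le (Set.finite_range _).bddBelow i
  -- the damped inequality satisfied by the squared distance to `z`
  have key : ∀ (z : H) (δ : ℝ), (∀ i, f i z + δ ≤ w i) →
      ∀ᵐ t ∂(volume.restrict (Set.Ici a)),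
        (⟪x' t, x' t⟫_ℝ + ⟪x'' t, x t - z⟫_ℝ) + α * t ^ (-q) * ⟪x' t, x t - z⟫_ℝ ≤
          3 / 2 * v t + (β / 2 * M ^ 2 + β * (M * (M + ‖z‖))) * t ^ (-p) - V t - δ := by
    intro z δ hz
    filter_upwards [hg, hae] with t ⟨g, hgC, hge, hgi⟩ ht
    have h1 := congrArg (fun w => ⟪w, x t - z⟫_ℝ) hge
    simp only [inner_add_left, real_inner_smul_left] at h1
    have h2 : V t + δ - 1 / 2 * v t - β / 2 * (t ^ (-p) * M ^ 2) ≤ ⟪g, x t - z⟫_ℝ := by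
      refine inner_ge_of_mem_convexHull hconv hdiff hgC fun i => ?_
      have e : W i t = f i (x t) + β / 2 * (t ^ (-p) * ⟪x t, x t⟫_ℝ) + 1 / 2 * v t := rfl
      have h3 : β / 2 * (t ^ (-p) * ⟪x t, x t⟫_ℝ) ≤ β / 2 * (t ^ (-p) * M ^ 2) :=
        mul_le_mul_of_nonneg_left (mul_le_mul_of_nonneg_left (hxx t ht) (htp0 t ht).le)
          (by linarith)
      linarith [hVle i t, hz i]
    have h4 : -(M * (M + ‖z‖)) ≤ ⟪x t, x t - z⟫_ℝ := by
      have h5 := neg_le_of_abs_le (abs_real_inner_le_norm (x t) (x t - z))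
      have h6 : ‖x t - z‖ ≤ M + ‖z‖ := (norm_sub_le _ _).trans (by linarith [hM t ht])
      have := mul_le_mul (hM t ht) h6 (norm_nonneg _) hM0
      linarith
    have h7 := mul_le_mul_of_nonneg_left h4 (mul_nonneg hβ.le (htp0 t ht).le)
    simp only [hv] at h2 ⊢
    linarith
  have hd : ∀ (z : H) t, a ≤ t →
      HasDerivAt (fun t => 1 / 2 * ⟪x t - z, x t - z⟫_ℝ) (⟪x' t, x t - z⟫_ℝ) t := by
    intro z t ht
    have h1 := (hx t ht).sub_const z
    refine ((h1.inner ℝ h1).const_mul (1 / 2)).congr_deriv ?_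
    rw [real_inner_comm (x' t)]; ring
  have Xz : ∀ z : H, ACD a (fun t => x t - z) x' := fun z =>
    ACD.of_hasDerivAt (fun t ht => (hx t ht).sub_const z) hx'c
  have H1 : ∀ z : H, ACD a (fun t => 1 / 2 * ⟪x t - z, x t - z⟫_ℝ)
      (fun t => ⟪x' t, x t - z⟫_ℝ) := fun z =>
    ACD.of_hasDerivAt (hd z) (hx'c.inner (hxc.sub continuousOn_const))
  have H2 : ∀ z : H, ACD a (fun t => ⟪x' t, x t - z⟫_ℝ)
      (fun t => ⟪x' t, x' t⟫_ℝ + ⟪x'' t, x t - z⟫_ℝ) := fun z => HX.inner (Xz z)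
  have h0 : ∀ (z : H) t, a ≤ t → 0 ≤ 1 / 2 * ⟪x t - z, x t - z⟫_ℝ := fun z t _ =>
    mul_nonneg (by norm_num) real_inner_self_nonneg
  have hBz : ∀ (z : H) t, a ≤ t → 1 / 2 * ⟪x t - z, x t - z⟫_ℝ ≤ 1 / 2 * (M + ‖z‖) ^ 2 := by
    intro z t ht
    rw [real_inner_self_eq_norm_sq]
    have h6 : ‖x t - z‖ ≤ M + ‖z‖ := (norm_sub_le _ _).trans (by linarith [hM t ht])
    have := pow_le_pow_left₀ (norm_nonneg _) h6 2
    linarith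
  have hC : ∀ z : H, 0 ≤ β / 2 * M ^ 2 + β * (M * (M + ‖z‖)) := fun z => by positivity
  -- weak limits lie in the level set of the limit energies
  have hfleW : ∀ i t, a ≤ t → f i (x t) ≤ W i t := fun i t ht => by
    linarith [hfW i t ht, hv0 t ht]
  have hU : ∀ (U : Ultrafilter ℝ) (z : H), (U : Filter ℝ) ≤ atTop →
      (∀ y : H, Tendsto (fun t => ⟪x t, y⟫_ℝ) U (𝓝 ⟪z, y⟫_ℝ)) → z ∈ {z | ∀ i, f i z ≤ w i} :=
    fun U z hUa hz i => le_of_weak_limit (hconv i) (hdiff i) hz ((hw i).mono_left hUa)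
      (((eventually_ge_atTop a).mono fun t ht => hfleW i t ht).filter_mono hUa)
  have hMe : ∀ᶠ t in atTop, ‖x t‖ ≤ M := (eventually_ge_atTop a).mono hM
  obtain ⟨z₀, hz₀⟩ := exists_weak_limit (U := Ultrafilter.of atTop)
    (hMe.filter_mono (Ultrafilter.of_le _))
  have hz₀S : ∀ i, f i z₀ ≤ w i := hU _ z₀ (Ultrafilter.of_le _) hz₀
  obtain ⟨J, hJ⟩ := integral_bounded ha hα hq0 hq hp hpq (hC z₀) hlarge (hd z₀) (H1 z₀) (H2 z₀)
    (h0 z₀) (hBz z₀) hvc hv0 HV hV0 hV1 (by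
      filter_upwards [key z₀ 0 (fun i => by linarith [hz₀S i])] with t ht
      linarith)
  have hlimz : ∀ (z : H) (δ : ℝ), 0 ≤ δ → (∀ i, f i z + δ ≤ w i) →
      δ = 0 ∧ ∃ L, Tendsto (fun t => 1 / 2 * ⟪x t - z, x t - z⟫_ℝ) atTop (𝓝 L) :=
    fun z δ hδ hz => tendsto_of_integral_bounded ha hα hq0 hq hp hpq (hC z) hδ (hd z) (H1 z)
      (H2 z) (h0 z) (hBz z) hvc hv0 hJ (by
        filter_upwards [key z δ hz, hae] with t h1 ht
        linarith [hV0 t ht])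
  obtain ⟨xinf, hxS, hxlim⟩ := opial hMe (S := {z | ∀ i, f i z ≤ w i})
    (fun z hz => (hlimz z 0 le_rfl fun i => by linarith [hz i]).2) hU
  -- the velocity vanishes asymptotically
  have hvlim : Tendsto v atTop (𝓝 0) := by
    refine tendsto_zero_of_integral_bounded (N := (G ^ 2 + B) + β * (M ^ 2 + B) + 1) ?_
      ((continuousOn_rpow_Ici (by linarith) q).mul hvc) (fun t ht => ?_) hv0 Hv ?_ hJ
    · have : 0 ≤ B := (hv0 a le_rfl).trans (hB a le_rfl)
      positivity
    · exact le_mul_of_one_le_left (hv0 t ht) (Real.one_le_rpow (by linarith) hq0.le)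
    · filter_upwards [hg, hae] with t ⟨g, hgC, hge, _⟩ ht
      have h1 := congrArg (fun w => ⟪w, x' t⟫_ℝ) hge
      simp only [inner_add_left, real_inner_smul_left] at h1
      have h2 := neg_le_of_abs_le (abs_inner_le_half g (x' t))
      have h3 := neg_le_of_abs_le (abs_inner_le_half (x t) (x' t))
      have hgG : ‖g‖ ≤ G := norm_le_of_mem_convexHull hgC (by
        rintro _ ⟨i, rfl⟩; exact hG i t ht)
      have h4 := pow_le_pow_left₀ (norm_nonneg g) hgG 2
      have h5 := pow_le_pow_left₀ (norm_nonneg _) (hM t ht) 2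
      have h6 := hB t ht
      simp only [hv] at h6
      have h7 : 0 ≤ α * t ^ (-q) * ⟪x' t, x' t⟫_ℝ :=
        mul_nonneg (mul_nonneg hα.le (Real.rpow_nonneg (hpos t ht).le _)) (hv0 t ht)
      have hB0 : 0 ≤ M ^ 2 + B := add_nonneg (sq_nonneg _) ((hv0 a le_rfl).trans (hB a le_rfl))
      have h8 : -((M ^ 2 + B) / 2) ≤ ⟪x t, x' t⟫_ℝ := by linarith
      have h9 : -(β * ((M ^ 2 + B) / 2)) ≤ β * t ^ (-p) * ⟪x t, x' t⟫_ℝ := by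
        have e1 := mul_le_mul_of_nonneg_left h8 (mul_nonneg hβ.le (htp0 t ht).le)
        have e2 := mul_le_mul_of_nonneg_left (htp1 t ht)
          (mul_nonneg hβ.le (div_nonneg hB0 zero_le_two))
        linarith
      rw [real_inner_comm (x'' t) (x' t)]
      linarith
  refine ⟨w, fun i => ?_, xinf, hxlim, ?_, hxS⟩
  · have h1 : Tendsto (fun t => t ^ (-p) * ⟪x t, x t⟫_ℝ) atTop (𝓝 0) := by
      have h2 : Tendsto (fun t : ℝ => t ^ (-p) * M ^ 2) atTop (𝓝 (0 * M ^ 2)) :=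
        (tendsto_rpow_neg_atTop (by linarith)).mul_const _
      rw [zero_mul] at h2
      refine squeeze_zero' ?_ ?_ h2
      · filter_upwards [eventually_ge_atTop a] with t ht
        exact mul_nonneg (htp0 t ht).le real_inner_self_nonneg
      · filter_upwards [eventually_ge_atTop a] with t ht
        exact mul_le_mul_of_nonneg_left (hxx t ht) (htp0 t ht).le
    have h3 := ((hw i).sub (h1.const_mul (β / 2))).sub (hvlim.const_mul (1 / 2))
    rw [mul_zero, mul_zero, sub_zero, sub_zero] at h3
    refine h3.congr fun t => ?_
    simp only [hW, hv, energy]; ring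
  · rintro ⟨y, hy⟩
    -- a uniform decrease `δ` would contradict the damped inequality
    obtain ⟨i, hi⟩ := Finite.exists_min fun i => w i - f i y
    have hδ : 0 < w i - f i y := by linarith [hy i, hxS i]
    exact hδ.ne' (hlimz y _ hδ.le fun j => by linarith [hi j]).1

end Trajectory

/-! ### Convergence of trajectories -/

/-- Assume either (`p ∈ (0,2)`, `q ∈ (0,1)` and `q + 1 < p`) or (`p = 2`,
`q ∈ (0,1)` and `β ≥ q(1−q)`). For a bounded trajectory solution `x` of (MTRIGS), under (A3)
and nonemptiness of `S(F(x(t)))`, the limits `f_i^∞ = lim_{t→∞} f_i(x(t))` exist, and `x(t)`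
converges weakly to some weakly Pareto optimal `x∞` with `f_i(x∞) ≤ f_i^∞` for all `i`. -/
theorem stmt_19
    {H : Type*} [NormedAddCommGroup H] [InnerProductSpace ℝ H] [CompleteSpace H]
    {m : ℕ} (hm : 0 < m) (f : Fin m → H → ℝ)
    (hconv : ∀ i, ConvexOn ℝ Set.univ (f i))
    (hdiff : ∀ i, Differentiable ℝ (f i))
    (hlip : ∀ i, ∃ L : ℝ≥0, LipschitzWith L (gradient (f i)))
    (t₀ α β q p : ℝ) (ht₀ : 0 < t₀) (hα : 0 < α) (hβ : 0 < β)
    (hq : q ∈ Set.Ioo (0:ℝ) 1) (hp : p ∈ Set.Ioc (0:ℝ) 2)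
    (hcase : (p < 2 ∧ q + 1 < p) ∨ (p = 2 ∧ q * (1 - q) ≤ β))
    (x x' x'' : ℝ → H)
    (hx : ∀ t ∈ Set.Ici t₀, HasDerivAt x (x' t) t)
    (hx'c : ContinuousOn x' (Set.Ici t₀))
    (hx''m : StronglyMeasurable x'')
    (hx'int : ∀ t ∈ Set.Ici t₀, x' t = x' t₀ + ∫ s in t₀..t, x'' s)
    (hx'' : ∀ᵐ t ∂(volume.restrict (Set.Ici t₀)), HasDerivAt x' (x'' t) t)
    (hMTRIGS : ∀ᵐ t ∂(volume.restrict (Set.Ici t₀)),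
      ((-(α / t ^ q)) • x' t ∈
        (fun g => g + (β / t ^ p) • x t + x'' t) ''
          (convexHull ℝ (Set.range fun i => gradient (f i) (x t)))) ∧
      (∀ w ∈ (fun g => g + (β / t ^ p) • x t + x'' t) ''
          (convexHull ℝ (Set.range fun i => gradient (f i) (x t))),
        ‖(α / t ^ q) • x' t‖ ≤ ‖w‖))
    (hbdd : ∃ M : ℝ, ∀ t ∈ Set.Ici t₀, ‖x t‖ ≤ M)
    (hS : ∀ t, t₀ ≤ t →
      ∃ u : H, ∀ y : H, (⨆ i, (f i u - f i (x t))) ≤ ⨆ i, (f i y - f i (x t)))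
    (hA3a : ∀ w : H,
      (∀ i, f i w ≤ f i (x t₀)
        + (β / (2 * t₀ ^ p) * ‖x t₀‖ ^ 2 + (1/2) * ‖x' t₀‖ ^ 2)) →
      ∃ u : H, (∀ i, f i u ≤ f i w) ∧ ¬ ∃ y : H, ∀ i, f i y < f i u)
    (hA3b : ∃ R : ℝ, 0 ≤ R ∧ ∀ y : H,
      ((∀ i, f i y ≤ f i (x t₀)
          + (β / (2 * t₀ ^ p) * ‖x t₀‖ ^ 2 + (1/2) * ‖x' t₀‖ ^ 2)) ∧
        ¬ ∃ u : H, ∀ i, f i u < f i y) →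
      ∀ ε : ℝ, 0 < ε → ∃ z' : H, (∀ i, f i z' = f i y) ∧ ‖z'‖ ≤ R + ε) :
    ∃ l : Fin m → ℝ, (∀ i, Tendsto (fun t => f i (x t)) atTop (𝓝 (l i))) ∧
      ∃ xinf : H,
        (∀ y : H, Tendsto (fun t => ⟪x t, y⟫_ℝ) atTop (𝓝 ⟪xinf, y⟫_ℝ)) ∧
        (¬ ∃ y : H, ∀ i, f i y < f i xinf) ∧
        (∀ i, f i xinf ≤ l i) := by
  obtain ⟨hq0, hq1⟩ := hq
  have hpq : q + 1 < p := by rcases hcase with h | h <;> linarith [h.1, h.2]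
  obtain ⟨M, hM⟩ := hbdd
  choose L hL using hlip
  have hM0 : 0 ≤ M := (norm_nonneg _).trans (hM t₀ Set.self_mem_Ici)
  obtain ⟨G, hG⟩ : ∃ G, ∀ i t, t₀ ≤ t → ‖gradient (f i) (x t)‖ ≤ G := by
    refine ⟨∑ i, (‖gradient (f i) 0‖ + L i * M), fun i t ht => ?_⟩
    refine le_trans ?_ (Finset.single_le_sum (f := fun i => ‖gradient (f i) 0‖ + L i * M)
      (fun i _ => by positivity) (Finset.mem_univ i))
    have h1 := (hL i).norm_sub_le (x t) 0
    rw [sub_zero] at h1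
    have h2 := norm_le_norm_add_norm_sub' (gradient (f i) (x t)) (gradient (f i) 0)
    have h3 := mul_le_mul_of_nonneg_left (hM t ht) (L i).coe_nonneg
    linarith
  have hvar : ∀ᵐ t ∂(volume.restrict (Set.Ici t₀)),
      ∃ g ∈ convexHull ℝ (Set.range fun i => gradient (f i) (x t)),
        g + ((β / t ^ p) • x t + x'' t) = (-(α / t ^ q)) • x' t ∧
        ∀ g' ∈ convexHull ℝ (Set.range fun i => gradient (f i) (x t)),
          ⟪g', x' t⟫_ℝ ≤ ⟪g, x' t⟫_ℝ := by
    filter_upwards [hMTRIGS, ae_restrict_mem measurableSet_Ici] with t ⟨h1, h2⟩ ht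
    have ht0 : 0 < t := ht₀.trans_le ht
    simp only [add_assoc] at h1 h2
    exact exists_of_minimal_norm (convex_convexHull ℝ _)
      (div_pos hα (Real.rpow_pos_of_pos ht0 q)) h1 h2
  have hxc : ContinuousOn x (Set.Ici t₀) := fun t ht =>
    (hx t ht).continuousAt.continuousWithinAt
  -- by the inclusion, the acceleration is bounded on compact intervals
  have HX : ACD t₀ x' x'' := by
    refine acd_of_integral hx''m hx'int hx'' fun b hb => ?_
    have hdiv : ∀ c r : ℝ, ContinuousOn (fun t : ℝ => c / t ^ r) (Set.Ici t₀) := fun c r =>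
      continuousOn_const.div (continuousOn_rpow_Ici ht₀ r) fun t ht =>
        (Real.rpow_pos_of_pos (ht₀.trans_le ht) r).ne'
    have hc : ContinuousOn (fun t => (α / t ^ q) • x' t + (β / t ^ p) • x t) (Set.Icc t₀ b) :=
      (((hdiv α q).smul hx'c).add ((hdiv β p).smul hxc)).mono Set.Icc_subset_Ici_self
    obtain ⟨K, hK⟩ := isCompact_Icc.exists_bound_of_continuousOn hc
    refine ⟨K + G, ?_⟩
    filter_upwards [ae_restrict_of_ae_restrict_of_subset Set.Icc_subset_Ici_self hvar,
      ae_restrict_mem measurableSet_Icc] with t ⟨g, hgC, hge, _⟩ ht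
    have hgG : ‖g‖ ≤ G := norm_le_of_mem_convexHull hgC (by
      rintro _ ⟨i, rfl⟩; exact hG i t ht.1)
    have e : x'' t = -((α / t ^ q) • x' t + (β / t ^ p) • x t) - g := by
      rw [neg_smul] at hge
      rw [neg_add, ← hge]; abel
    rw [e]
    refine (norm_sub_le _ _).trans ?_
    rw [norm_neg]
    exact add_le_add (hK t ht) hgG
  -- the asymptotic estimates hold from a time `a` on, with `a ^ (1 - q) ≥ 6 * q / α`
  obtain ⟨T, hT⟩ := eventually_atTop.1
    ((tendsto_rpow_atTop (sub_pos.2 hq1)).eventually_ge_atTop (6 * q / α))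
  set a := max (max t₀ 1) T
  have hta : t₀ ≤ a := (le_max_left _ _).trans (le_max_left _ _)
  have h1a : 1 ≤ a := (le_max_right t₀ 1).trans (le_max_left _ _)
  refine trajectory_aux (a := a) (α := α) (β := β) (q := q) (p := p) (M := M) (G := G)
    hm hconv hdiff (fun i => (hL i).continuous) h1a hα hβ hq0 hq1 hp.2 hpq ?_
    (fun t ht => hx t (hta.trans ht)) (hx'c.mono (Set.Ici_subset_Ici.2 hta)) (HX.mono hta)
    (fun t ht => hM t (hta.trans ht)) (fun i t ht => hG i t (hta.trans ht)) ?_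
  · intro t ht
    have ht0 : 0 < t := by linarith
    have h1 := hT t ((le_max_right _ _).trans ht)
    rw [div_le_iff₀ hα] at h1
    have e : t ^ q = t ^ (1 - q) * t ^ (2 * q - 1) := by
      rw [← Real.rpow_add ht0]; ring_nf
    have h2 := mul_le_mul_of_nonneg_right h1 (Real.rpow_nonneg ht0.le (2 * q - 1))
    rw [e]
    linarith
  · filter_upwards [ae_restrict_of_ae_restrict_of_subset (Set.Ici_subset_Ici.2 hta) hvar,
      ae_restrict_mem measurableSet_Ici] with t ⟨g, hgC, hge, hgi⟩ ht
    have ht0 : 0 ≤ t := by linarith [Set.mem_Ici.1 ht]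
    refine ⟨g, hgC, ?_, fun i => hgi _ (subset_convexHull ℝ _ ⟨i, rfl⟩)⟩
    rw [Real.rpow_neg ht0, Real.rpow_neg ht0, ← div_eq_mul_inv, ← div_eq_mul_inv]
    exact hge
end
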